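/- Widom's asymptotics for the Toeplitz determinant of the characteristic function of an arc: Fix 0 < μ < π and let φ_μ be the characteristic function of the arc (μ, 2π − μ), i.e. φ_μ(e^{iθ}) = 1 for μ < θ < 2π − μ and 0 otherwise. Then D_n(φ_μ) > 0 for all n ≥ 1, and as n → ∞, log D_n(φ_μ) = n²·log cos(μ/2) − (1/4)·log(n·sin(μ/2)) + c_0 + o(1), where c_0 = (1/12)·log 2 + 3·ζ′(−1) and ζ′(−1) is the derivative of the Riemann zeta function at −1. Equivalently, log D_n(φ_μ) − n²·log cos(μ/2) + (1/4)·log(n·sin(μ/2)) → (1/12)·log 2 + 3·ζ′(−1). -/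

import Mathlib

/-!
Put `c = cos (μ/2)`, `σ = sin (μ/2)` and `r = (1 - σ)/(1 + σ)`, so that `c² (1 + r)² = 4 r`. The
Fourier coefficients of the arc are cosine moments, and the substitution `θ = 2 arccos (c s)` turns
them into integrals over `s ∈ [0, 1]` against `(qf r s)^(-1/2)`, where
`qf r s = (1 + r)² - 4 r s² = |1 - r e^{iα}|²` with `cos α = 2 s² - 1` (`fc_arc`, `tt_eq`). A
symmetric Toeplitz determinant splits into an even and an odd block (`block_det`), and here each block
is a Gram determinant in the variable `s²` for one of the weights `1`, `s²` multiplied by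
`(qf r)^{±1/2}` (`TM_even`, `TM_odd`). This exhibits `(2c)^{n²}` exactly. Without the factors
`(qf r)^{±1/2}` the two Gram determinants are products of squared norms of the even and odd Legendre
polynomials, so two limits remain.

*Effect of the factors.* Multiplying a weight by `qf r` or by `1 / qf r` changes the orthogonal
polynomials by a Christoffel or a Geronimus transform, and changes the Hankel determinant by the value
of `πₙ`, respectively of a function of the second kind, at the zero of `qf r`. Both transforms preserve
the property `Good` (strong asymptotics of `πₙ` off the support), so for any finite product of factors
`(qf rᵢ)^{±1}` the relative Hankel determinant converges, to `exp` of a quadratic expression in the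
exponents (`list_good`). The half-integer power is reached by convexity: the free energy is convex in
the logarithm of the weight (`hn_convex`), and the alternating products
`∏_{j ≤ 2M} (qf (r j / 2M))^{(-1)^j}` approximate `(qf r)^{1/2}` well enough for the quadratic
expression to converge as `M → ∞` (`Bq_lim`). Convexity bounds the half power by these products on
both sides (`half_lim`). For the Legendre weights the exterior asymptotics are explicit (`good0`,
`good1`), and the limits add up to `-(1/4) log σ` (`TM_lim`).

*Legendre part.* The norms are quotients of factorials, so the logarithm of the Legendre determinant is
`4 log G(N + 1) - log G(2N + 1)` up to elementary terms, `G` being the Barnes function. Its asymptotic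
expansion comes from the Stirling remainder (`N_se_lim`) and from `∑ k log k`, that is, from the
derivative at `-1` of the Euler–Maclaurin approximations of `(s - 1) ζ(s)`. These converge uniformly on
a domain containing `-1` and `2`, so by the identity theorem their derivatives converge to the
derivative of `(s - 1) ζ(s)` (`EM_deriv_tendsto`). This produces the constant
`(1/12) log 2 + 3 ζ'(-1)` and the term `-(1/4) log n` (`XL_lim`).
-/

open MeasureTheory Filter Topology

/-- The `ℓ`-th Fourier coefficient of a function on the unit circle, parametrized by
`θ ∈ [0, 2π)`. -/
noncomputable def fourierCoeff2 (φ : ℝ → ℂ) (ℓ : ℤ) : ℂ :=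
  ((2 * Real.pi : ℝ) : ℂ)⁻¹ *
    ∫ θ in (0 : ℝ)..(2 * Real.pi), Complex.exp (-Complex.I * (ℓ : ℂ) * (θ : ℂ)) * φ θ

/-- The characteristic function of the arc `(μ, 2π − μ)` of the unit circle. -/
noncomputable def arcIndicator (μ : ℝ) (θ : ℝ) : ℂ :=
  if μ < θ ∧ θ < 2 * Real.pi - μ then 1 else 0

/-- The Toeplitz determinant of the arc indicator. -/
noncomputable def arcToeplitzDet (μ : ℝ) (n : ℕ) : ℂ :=
  (Matrix.of fun j k : Fin n => fourierCoeff2 (arcIndicator μ) ((j : ℤ) - (k : ℤ))).det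

namespace WidomArc

open Polynomial

/-! ### Weights and orthogonal polynomials -/

/-- The bilinear form `∫₀¹ p(s²) q(s²) W(s) ds` on polynomials attached to a weight `W`. -/
noncomputable def ip (W : unitInterval → ℝ) (p q : ℝ[X]) : ℝ :=
  ∫ s : unitInterval, p.eval ((s : ℝ) ^ 2) * q.eval ((s : ℝ) ^ 2) * W s

/-- Admissible weights: continuous, nonnegative, and with infinite support in the sense that the
form `ip W` is positive definite on polynomials. -/
structure Wt (W : unitInterval → ℝ) : Prop where
  cont : Continuous W
  nonneg : ∀ s, 0 ≤ W s
  pos : ∀ p : ℝ[X], p ≠ 0 → 0 < ip W p p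

/-- `π` is the sequence of monic orthogonal polynomials (in the variable `s²`) of the weight `W`. -/
structure OPS (W : unitInterval → ℝ) (π : ℕ → ℝ[X]) : Prop where
  monic : ∀ n, (π n).Monic
  deg : ∀ n, (π n).natDegree = n
  orth : ∀ n, ∀ p : ℝ[X], p.degree < (n : ℕ) → ip W (π n) p = 0

/-- The factor `|1 - r e^{iθ}|²` written in `s`, where `cos θ = 2 s² - 1`. -/
def qf (r : ℝ) (s : unitInterval) : ℝ := (1 + r) ^ 2 - 4 * r * (s : ℝ) ^ 2

/-- The zero of `qf r` as a function of `s²`. -/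
noncomputable def zf (r : ℝ) : ℝ := (1 + r) ^ 2 / (4 * r)

lemma intg {f : unitInterval → ℝ} (hf : Continuous f) : Integrable f :=
  hf.integrable_of_hasCompactSupport (HasCompactSupport.of_compactSpace f)

lemma cont_eval (p : ℝ[X]) : Continuous fun s : unitInterval => p.eval ((s : ℝ) ^ 2) :=
  p.continuous.comp (by fun_prop)

lemma qf_cont (r : ℝ) : Continuous (qf r) := by unfold qf; fun_prop

lemma qf_ge {r : ℝ} (hr : 0 < r) (s : unitInterval) : (1 - r) ^ 2 ≤ qf r s := by
  have h1 : (s : ℝ) ≤ 1 := s.2.2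
  have h0 : 0 ≤ (s : ℝ) := s.2.1
  have : (s : ℝ) ^ 2 ≤ 1 := pow_le_one₀ h0 h1
  unfold qf
  nlinarith [mul_nonneg hr.le (sub_nonneg.2 this)]

lemma qf_pos {r : ℝ} (hr : 0 < r) (hr1 : r < 1) (s : unitInterval) : 0 < qf r s :=
  lt_of_lt_of_le (by have : 0 < 1 - r := by linarith
                     positivity) (qf_ge hr s)

lemma qf_eq {r : ℝ} (hr : 0 < r) (s : unitInterval) : qf r s = 4 * r * (zf r - (s : ℝ) ^ 2) := by
  unfold qf zf; field_simp

lemma ip_comm (W) (p q : ℝ[X]) : ip W p q = ip W q p := by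
  unfold ip; congr 1; ext s; ring

lemma ip_sub_left {W} (hW : Continuous W) (p q t : ℝ[X]) :
    ip W (p - q) t = ip W p t - ip W q t := by
  unfold ip
  rw [← integral_sub]
  · congr 1; ext s; simp only [eval_sub]; ring
  · exact intg (((cont_eval p).mul (cont_eval t)).mul hW)
  · exact intg (((cont_eval q).mul (cont_eval t)).mul hW)

lemma ip_sub_right {W} (hW : Continuous W) (p q t : ℝ[X]) :
    ip W t (p - q) = ip W t p - ip W t q := by
  rw [ip_comm, ip_sub_left hW, ip_comm W p, ip_comm W q]

lemma ip_C_mul_left (W) (c : ℝ) (p t : ℝ[X]) : ip W (C c * p) t = c * ip W p t := by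
  unfold ip
  rw [← integral_const_mul]
  congr 1; ext s; simp only [eval_mul, eval_C]; ring

lemma ip_C_mul_right (W) (c : ℝ) (p t : ℝ[X]) : ip W t (C c * p) = c * ip W t p := by
  rw [ip_comm, ip_C_mul_left, ip_comm]

/-- Squared norm of the `n`-th monic orthogonal polynomial. -/
noncomputable def nu (W : unitInterval → ℝ) (π : ℕ → ℝ[X]) (n : ℕ) : ℝ := ip W (π n) (π n)

lemma Wt.nu_pos {W π} (hW : Wt W) (h : OPS W π) (n : ℕ) : 0 < nu W π n :=
  hW.pos _ (h.monic n).ne_zero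

lemma OPS.degree {W π} (h : OPS W π) (n : ℕ) : (π n).degree = n := by
  rw [degree_eq_natDegree (h.monic n).ne_zero, h.deg]

lemma OPS.zero {W π} (h : OPS W π) : π 0 = 1 :=
  (h.monic 0).natDegree_eq_zero.1 (h.deg 0)

/-- Pairing with any monic polynomial of the same degree gives the squared norm. -/
lemma OPS.ip_monic {W π} (h : OPS W π) (hW : Continuous W) {n : ℕ} {p : ℝ[X]} (hp : p.Monic)
    (hd : p.natDegree = n) : ip W (π n) p = nu W π n := by
  have hdeg : p.degree = (π n).degree := by
    rw [h.degree, degree_eq_natDegree hp.ne_zero, hd]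
  have h1 : (p - π n).degree < (n : ℕ) := by
    have := degree_sub_lt_left hdeg hp.ne_zero (by rw [hp.leadingCoeff, (h.monic n).leadingCoeff])
    rwa [hdeg, h.degree] at this
  have := h.orth n _ h1
  rw [ip_sub_right hW] at this
  unfold nu; linarith

/-! ### Christoffel transform -/

/-- Ratio of consecutive orthogonal polynomials at the point `zf r`. -/
noncomputable def ratR (π : ℕ → ℝ[X]) (r : ℝ) (n : ℕ) : ℝ :=
  (π (n + 1)).eval (zf r) / (π n).eval (zf r)

/-- Orthogonal polynomials of the weight `W * qf r`. -/
noncomputable def chr (π : ℕ → ℝ[X]) (r : ℝ) (n : ℕ) : ℝ[X] :=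
  (π (n + 1) - C (ratR π r n) * π n) /ₘ (X - C (zf r))

lemma Wt.mul {W g} (hW : Wt W) (hg : Continuous g) (hpos : ∀ s, 0 < g s) :
    Wt (fun s => W s * g s) where
  cont := hW.cont.mul hg
  nonneg s := mul_nonneg (hW.nonneg s) (hpos s).le
  pos p hp := by
    obtain ⟨s0, -, hs0⟩ := isCompact_univ.exists_isMinOn (Set.univ_nonempty) hg.continuousOn
    have h1 : g s0 * ip W p p ≤ ip (fun s => W s * g s) p p := by
      unfold ip
      rw [← integral_const_mul]
      refine integral_mono ?_ ?_ ?_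
      · exact intg (continuous_const.mul (((cont_eval p).mul (cont_eval p)).mul hW.cont))
      · exact intg (((cont_eval p).mul (cont_eval p)).mul (hW.cont.mul hg))
      · intro s
        have hm : g s0 ≤ g s := hs0 (Set.mem_univ s)
        have h2 : 0 ≤ eval ((s : ℝ) ^ 2) p * eval ((s : ℝ) ^ 2) p * W s :=
          mul_nonneg (mul_self_nonneg _) (hW.nonneg s)
        have := mul_le_mul_of_nonneg_right hm h2
        simp only
        linarith
    exact lt_of_lt_of_le (mul_pos (hpos s0) (hW.pos p hp)) h1

lemma chr_spec {π : ℕ → ℝ[X]} {r : ℝ} {n : ℕ} (hn : (π n).eval (zf r) ≠ 0) :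
    (X - C (zf r)) * chr π r n = π (n + 1) - C (ratR π r n) * π n := by
  unfold chr
  rw [mul_divByMonic_eq_iff_isRoot]
  simp only [IsRoot, eval_sub, eval_mul, eval_C, ratR]
  field_simp; ring

lemma chr_num_monic {W π} (h : OPS W π) (r : ℝ) (n : ℕ) :
    (π (n + 1) - C (ratR π r n) * π n).Monic ∧
      (π (n + 1) - C (ratR π r n) * π n).natDegree = n + 1 := by
  have hlt : (C (ratR π r n) * π n).degree < (π (n + 1)).degree := by
    rw [← smul_eq_C_mul]
    refine lt_of_le_of_lt (degree_smul_le _ _) ?_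
    rw [h.degree, h.degree]; exact_mod_cast Nat.lt_succ_self n
  refine ⟨(h.monic _).sub_of_left hlt, ?_⟩
  rw [natDegree_sub_eq_left_of_natDegree_lt, h.deg]
  rw [h.deg]
  exact lt_of_le_of_lt (natDegree_C_mul_le _ _) (by rw [h.deg]; omega)

lemma chr_monic {W π} (h : OPS W π) {r : ℝ} {n : ℕ} (hn : (π n).eval (zf r) ≠ 0) :
    (chr π r n).Monic ∧ (chr π r n).natDegree = n := by
  have hs := chr_spec hn
  have hm := chr_num_monic h r n
  rw [← hs] at hm
  have h1 := Monic.of_mul_monic_left (monic_X_sub_C (zf r)) hm.1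
  refine ⟨h1, ?_⟩
  have := (monic_X_sub_C (zf r)).natDegree_mul h1
  rw [hm.2, natDegree_X_sub_C] at this
  omega

lemma chr_ip {W : unitInterval → ℝ} {π : ℕ → ℝ[X]} (hW : Continuous W) {r : ℝ} (hr : 0 < r) {n : ℕ}
    (hn : (π n).eval (zf r) ≠ 0) (p : ℝ[X]) :
    ip (fun s => W s * qf r s) (chr π r n) p
      = -(4 * r) * (ip W (π (n + 1)) p - ratR π r n * ip W (π n) p) := by
  rw [← ip_C_mul_left, ← ip_sub_left hW, ← chr_spec hn]
  unfold ip
  rw [← integral_const_mul]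
  congr 1; ext s
  simp only [qf_eq hr, eval_mul, eval_sub, eval_X, eval_C]
  ring

lemma chr_orth {W π} (hW : Continuous W) (h : OPS W π) {r : ℝ} (hr : 0 < r) {n : ℕ}
    (hn : (π n).eval (zf r) ≠ 0) (p : ℝ[X]) (hp : p.degree < (n : ℕ)) :
    ip (fun s => W s * qf r s) (chr π r n) p = 0 := by
  rw [chr_ip hW hr hn, h.orth n p hp, h.orth (n + 1) p (hp.trans (by exact_mod_cast Nat.lt_succ_self n))]
  ring

lemma chr_nu {W π} (hW : Continuous W) (h : OPS W π) {r : ℝ} (hr : 0 < r) {n : ℕ}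
    (hn : (π n).eval (zf r) ≠ 0) :
    nu (fun s => W s * qf r s) (chr π r) n = 4 * r * ratR π r n * nu W π n := by
  have hm := chr_monic h hn
  unfold nu
  rw [chr_ip hW hr hn, h.ip_monic hW hm.1 hm.2, h.orth (n + 1)]
  · unfold nu; ring
  · rw [degree_eq_natDegree hm.1.ne_zero, hm.2]; exact_mod_cast Nat.lt_succ_self n

/-- Orthogonal polynomials are positive at every point to the right of the support. -/
lemma OPS.eval_pos {W π} (hW : Wt W) (h : OPS W π) {r : ℝ} (hr : 0 < r) (hr1 : r < 1) (n : ℕ) :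
    0 < (π n).eval (zf r) := by
  induction n with
  | zero => simp [h.zero]
  | succ n ih =>
    have h1 := chr_nu hW.cont h hr ih.ne'
    have h2 : 0 < nu (fun s => W s * qf r s) (chr π r) n :=
      (hW.mul (qf_cont r) (qf_pos hr hr1)).pos _ (chr_monic h ih.ne').1.ne_zero
    rw [h1] at h2
    have h3 := pos_of_mul_pos_left h2 (hW.nu_pos h n).le
    have h4 := pos_of_mul_pos_right h3 (by positivity)
    unfold ratR at h4
    by_contra hcon
    exact absurd h4 (not_lt.2 (div_nonpos_of_nonpos_of_nonneg (not_lt.1 hcon) ih.le))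

/-- Christoffel's formula. -/
theorem chr_OPS {W π} (hW : Wt W) (h : OPS W π) {r : ℝ} (hr : 0 < r) (hr1 : r < 1) :
    OPS (fun s => W s * qf r s) (chr π r) where
  monic n := (chr_monic h (h.eval_pos hW hr hr1 n).ne').1
  deg n := (chr_monic h (h.eval_pos hW hr hr1 n).ne').2
  orth n := chr_orth hW.cont h hr (h.eval_pos hW hr hr1 n).ne'

/-- The Hankel determinants of `W * qf r` and `W` differ by a value of `πₙ` at the zero of `qf r`. -/
lemma chr_prod {W π} (hW : Wt W) (h : OPS W π) {r : ℝ} (hr : 0 < r) (hr1 : r < 1) (n : ℕ) :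
    ∏ k ∈ Finset.range n, nu (fun s => W s * qf r s) (chr π r) k
      = (4 * r) ^ n * (π n).eval (zf r) * ∏ k ∈ Finset.range n, nu W π k := by
  induction n with
  | zero => simp [h.zero]
  | succ n ih =>
    have hp := (h.eval_pos hW hr hr1 n).ne'
    rw [Finset.prod_range_succ, ih, chr_nu hW.cont h hr hp, Finset.prod_range_succ, ratR]
    field_simp
    ring

/-! ### Geronimus transform -/

/-- Function of the second kind `∫ πₙ W / qf r`. -/
noncomputable def hf (W : unitInterval → ℝ) (π : ℕ → ℝ[X]) (r : ℝ) (n : ℕ) : ℝ :=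
  ip (fun s => W s * (qf r s)⁻¹) (π n) 1

/-- Orthogonal polynomials of the weight `W / qf r`. -/
noncomputable def ger (W : unitInterval → ℝ) (π : ℕ → ℝ[X]) (r : ℝ) : ℕ → ℝ[X]
  | 0 => 1
  | n + 1 => π (n + 1) - C (hf W π r (n + 1) / hf W π r n) * π n

lemma qf_inv_cont {r : ℝ} (hr : 0 < r) (hr1 : r < 1) : Continuous fun s => (qf r s)⁻¹ :=
  (qf_cont r).inv₀ fun s => (qf_pos hr hr1 s).ne'

lemma ger_monic {W π} (h : OPS W π) (r : ℝ) (n : ℕ) :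
    (ger W π r n).Monic ∧ (ger W π r n).natDegree = n := by
  cases n with
  | zero => exact ⟨monic_one, natDegree_one⟩
  | succ n =>
    have hlt : (C (hf W π r (n + 1) / hf W π r n) * π n).degree < (π (n + 1)).degree := by
      rw [← smul_eq_C_mul]
      refine lt_of_le_of_lt (degree_smul_le _ _) ?_
      rw [h.degree, h.degree]; exact_mod_cast Nat.lt_succ_self n
    refine ⟨(h.monic _).sub_of_left hlt, ?_⟩
    unfold ger
    rw [natDegree_sub_eq_left_of_natDegree_lt, h.deg]
    rw [h.deg]
    exact lt_of_le_of_lt (natDegree_C_mul_le _ _) (by rw [h.deg]; omega)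

/-- Splitting off the value at the pole: `p = (X - z) t + p(z)`. -/
lemma ip_inv_split {W} (hW : Continuous W) {r : ℝ} (hr : 0 < r) (hr1 : r < 1)
    (f p : ℝ[X]) :
    ip (fun s => W s * (qf r s)⁻¹) f p
      = -(4 * r)⁻¹ * ip W f (p /ₘ (X - C (zf r)))
        + p.eval (zf r) * ip (fun s => W s * (qf r s)⁻¹) f 1 := by
  have hp : p = (X - C (zf r)) * (p /ₘ (X - C (zf r))) + C (p.eval (zf r)) := by
    conv_lhs => rw [← modByMonic_add_div p (X - C (zf r)), modByMonic_X_sub_C_eq_C_eval]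
    ring
  unfold ip
  rw [← integral_const_mul, ← integral_const_mul, ← integral_add]
  · congr 1; ext s
    conv_lhs => rw [hp]
    have hq := (qf_pos hr hr1 s).ne'
    have hq2 := qf_eq hr s
    simp only [eval_mul, eval_sub, eval_X, eval_C, eval_add, eval_one]
    field_simp
    rw [hq2]
    ring
  · exact intg (continuous_const.mul (((cont_eval _).mul (cont_eval _)).mul hW))
  · exact intg (continuous_const.mul (((cont_eval _).mul (cont_eval _)).mul
      (hW.mul (qf_inv_cont hr hr1))))

lemma ger_hf_zero {W π} (hW : Continuous W) {r : ℝ} (hr : 0 < r) (hr1 : r < 1) {n : ℕ}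
    (hn : hf W π r n ≠ 0) :
    ip (fun s => W s * (qf r s)⁻¹) (ger W π r (n + 1)) 1 = 0 := by
  have hc : Continuous fun s => W s * (qf r s)⁻¹ := hW.mul (qf_inv_cont hr hr1)
  change ip _ (π (n + 1) - C (hf W π r (n + 1) / hf W π r n) * π n) 1 = 0
  rw [ip_sub_left hc, ip_C_mul_left]
  change hf W π r (n + 1) - hf W π r (n + 1) / hf W π r n * hf W π r n = 0
  field_simp; ring

lemma ger_ip_succ {W π} (hW : Continuous W) {r : ℝ} (hr : 0 < r) (hr1 : r < 1) {n : ℕ}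
    (hn : hf W π r n ≠ 0) (p : ℝ[X]) :
    ip (fun s => W s * (qf r s)⁻¹) (ger W π r (n + 1)) p
      = -(4 * r)⁻¹ * (ip W (π (n + 1)) (p /ₘ (X - C (zf r)))
        - hf W π r (n + 1) / hf W π r n * ip W (π n) (p /ₘ (X - C (zf r)))) := by
  rw [ip_inv_split hW hr hr1, ger_hf_zero hW hr hr1 hn]
  have : ger W π r (n + 1) = π (n + 1) - C (hf W π r (n + 1) / hf W π r n) * π n := rfl
  rw [this, ip_sub_left hW, ip_C_mul_left]; ring

lemma degree_div_lt {p : ℝ[X]} {n : ℕ} (z : ℝ) (hp : p.degree < ((n + 1 : ℕ) : WithBot ℕ)) :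
    (p /ₘ (X - C z)).degree < (n : ℕ) := by
  by_cases h0 : p /ₘ (X - C z) = 0
  · rw [h0, degree_zero]; exact WithBot.bot_lt_coe n
  · have hp0 : p ≠ 0 := by rintro rfl; simp at h0
    rw [degree_eq_natDegree h0, natDegree_divByMonic _ (monic_X_sub_C z), natDegree_X_sub_C]
    rw [degree_eq_natDegree hp0] at hp
    have h1 : p.natDegree < n + 1 := by exact_mod_cast hp
    have h2 : p.natDegree ≠ 0 := by
      intro h2
      apply h0
      rw [divByMonic_eq_zero_iff (monic_X_sub_C z), degree_X_sub_C, degree_eq_natDegree hp0, h2]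
      norm_num
    exact_mod_cast (by omega : p.natDegree - 1 < n)

lemma div_monic {p : ℝ[X]} {n : ℕ} (z : ℝ) (hp : p.Monic) (hd : p.natDegree = n + 1) :
    (p /ₘ (X - C z)).Monic ∧ (p /ₘ (X - C z)).natDegree = n := by
  refine ⟨?_, by rw [natDegree_divByMonic _ (monic_X_sub_C z), natDegree_X_sub_C, hd]; simp⟩
  have : (X - C z).degree ≤ p.degree := by
    rw [degree_X_sub_C, degree_eq_natDegree hp.ne_zero, hd]
    exact_mod_cast Nat.succ_le_succ (Nat.zero_le n)
  rw [Monic, leadingCoeff_divByMonic_X_sub_C, hp.leadingCoeff]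
  rw [degree_eq_natDegree hp.ne_zero, hd]
  exact_mod_cast Nat.succ_ne_zero n

lemma ger_orth_succ {W π} (hW : Continuous W) (h : OPS W π) {r : ℝ} (hr : 0 < r) (hr1 : r < 1)
    {n : ℕ} (hn : hf W π r n ≠ 0) (p : ℝ[X]) (hp : p.degree < ((n + 1 : ℕ) : WithBot ℕ)) :
    ip (fun s => W s * (qf r s)⁻¹) (ger W π r (n + 1)) p = 0 := by
  have h1 := degree_div_lt (zf r) hp
  rw [ger_ip_succ hW hr hr1 hn, h.orth n _ h1,
    h.orth (n + 1) _ (h1.trans (by exact_mod_cast Nat.lt_succ_self n))]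
  ring

lemma ger_nu_succ {W π} (hW : Continuous W) (h : OPS W π) {r : ℝ} (hr : 0 < r) (hr1 : r < 1)
    {n : ℕ} (hn : hf W π r n ≠ 0) :
    nu (fun s => W s * (qf r s)⁻¹) (ger W π r) (n + 1)
      = (4 * r)⁻¹ * (hf W π r (n + 1) / hf W π r n) * nu W π n := by
  have hm := ger_monic h r (n + 1)
  have hd := div_monic (zf r) hm.1 hm.2
  unfold nu
  rw [ger_ip_succ hW hr hr1 hn, h.ip_monic hW hd.1 hd.2, h.orth (n + 1)]
  · unfold nu; ring
  · rw [degree_eq_natDegree hd.1.ne_zero, hd.2]; exact_mod_cast Nat.lt_succ_self n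

lemma hf_pos {W π} (hW : Wt W) (h : OPS W π) {r : ℝ} (hr : 0 < r) (hr1 : r < 1) (n : ℕ) :
    0 < hf W π r n := by
  have hW' := hW.mul (qf_inv_cont hr hr1) (fun s => inv_pos.2 (qf_pos hr hr1 s))
  induction n with
  | zero => unfold hf; rw [h.zero]; exact hW'.pos 1 one_ne_zero
  | succ n ih =>
    have h1 := ger_nu_succ hW.cont h hr hr1 ih.ne'
    have h2 : 0 < nu (fun s => W s * (qf r s)⁻¹) (ger W π r) (n + 1) :=
      hW'.pos _ (ger_monic h r (n + 1)).1.ne_zero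
    rw [h1] at h2
    have h3 := pos_of_mul_pos_left h2 (hW.nu_pos h n).le
    have h4 := pos_of_mul_pos_right h3 (by positivity)
    by_contra hcon
    exact absurd h4 (not_lt.2 (div_nonpos_of_nonpos_of_nonneg (not_lt.1 hcon) ih.le))

/-- The Geronimus formula. -/
theorem ger_OPS {W π} (hW : Wt W) (h : OPS W π) {r : ℝ} (hr : 0 < r) (hr1 : r < 1) :
    OPS (fun s => W s * (qf r s)⁻¹) (ger W π r) where
  monic n := (ger_monic h r n).1
  deg n := (ger_monic h r n).2
  orth n p hp := by
    cases n with
    | zero =>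
      have : p = 0 := by
        rw [← degree_eq_bot]
        exact (Nat.WithBot.lt_zero_iff).1 (by simpa using hp)
      simp [this, ip]
    | succ n => exact ger_orth_succ hW.cont h hr hr1 (hf_pos hW h hr hr1 n).ne' p hp

/-- Normalized function of the second kind. -/
noncomputable def Af (W : unitInterval → ℝ) (π : ℕ → ℝ[X]) (r : ℝ) (n : ℕ) : ℝ :=
  hf W π r n / (nu W π n * (4 * r) ^ n)

/-- The Hankel determinants of `W / qf r` and `W` differ by a value of the function of the second
kind. -/
lemma ger_prod {W π} (hW : Wt W) (h : OPS W π) {r : ℝ} (hr : 0 < r) (hr1 : r < 1) (n : ℕ) :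
    ∏ k ∈ Finset.range (n + 1), nu (fun s => W s * (qf r s)⁻¹) (ger W π r) k
      = Af W π r n * ∏ k ∈ Finset.range (n + 1), nu W π k := by
  induction n with
  | zero =>
    have := (hW.nu_pos h 0).ne'
    simp only [zero_add, Finset.prod_range_one, Af, pow_zero, mul_one]
    rw [div_mul_cancel₀ _ this]
    simp [nu, hf, h.zero, ger]
  | succ n ih =>
    have hp := (hf_pos hW h hr hr1 n).ne'
    have h1 := (hW.nu_pos h (n + 1)).ne'
    have h2 := (hW.nu_pos h n).ne'
    rw [Finset.prod_range_succ, ih, ger_nu_succ hW.cont h hr hr1 hp,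
      Finset.prod_range_succ _ (n + 1), Af, Af]
    field_simp
    ring

/-- Wronskian relation between the orthogonal polynomials and the functions of the second kind. -/
lemma wronskian {W π} (hW : Wt W) (h : OPS W π) {r : ℝ} (hr : 0 < r) (hr1 : r < 1) (n : ℕ) :
    (π (n + 1)).eval (zf r) * hf W π r n - (π n).eval (zf r) * hf W π r (n + 1)
      = nu W π n / (4 * r) := by
  have h1 := ip_inv_split hW.cont hr hr1 (π n) (π (n + 1))
  have h2 := ip_inv_split hW.cont hr hr1 (π (n + 1)) (π n)
  have hd := div_monic (zf r) (h.monic (n + 1)) (h.deg (n + 1))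
  have hl : ((π n) /ₘ (X - C (zf r))).degree < ((n + 1 : ℕ) : WithBot ℕ) := by
    refine lt_of_le_of_lt (degree_divByMonic_le _ _) ?_
    rw [h.degree]; exact_mod_cast Nat.lt_succ_self n
  rw [h.ip_monic hW.cont hd.1 hd.2] at h1
  rw [h.orth _ _ hl, ip_comm] at h2
  rw [h2] at h1
  unfold hf
  field_simp at h1 ⊢
  linarith

/-- Upper bound for the functions of the second kind, since `∫ πₙ² W / qf r` is at most
`‖πₙ‖² / (1 - r)²`. -/
lemma hf_mul_le {W π} (hW : Wt W) (h : OPS W π) {r : ℝ} (hr : 0 < r) (hr1 : r < 1) (n : ℕ) :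
    (π n).eval (zf r) * hf W π r n ≤ nu W π n / (1 - r) ^ 2 := by
  have h1 := ip_inv_split hW.cont hr hr1 (π n) (π n)
  rw [h.orth] at h1
  · have h2 : ip (fun s => W s * (qf r s)⁻¹) (π n) (π n) ≤ nu W π n / (1 - r) ^ 2 := by
      unfold nu ip
      rw [← integral_div]
      refine integral_mono ?_ ?_ ?_
      · exact intg (((cont_eval _).mul (cont_eval _)).mul (hW.cont.mul (qf_inv_cont hr hr1)))
      · exact intg ((((cont_eval _).mul (cont_eval _)).mul hW.cont).div_const _)
      · intro s
        have h0 : 0 < (1 - r) ^ 2 := by have : 0 < 1 - r := by linarith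
                                        positivity
        have := inv_anti₀ h0 (qf_ge hr s)
        have h3 : 0 ≤ eval ((s : ℝ) ^ 2) (π n) * eval ((s : ℝ) ^ 2) (π n) * W s :=
          mul_nonneg (mul_self_nonneg _) (hW.nonneg s)
        simp only
        rw [div_eq_mul_inv, ← mul_assoc]
        exact mul_le_mul_of_nonneg_left this h3
    unfold hf
    linarith
  · by_cases h0 : n = 0
    · subst h0
      rw [(divByMonic_eq_zero_iff (monic_X_sub_C (zf r))).2]
      · simp
      · rw [degree_X_sub_C, h.degree]; norm_num
    · obtain ⟨m, rfl⟩ := Nat.exists_eq_succ_of_ne_zero h0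
      have := div_monic (zf r) (h.monic (m + 1)) (h.deg (m + 1))
      rw [degree_eq_natDegree this.1.ne_zero, this.2]
      exact_mod_cast Nat.lt_succ_self m

/-! ### Multiple integrals -/

lemma intg_pi {n : ℕ} {f : (Fin n → unitInterval) → ℝ} (hf : Continuous f) : Integrable f :=
  hf.integrable_of_hasCompactSupport (HasCompactSupport.of_compactSpace f)

/-- Andréief's identity. -/
theorem andreief {n : ℕ} (F G : Fin n → unitInterval → ℝ) (W : unitInterval → ℝ)
    (hF : ∀ i, Continuous (F i)) (hG : ∀ i, Continuous (G i)) (hW : Continuous W) :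
    ∫ x : Fin n → unitInterval, (Matrix.of fun i j => F i (x j)).det *
        (Matrix.of fun i j => G i (x j)).det * ∏ j, W (x j)
      = (n.factorial : ℝ) * (Matrix.of fun i j => ∫ s, F i s * G j s * W s).det := by
  have h1 : ∀ x : Fin n → unitInterval, (Matrix.of fun i j => F i (x j)).det *
        (Matrix.of fun i j => G i (x j)).det * ∏ j, W (x j)
      = ∑ τ : Equiv.Perm (Fin n), ∑ σ : Equiv.Perm (Fin n),
        ((Equiv.Perm.sign σ : ℤ) : ℝ) * ((Equiv.Perm.sign τ : ℤ) : ℝ) *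
          ∏ j, (F (σ j) (x j) * G (τ j) (x j) * W (x j)) := by
    intro x
    rw [Matrix.det_apply', Matrix.det_apply', Finset.sum_mul_sum, Finset.sum_mul, Finset.sum_comm]
    refine Finset.sum_congr rfl fun τ _ => ?_
    rw [Finset.sum_mul]
    refine Finset.sum_congr rfl fun σ _ => ?_
    simp only [Matrix.of_apply, Finset.prod_mul_distrib]
    ring
  simp_rw [h1]
  have hc : ∀ σ τ : Equiv.Perm (Fin n), Continuous fun x : Fin n → unitInterval =>
      ((Equiv.Perm.sign σ : ℤ) : ℝ) * ((Equiv.Perm.sign τ : ℤ) : ℝ) *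
          ∏ j, (F (σ j) (x j) * G (τ j) (x j) * W (x j)) := by
    intro σ τ
    refine continuous_const.mul (continuous_finsetProd _ fun j _ => ?_)
    exact (((hF _).comp (continuous_apply j)).mul ((hG _).comp (continuous_apply j))).mul
      (hW.comp (continuous_apply j))
  rw [integral_finsetSum _ (fun τ _ => integrable_finsetSum _ fun σ _ => intg_pi (hc σ τ))]
  have h2 : ∀ τ : Equiv.Perm (Fin n), ∫ x : Fin n → unitInterval, ∑ σ : Equiv.Perm (Fin n),
        ((Equiv.Perm.sign σ : ℤ) : ℝ) * ((Equiv.Perm.sign τ : ℤ) : ℝ) *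
          ∏ j, (F (σ j) (x j) * G (τ j) (x j) * W (x j))
      = (Matrix.of fun i j => ∫ s, F i s * G j s * W s).det := by
    intro τ
    rw [integral_finsetSum _ (fun σ _ => intg_pi (hc σ τ))]
    have h3 := Matrix.det_permute' τ (Matrix.of fun i j => ∫ s, F i s * G j s * W s)
    rw [Matrix.det_apply'] at h3
    have h4 : ((Equiv.Perm.sign τ : ℤ) : ℝ) * ((Equiv.Perm.sign τ : ℤ) : ℝ) = 1 := by
      rw [← Int.cast_mul, ← Units.val_mul, Int.units_mul_self]; simp
    calc _ = ((Equiv.Perm.sign τ : ℤ) : ℝ) * ∑ σ : Equiv.Perm (Fin n),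
          ((Equiv.Perm.sign σ : ℤ) : ℝ) * ∏ j, ∫ s, F (σ j) s * G (τ j) s * W s := by
          rw [Finset.mul_sum]
          refine Finset.sum_congr rfl fun σ _ => ?_
          rw [integral_const_mul]
          rw [integral_fintype_prod_volume_eq_prod (fun j s => F (σ j) s * G (τ j) s * W s)]
          ring
      _ = _ := by
          simp only [Matrix.submatrix_apply, Matrix.of_apply, id] at h3
          rw [h3, ← mul_assoc, h4, one_mul]
  simp_rw [h2]
  simp [Fintype.card_perm]

/-- Squared Vandermonde determinant in the variables `x_j²`. -/
noncomputable def vand {n : ℕ} (x : Fin n → unitInterval) : ℝ :=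
  (Matrix.vandermonde fun j => ((x j : ℝ)) ^ 2).det ^ 2

lemma vand_cont {n : ℕ} : Continuous (vand (n := n)) := by
  unfold vand
  refine Continuous.pow (Continuous.matrix_det ?_) 2
  refine continuous_matrix fun i j => ?_
  simp only [Matrix.vandermonde_apply]
  fun_prop

/-- The partition function `∫ ∏_{i<j} (x_j² - x_i²)² ∏ W(x_j)`. -/
noncomputable def Zn (W : unitInterval → ℝ) (n : ℕ) : ℝ :=
  ∫ x : Fin n → unitInterval, vand x * ∏ j, W (x j)

/-- Heine's formula: a Gram determinant of polynomials of degrees at most `0, …, n - 1` is a multiple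
of the partition function. -/
lemma Zn_gram {W} (hW : Continuous W) {n : ℕ} (p : Fin n → ℝ[X])
    (hd : ∀ i, (p i).natDegree ≤ i) :
    (n.factorial : ℝ) * (Matrix.of fun i j => ip W (p i) (p j)).det
      = (∏ i : Fin n, (p i).coeff i) ^ 2 * Zn W n := by
  have h := andreief (fun i s => (p i).eval ((s : ℝ) ^ 2)) (fun i s => (p i).eval ((s : ℝ) ^ 2)) W
    (fun i => cont_eval _) (fun i => cont_eval _) hW
  unfold ip
  rw [← h, Zn, ← integral_const_mul]
  congr 1; ext x
  have h2 := Matrix.eval_matrixOfPolynomials_eq_vandermonde_mul_matrixOfPolynomials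
    (fun j => ((x j : ℝ)) ^ 2) p hd
  have h3 : (Matrix.of fun i j => (p i).eval ((x j : ℝ) ^ 2)).det
      = (Matrix.vandermonde fun j => ((x j : ℝ)) ^ 2).det * ∏ i : Fin n, (p i).coeff i := by
    rw [← Matrix.det_transpose]
    have : (Matrix.of fun i j => (p i).eval ((x j : ℝ) ^ 2)).transpose
      = Matrix.of fun i j => (p j).eval ((x i : ℝ) ^ 2) := rfl
    have ht : (Matrix.of fun i j : Fin n => (p j).coeff i).IsUpperTriangular := by
      intro i j hij
      simp only [Matrix.of_apply]
      apply coeff_eq_zero_of_natDegree_lt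
      exact lt_of_le_of_lt (hd j) hij
    rw [this, h2, Matrix.det_mul, Matrix.det_of_isUpperTriangular ht]
    simp
  rw [h3]
  unfold vand
  ring

lemma Zn_OPS {W π} (hW : Wt W) (h : OPS W π) (n : ℕ) :
    Zn W n = n.factorial * ∏ k ∈ Finset.range n, nu W π k := by
  have h1 := Zn_gram hW.cont (fun i : Fin n => π i) (fun i => (h.deg i).le)
  have h2 : ∀ i : Fin n, (π i).coeff i = 1 := by
    intro i
    have := h.monic i
    rw [Monic, leadingCoeff, h.deg] at this
    exact this
  simp only [h2, Finset.prod_const_one, one_pow, one_mul] at h1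
  rw [← h1]
  congr 1
  have h3 : (Matrix.of fun i j : Fin n => ip W (π i) (π j))
      = Matrix.diagonal fun i : Fin n => nu W π i := by
    ext i j
    rw [Matrix.of_apply, Matrix.diagonal_apply]
    split_ifs with hij
    · subst hij; rfl
    · rcases lt_or_gt_of_ne hij with hlt | hlt
      · rw [ip_comm, h.orth]; rw [h.degree]; exact_mod_cast hlt
      · rw [h.orth]; rw [h.degree]; exact_mod_cast hlt
  rw [h3, Matrix.det_diagonal, Fin.prod_univ_eq_prod_range]

lemma Zn_pos {W π} (hW : Wt W) (h : OPS W π) (n : ℕ) : 0 < Zn W n := by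
  rw [Zn_OPS hW h]
  have := Finset.prod_pos fun k (_ : k ∈ Finset.range n) => hW.nu_pos h k
  positivity

/-- Gram determinants of polynomials of degrees `0, …, n - 1`. -/
lemma gram_det {W π} (hW : Wt W) (h : OPS W π) {n : ℕ} (p : Fin n → ℝ[X])
    (hd : ∀ i, (p i).natDegree ≤ i) :
    (Matrix.of fun i j => ip W (p i) (p j)).det
      = (∏ i : Fin n, (p i).coeff i) ^ 2 * ∏ k ∈ Finset.range n, nu W π k := by
  have h1 := Zn_gram hW.cont p hd
  rw [Zn_OPS hW h] at h1
  have : (n.factorial : ℝ) ≠ 0 := by positivity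
  apply mul_left_cancel₀ this
  rw [h1]; ring

/-- The free energy of the weight `W e^a`. -/
noncomputable def hn (W : unitInterval → ℝ) (n : ℕ) (a : unitInterval → ℝ) : ℝ :=
  Real.log (Zn (fun s => W s * Real.exp (a s)) n)

lemma Zn_exp_pos {W} (hW : Wt W) {n : ℕ} (hZ : 0 < Zn W n) {a : unitInterval → ℝ}
    (ha : Continuous a) : 0 < Zn (fun s => W s * Real.exp (a s)) n := by
  obtain ⟨s0, -, hs0⟩ := isCompact_univ.exists_isMinOn (Set.univ_nonempty) ha.continuousOn
  have h1 : Real.exp (a s0) ^ n * Zn W n ≤ Zn (fun s => W s * Real.exp (a s)) n := by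
    unfold Zn
    rw [← integral_const_mul]
    have hw : Continuous fun x : Fin n → unitInterval => ∏ j, W (x j) :=
      continuous_finsetProd _ fun j _ => hW.cont.comp (continuous_apply j)
    have hw' : Continuous fun x : Fin n → unitInterval => ∏ j, (W (x j) * Real.exp (a (x j))) :=
      continuous_finsetProd _ fun j _ => ((hW.cont.mul (Real.continuous_exp.comp ha))).comp
        (continuous_apply j)
    refine integral_mono (intg_pi (continuous_const.mul (vand_cont.mul hw)))
      (intg_pi (vand_cont.mul hw')) ?_
    intro x
    simp only [Finset.prod_mul_distrib]
    have h2 : Real.exp (a s0) ^ n ≤ ∏ j, Real.exp (a (x j)) := by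
      calc _ = ∏ _j : Fin n, Real.exp (a s0) := by simp
        _ ≤ _ := Finset.prod_le_prod (fun _ _ => (Real.exp_pos _).le)
          fun j _ => Real.exp_le_exp.2 (hs0 (Set.mem_univ _))
    have h3 : 0 ≤ vand x * ∏ j, W (x j) :=
      mul_nonneg (by unfold vand; positivity) (Finset.prod_nonneg fun j _ => hW.nonneg _)
    nlinarith [mul_le_mul_of_nonneg_right h2 h3]
  exact lt_of_lt_of_le (by positivity) h1

/-- Convexity of the free energy (Hölder's inequality). -/
theorem hn_convex {W} (hW : Wt W) {n : ℕ} (hZ : 0 < Zn W n) {a b : unitInterval → ℝ}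
    (ha : Continuous a) (hb : Continuous b) {l : ℝ} (h0 : 0 ≤ l) (h1 : l ≤ 1) :
    hn W n (fun s => (1 - l) * a s + l * b s) ≤ (1 - l) * hn W n a + l * hn W n b := by
  have hc : ∀ {c : unitInterval → ℝ}, Continuous c →
      Continuous fun x : Fin n → unitInterval => vand x * ∏ j, (W (x j) * Real.exp (c (x j))) := by
    intro c hc
    exact vand_cont.mul (continuous_finsetProd _ fun j _ =>
      ((hW.cont.mul (Real.continuous_exp.comp hc))).comp (continuous_apply j))
  have hab : Continuous fun s => (1 - l) * a s + l * b s := by fun_prop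
  have pa := Zn_exp_pos hW hZ ha
  have pb := Zn_exp_pos hW hZ hb
  have pab := Zn_exp_pos hW hZ hab
  set α := hn W n a with hα
  set β := hn W n b with hβ
  have eα : Real.exp α = Zn (fun s => W s * Real.exp (a s)) n := Real.exp_log pa
  have eβ : Real.exp β = Zn (fun s => W s * Real.exp (b s)) n := Real.exp_log pb
  unfold hn
  rw [Real.log_le_iff_le_exp pab]
  have key : Zn (fun s => W s * Real.exp ((1 - l) * a s + l * b s)) n
      ≤ Real.exp ((1 - l) * α + l * β) *
        ((1 - l) * (Real.exp (-α) * Zn (fun s => W s * Real.exp (a s)) n)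
          + l * (Real.exp (-β) * Zn (fun s => W s * Real.exp (b s)) n)) := by
    unfold Zn
    rw [← integral_const_mul, ← integral_const_mul, ← integral_const_mul, ← integral_const_mul,
      ← integral_add, ← integral_const_mul]
    · refine integral_mono (intg_pi (hc hab)) (intg_pi ?_) ?_
      · exact continuous_const.mul ((continuous_const.mul (continuous_const.mul (hc ha))).add
          (continuous_const.mul (continuous_const.mul (hc hb))))
      · intro x
        simp only [Finset.prod_mul_distrib, ← Real.exp_sum, Finset.sum_add_distrib,
          ← Finset.mul_sum]
        set A := ∑ j, a (x j)
        set B := ∑ j, b (x j)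
        have h3 : 0 ≤ vand x * ∏ j, W (x j) :=
          mul_nonneg (by unfold vand; positivity) (Finset.prod_nonneg fun j _ => hW.nonneg _)
        have h4 := convexOn_exp.2 (Set.mem_univ (A - α)) (Set.mem_univ (B - β))
          (sub_nonneg.2 h1) h0 (by ring)
        simp only [smul_eq_mul] at h4
        have h5 : Real.exp ((1 - l) * A + l * B) = Real.exp ((1 - l) * α + l * β) *
            Real.exp ((1 - l) * (A - α) + l * (B - β)) := by
          rw [← Real.exp_add]; congr 1; ring
        have h6 : Real.exp (A - α) = Real.exp (-α) * Real.exp A := by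
          rw [← Real.exp_add]; congr 1; ring
        have h7 : Real.exp (B - β) = Real.exp (-β) * Real.exp B := by
          rw [← Real.exp_add]; congr 1; ring
        rw [h6, h7] at h4
        rw [h5]
        have h8 := mul_le_mul_of_nonneg_left h4
          (mul_nonneg (Real.exp_pos ((1 - l) * α + l * β)).le h3)
        linarith
    · exact intg_pi (continuous_const.mul (continuous_const.mul (hc ha)))
    · exact intg_pi (continuous_const.mul (continuous_const.mul (hc hb)))
  refine key.trans_eq ?_
  rw [← eα, ← eβ, ← Real.exp_add, ← Real.exp_add]
  simp

/-! ### Exterior asymptotics and their stability under the two transforms -/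

/-- The normalized value `(4z)ⁿ πₙ((1+z)²/(4z))`. -/
noncomputable def Pf (π : ℕ → ℝ[X]) (n : ℕ) (z : ℂ) : ℂ :=
  (4 * z) ^ n * aeval ((1 + z) ^ 2 / (4 * z)) (π n)

/-- `Pf` at a real point. -/
noncomputable def pr (π : ℕ → ℝ[X]) (n : ℕ) (r : ℝ) : ℝ :=
  (4 * r) ^ n * (π n).eval (zf r)

lemma Pf_ofReal (π : ℕ → ℝ[X]) (n : ℕ) (r : ℝ) : Pf π n r = (pr π n r : ℂ) := by
  have : ((1 + (r : ℂ)) ^ 2 / (4 * r)) = ((zf r : ℝ) : ℂ) := by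
    unfold zf; push_cast; ring
  unfold Pf pr
  rw [this]
  have h2 := aeval_algebraMap_apply_eq_algebraMap_eval (A := ℂ) (zf r) (π n)
  simp only [Complex.coe_algebraMap] at h2
  rw [h2]
  push_cast; ring

/-- A weight with its orthogonal polynomials whose normalized values converge locally uniformly
on the punctured disc to `P`, with `P > 0` on `(0, 1)`, and whose norms satisfy the expected ratio
asymptotics. -/
structure Good (W : unitInterval → ℝ) (π : ℕ → ℝ[X]) (P : ℂ → ℂ) : Prop where
  wt : Wt W
  ops : OPS W π
  lim : ∀ z : ℂ, z ≠ 0 → ‖z‖ < 1 →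
    Tendsto (fun x : ℕ × ℂ => Pf π x.1 x.2) (atTop ×ˢ 𝓝 z) (𝓝 (P z))
  cont : ∀ z : ℂ, z ≠ 0 → ‖z‖ < 1 → ContinuousAt P z
  pos : ∀ r : ℝ, 0 < r → r < 1 → ∃ p : ℝ, 0 < p ∧ P r = p
  nu_ratio : Tendsto (fun n => nu W π (n + 1) / nu W π n) atTop (𝓝 (1 / 16))

lemma Good.lim_pr {W π P} (h : Good W π P) {r : ℝ} (hr : 0 < r) (hr1 : r < 1) :
    Tendsto (fun n => pr π n r) atTop (𝓝 (P r).re) := by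
  have h1 := h.lim r (by exact_mod_cast hr.ne') (by simpa [abs_of_pos hr] using hr1)
  have h2 : Tendsto (fun n : ℕ => (n, (r : ℂ))) atTop (atTop ×ˢ 𝓝 (r : ℂ)) :=
    tendsto_id.prodMk tendsto_const_nhds
  have h3 := (Complex.continuous_re.tendsto _).comp (h1.comp h2)
  refine h3.congr fun n => ?_
  simp [Pf_ofReal]

lemma Good.re_pos {W π P} (h : Good W π P) {r : ℝ} (hr : 0 < r) (hr1 : r < 1) :
    0 < (P r).re := by
  obtain ⟨p, hp, h2⟩ := h.pos r hr hr1
  rw [h2]; simpa using hp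

lemma Good.pr_pos {W π P} (h : Good W π P) {r : ℝ} (hr : 0 < r) (hr1 : r < 1) (n : ℕ) :
    0 < pr π n r := by
  unfold pr
  have := h.ops.eval_pos h.wt hr hr1 n
  positivity

lemma Good.lim_ratio {W π P} (h : Good W π P) {r : ℝ} (hr : 0 < r) (hr1 : r < 1) :
    Tendsto (fun n => pr π (n + 1) r / pr π n r) atTop (𝓝 1) := by
  have h1 := h.lim_pr hr hr1
  have h2 := (tendsto_add_atTop_iff_nat 1).2 h1
  have := h2.div h1 (h.re_pos hr hr1).ne'
  rwa [div_self (h.re_pos hr hr1).ne'] at this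

lemma Good.lim_shift {W π P} (h : Good W π P) {z : ℂ} (hz : z ≠ 0) (hz1 : ‖z‖ < 1) :
    Tendsto (fun x : ℕ × ℂ => Pf π (x.1 + 1) x.2) (atTop ×ˢ 𝓝 z) (𝓝 (P z)) := by
  have h1 : Tendsto (fun x : ℕ × ℂ => x.1 + 1) (atTop ×ˢ 𝓝 z) atTop :=
    (tendsto_add_atTop_nat 1).comp tendsto_fst
  have h2 : Tendsto (fun x : ℕ × ℂ => (x.1 + 1, x.2)) (atTop ×ˢ 𝓝 z) (atTop ×ˢ 𝓝 z) :=
    h1.prodMk tendsto_snd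
  have h3 := (h.lim z hz hz1).comp h2
  simpa only [Function.comp_def] using h3

lemma Pf_diff (π : ℕ → ℝ[X]) (n : ℕ) {z : ℂ} (hz : z ≠ 0) : DifferentiableAt ℂ (Pf π n) z := by
  have h4 : (4 * z) ≠ 0 := mul_ne_zero (by norm_num) hz
  unfold Pf
  refine DifferentiableAt.mul (by fun_prop) ?_
  have h1 : DifferentiableAt ℂ (fun y : ℂ => aeval y (π n)) ((1 + z) ^ 2 / (4 * z)) :=
    (π n).differentiable_aeval.differentiableAt
  have h2 : DifferentiableAt ℂ (fun y : ℂ => (1 + y) ^ 2 / (4 * y)) z :=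
    DifferentiableAt.div (by fun_prop) (by fun_prop) h4
  exact DifferentiableAt.comp (g := fun y : ℂ => aeval y (π n)) z h1 h2

/-- Removal of an isolated exceptional point from a locally uniform limit, by the maximum
principle. -/
lemma confluent {g : ℕ → ℂ → ℂ} {Q : ℂ → ℂ} {z0 : ℂ} (h0 : z0 ≠ 0) (h1 : ‖z0‖ < 1)
    (hg : ∀ n z, z ≠ 0 → DifferentiableAt ℂ (g n) z)
    (hlim : ∀ z : ℂ, z ≠ 0 → ‖z‖ < 1 → z ≠ z0 →
      Tendsto (fun x : ℕ × ℂ => g x.1 x.2) (atTop ×ˢ 𝓝 z) (𝓝 (Q z)))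
    (hQ : ContinuousAt Q z0) :
    Tendsto (fun x : ℕ × ℂ => g x.1 x.2) (atTop ×ˢ 𝓝 z0) (𝓝 (Q z0)) := by
  rw [Metric.tendsto_nhds]
  intro ε hε
  have hU : ∀ᶠ z in 𝓝 z0, z ≠ 0 ∧ ‖z‖ < 1 ∧ dist (Q z) (Q z0) < ε / 2 := by
    refine (isOpen_ne.eventually_mem h0).and (Filter.Eventually.and ?_ ?_)
    · exact (isOpen_lt continuous_norm continuous_const).eventually_mem h1
    · exact Metric.tendsto_nhds.1 hQ (ε / 2) (by positivity)
  obtain ⟨d, hd, hball⟩ := Metric.eventually_nhds_iff_ball.1 hU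
  set δ := d / 2 with hδ
  have hδ0 : 0 < δ := by positivity
  have hδd : δ < d := by rw [hδ]; linarith
  have hsub : Metric.closedBall z0 δ ⊆ Metric.ball z0 d := Metric.closedBall_subset_ball hδd
  have hK : IsCompact (Metric.sphere z0 δ) := isCompact_sphere z0 δ
  have hunif : ∀ᶠ n in atTop, ∀ z ∈ Metric.sphere z0 δ, dist (g n z) (Q z0) < ε / 2 := by
    refine hK.induction_on (p := fun s => ∀ᶠ n in atTop, ∀ z ∈ s, dist (g n z) (Q z0) < ε / 2)
      (by simp) (fun s t hst ht => ht.mono fun n hn z hz => hn z (hst hz))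
      (fun s t hs ht => (hs.and ht).mono fun n hn z hz => hz.elim (hn.1 z) (hn.2 z))
      (fun z hz => ?_)
    have hb := hball z (hsub (Metric.sphere_subset_closedBall hz))
    have hne : z ≠ z0 := by
      rintro rfl
      rw [Metric.mem_sphere, dist_self] at hz
      exact hδ0.ne hz
    have := hlim z hb.1 hb.2.1 hne
    have h3 := this.eventually (Metric.isOpen_ball.eventually_mem
      (show Q z ∈ Metric.ball (Q z0) (ε / 2) from hb.2.2))
    obtain ⟨pa, hpa, pb, hpb, hab⟩ := eventually_prod_iff.1 h3
    exact ⟨{y | pb y}, mem_nhdsWithin_of_mem_nhds hpb, hpa.mono fun n hn y hy => hab hn hy⟩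
  have hmax : ∀ᶠ n in atTop, ∀ z ∈ Metric.ball z0 δ, dist (g n z) (Q z0) < ε := by
    filter_upwards [hunif] with n hn z hz
    have hdc : DiffContOnCl ℂ (fun w => g n w - Q z0) (Metric.ball z0 δ) := by
      refine DifferentiableOn.diffContOnCl ?_
      rw [closure_ball z0 hδ0.ne']
      intro w hw
      exact ((hg n w (hball w (hsub hw)).1).sub_const _).differentiableWithinAt
    have h4 := Complex.norm_le_of_forall_mem_frontier_norm_le Metric.isBounded_ball hdc
      (C := ε / 2) (fun w hw => by
        rw [frontier_ball z0 hδ0.ne'] at hw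
        rw [← dist_eq_norm]
        exact (hn w hw).le) (subset_closure hz)
    rw [← dist_eq_norm] at h4
    linarith
  have h5 : ∀ᶠ x : ℕ × ℂ in atTop ×ˢ 𝓝 z0, (∀ z ∈ Metric.ball z0 δ, dist (g x.1 z) (Q z0) < ε) ∧
      x.2 ∈ Metric.ball z0 δ :=
    hmax.prod_mk (Metric.ball_mem_nhds z0 hδ0)
  filter_upwards [h5] with x hx using hx.1 _ hx.2

lemma one_sub_mul_ne {z : ℂ} {r : ℝ} (hz : ‖z‖ < 1) (hr : 0 < r) (hr1 : r < 1) :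
    1 - z * r ≠ 0 := by
  intro h
  have h1 : z * r = 1 := by linear_combination -h
  have h2 : ‖z‖ * r = 1 := by
    have := congrArg norm h1
    simpa [abs_of_pos hr] using this
  nlinarith [norm_nonneg z]

lemma chr_Pf {W π P} (h : Good W π P) {r : ℝ} (hr : 0 < r) (hr1 : r < 1) (n : ℕ) {z : ℂ}
    (hz : z ≠ 0) :
    Pf (chr π r) n z * ((z - r) * (z * r - 1))
      = r * Pf π (n + 1) z - z * ((pr π (n + 1) r / pr π n r : ℝ) : ℂ) * Pf π n z := by
  have hp := (h.ops.eval_pos h.wt hr hr1 n).ne'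
  have h1 := congrArg (aeval ((1 + z) ^ 2 / (4 * z))) (chr_spec (π := π) (r := r) hp)
  simp only [map_mul, map_sub, aeval_X, aeval_C, Complex.coe_algebraMap] at h1
  have hrat : ((ratR π r n : ℝ) : ℂ) * (4 * r) = ((pr π (n + 1) r / pr π n r : ℝ) : ℂ) := by
    unfold ratR pr
    rw [pow_succ]
    norm_cast
    field_simp
  have hz2 : ((zf r : ℝ) : ℂ) = (1 + (r : ℂ)) ^ 2 / (4 * r) := by
    unfold zf; push_cast; ring
  have hrc : (r : ℂ) ≠ 0 := by exact_mod_cast hr.ne'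
  rw [← hrat]
  unfold Pf
  rw [hz2] at h1
  have h2 : (z - r) * (z * r - 1)
      = 4 * z * r * ((1 + z) ^ 2 / (4 * z) - (1 + (r : ℂ)) ^ 2 / (4 * r)) := by
    field_simp; ring
  rw [h2]
  set A := aeval ((1 + z) ^ 2 / (4 * z)) (chr π r n)
  set B := aeval ((1 + z) ^ 2 / (4 * z)) (π (n + 1))
  set D := aeval ((1 + z) ^ 2 / (4 * z)) (π n)
  linear_combination (4 * z) ^ n * (4 * z * r) * h1

/-- Stability of the exterior asymptotics under `W ↦ W * qf r`. At `z = r` the explicit formula has a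
removable singularity, which is handled by `confluent`. -/
theorem Good.chr {W π P} (h : Good W π P) {r : ℝ} (hr : 0 < r) (hr1 : r < 1) :
    Good (fun s => W s * qf r s) (chr π r) (fun z => P z / (1 - z * r)) where
  wt := h.wt.mul (qf_cont r) (qf_pos hr hr1)
  ops := chr_OPS h.wt h.ops hr hr1
  cont z hz hz1 := by
    have := h.cont z hz hz1
    exact this.div (by fun_prop) (one_sub_mul_ne hz1 hr hr1)
  pos x hx hx1 := by
    obtain ⟨p, hp, hP⟩ := h.pos x hx hx1
    refine ⟨p / (1 - x * r), div_pos hp (by nlinarith), ?_⟩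
    simp only [hP]; push_cast; ring
  lim := by
    have hr0 : (r : ℂ) ≠ 0 := by exact_mod_cast hr.ne'
    have hr2 : ‖(r : ℂ)‖ < 1 := by simpa [abs_of_pos hr] using hr1
    have key : ∀ z : ℂ, z ≠ 0 → ‖z‖ < 1 → z ≠ (r : ℂ) →
        Tendsto (fun x : ℕ × ℂ => Pf (WidomArc.chr π r) x.1 x.2) (atTop ×ˢ 𝓝 z)
          (𝓝 (P z / (1 - z * r))) := by
      intro z hz hz1 hzr
      have hne : (z - r) * (z * r - 1) ≠ 0 := by
        refine mul_ne_zero (sub_ne_zero.2 hzr) ?_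
        have := one_sub_mul_ne hz1 hr hr1
        intro h; apply this; linear_combination -h
      have hsnd : Tendsto (fun x : ℕ × ℂ => x.2) (atTop ×ˢ 𝓝 z) (𝓝 z) := tendsto_snd
      have hR : Tendsto (fun x : ℕ × ℂ => ((pr π (x.1 + 1) r / pr π x.1 r : ℝ) : ℂ))
          (atTop ×ˢ 𝓝 z) (𝓝 ((1 : ℝ) : ℂ)) :=
        (Complex.continuous_ofReal.tendsto _).comp ((h.lim_ratio hr hr1).comp tendsto_fst)
      have hnum := ((h.lim_shift hz hz1).const_mul (r : ℂ)).sub ((hsnd.mul hR).mul (h.lim z hz hz1))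
      have hden : Tendsto (fun x : ℕ × ℂ => (x.2 - (r : ℂ)) * (x.2 * r - 1)) (atTop ×ˢ 𝓝 z)
          (𝓝 ((z - (r : ℂ)) * (z * r - 1))) := by
        have hc : Continuous fun y : ℂ => (y - r) * (y * r - 1) := by fun_prop
        exact (hc.tendsto z).comp hsnd
      have hlim := hnum.div hden hne
      have hval : ((r : ℂ) * P z - z * ((1 : ℝ) : ℂ) * P z) / ((z - r) * (z * r - 1))
          = P z / (1 - z * r) := by
        have h3 := one_sub_mul_ne hz1 hr hr1
        rw [div_eq_div_iff hne h3]; push_cast; ring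
      rw [hval] at hlim
      refine hlim.congr' ?_
      have hev : ∀ᶠ y in 𝓝 z, (y - (r : ℂ)) * (y * r - 1) ≠ 0 ∧ y ≠ 0 := by
        have hc : Continuous fun y : ℂ => (y - r) * (y * r - 1) := by fun_prop
        exact (hc.continuousAt.eventually_ne hne).and (isOpen_ne.eventually_mem hz)
      have hev2 : ∀ᶠ x : ℕ × ℂ in atTop ×ˢ 𝓝 z, (x.2 - r) * (x.2 * r - 1) ≠ 0 ∧ x.2 ≠ 0 :=
        hsnd.eventually hev
      filter_upwards [hev2] with x hx
      simp only [Pi.div_apply]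
      rw [div_eq_iff hx.1, chr_Pf h hr hr1 x.1 hx.2]
    intro z hz hz1
    by_cases hzr : z = r
    · subst hzr
      refine confluent hr0 hr2 (fun n z hz => Pf_diff _ n hz) key ?_
      exact (h.cont _ hz hz1).div (by fun_prop) (one_sub_mul_ne hz1 hr hr1)
    · exact key z hz hz1 hzr
  nu_ratio := by
    have h1 := h.lim_ratio hr hr1
    have h2 := (tendsto_add_atTop_iff_nat 1).2 h1
    have h3 := (h2.div h1 one_ne_zero).mul h.nu_ratio
    rw [div_one, one_mul] at h3
    refine h3.congr fun n => ?_
    have hR : ∀ n, nu (fun s => W s * qf r s) (WidomArc.chr π r) n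
        = pr π (n + 1) r / pr π n r * nu W π n := by
      intro n
      have hp := (h.ops.eval_pos h.wt hr hr1 n).ne'
      rw [chr_nu h.wt.cont h.ops hr hp]
      congr 1
      unfold ratR pr
      rw [pow_succ]
      field_simp
    rw [hR, hR]
    have := (h.pr_pos hr hr1 n).ne'
    have := (h.pr_pos hr hr1 (n + 1)).ne'
    have := (h.wt.nu_pos h.ops n).ne'
    simp only [Pi.div_apply]
    field_simp

/-- Change of the Hankel determinants under `W ↦ W * qf r`. -/
theorem Good.chr_lim {W π P} (h : Good W π P) {r : ℝ} (hr : 0 < r) (hr1 : r < 1) :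
    Tendsto (fun n => Zn (fun s => W s * qf r s) n / Zn W n) atTop (𝓝 (P r).re) := by
  refine (h.lim_pr hr hr1).congr fun n => ?_
  rw [Zn_OPS h.wt h.ops, Zn_OPS (h.chr hr hr1).wt (h.chr hr hr1).ops,
    chr_prod h.wt h.ops hr hr1]
  have := Finset.prod_pos fun k (_ : k ∈ Finset.range n) => h.wt.nu_pos h.ops k
  have h2 : (n.factorial : ℝ) ≠ 0 := by positivity
  unfold pr
  field_simp

/-- A bounded solution of a backward recurrence with multipliers bounded by `q < 1` and forcing tending
to `0` tends to `0`. -/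
lemma backward {e δ κ : ℕ → ℝ} {B q : ℝ} (hq0 : 0 ≤ q) (hq1 : q < 1) (hB : ∀ᶠ n in atTop, |e n| ≤ B)
    (hrec : ∀ n, e n = δ n + κ n * e (n + 1)) (hδ : Tendsto δ atTop (𝓝 0))
    (hκ : ∀ᶠ n in atTop, |κ n| ≤ q) : Tendsto e atTop (𝓝 0) := by
  have hq : 0 < 1 - q := by linarith
  rw [Metric.tendsto_atTop]
  intro ε hε
  have h1 : ∀ᶠ n in atTop, |δ n| ≤ ε / 3 * (1 - q) := by
    have := Metric.tendsto_nhds.1 hδ (ε / 3 * (1 - q)) (by positivity)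
    filter_upwards [this] with n hn
    rw [Real.dist_eq, sub_zero] at hn
    exact hn.le
  obtain ⟨N, hN⟩ := eventually_atTop.1 (hB.and (h1.and hκ))
  have hm : ∀ m : ℕ, ∀ n ≥ N, |e n| ≤ ε / 3 + q ^ m * B := by
    intro m
    induction m with
    | zero => intro n hn; simp only [pow_zero, one_mul]; linarith [(hN n hn).1]
    | succ m ih =>
      intro n hn
      have h2 := ih (n + 1) (by omega)
      obtain ⟨-, h3, h4⟩ := hN n hn
      rw [hrec n]
      calc _ ≤ |δ n| + |κ n| * |e (n + 1)| := by rw [← abs_mul]; exact abs_add_le _ _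
        _ ≤ ε / 3 * (1 - q) + q * (ε / 3 + q ^ m * B) := by
          have := mul_le_mul h4 h2 (abs_nonneg _) hq0
          linarith
        _ = _ := by ring
  have hlim : Tendsto (fun m : ℕ => q ^ m * B) atTop (𝓝 0) := by
    simpa using (tendsto_pow_atTop_nhds_zero_of_lt_one hq0 hq1).mul_const B
  obtain ⟨m, hm2⟩ := (hlim.eventually (gt_mem_nhds (show (0 : ℝ) < ε / 3 by positivity))).exists
  refine ⟨N, fun n hn => ?_⟩
  rw [Real.dist_eq, sub_zero]
  linarith [hm m n hn]

lemma Af_pos {W π P} (h : Good W π P) {r : ℝ} (hr : 0 < r) (hr1 : r < 1) (n : ℕ) :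
    0 < Af W π r n := by
  have h1 := hf_pos h.wt h.ops hr hr1 n
  have h2 := h.wt.nu_pos h.ops n
  unfold Af; positivity

/-- Asymptotics of the functions of the second kind. The Wronskian relation is a recurrence from `n + 1`
to `n` whose multiplier tends to `r² < 1`, so that a bounded solution converges to its fixed point. -/
theorem Good.lim_Af {W π P} (h : Good W π P) {r : ℝ} (hr : 0 < r) (hr1 : r < 1) :
    Tendsto (fun n => Af W π r n) atTop (𝓝 (1 / ((1 - r ^ 2) * (P r).re))) := by
  set p := (P r).re with hp
  have hp0 : 0 < p := h.re_pos hr hr1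
  have hr2 : 0 < 1 - r ^ 2 := by nlinarith
  have hpr := h.lim_pr hr hr1
  have hpr1 := (tendsto_add_atTop_iff_nat 1).2 hpr
  set L := 1 / ((1 - r ^ 2) * p) with hL
  set κ : ℕ → ℝ := fun n => 16 * r ^ 2 * (nu W π (n + 1) / nu W π n) * pr π n r / pr π (n + 1) r
  have hκ : Tendsto κ atTop (𝓝 (r ^ 2)) := by
    have := ((h.nu_ratio.const_mul (16 * r ^ 2)).mul hpr).div hpr1 hp0.ne'
    have h2 : 16 * r ^ 2 * (1 / 16) * p / p = r ^ 2 := by field_simp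
    rw [h2] at this
    exact this
  have hrec : ∀ n, Af W π r n = 1 / pr π (n + 1) r + κ n * Af W π r (n + 1) := by
    intro n
    have hw := wronskian h.wt h.ops hr hr1 n
    have h1 := (h.wt.nu_pos h.ops n).ne'
    have h2 := (h.wt.nu_pos h.ops (n + 1)).ne'
    have h3 := (h.ops.eval_pos h.wt hr hr1 (n + 1)).ne'
    have h4 := (h.ops.eval_pos h.wt hr hr1 n).ne'
    simp only [κ]
    unfold Af pr
    rw [pow_succ]
    field_simp at hw ⊢
    linear_combination 4 * hw
  have he : Tendsto (fun n => Af W π r n - L) atTop (𝓝 0) := by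
    refine backward (B := 2 / (p * (1 - r) ^ 2) + L) (q := (1 + r ^ 2) / 2)
      (δ := fun n => 1 / pr π (n + 1) r - L + κ n * L) (κ := κ) (by positivity) (by nlinarith) ?_ ?_ ?_ ?_
    · have h1 : ∀ᶠ n in atTop, p / 2 < pr π n r := hpr.eventually (lt_mem_nhds (by linarith))
      filter_upwards [h1] with n hn
      have h2 := hf_mul_le h.wt h.ops hr hr1 n
      have hnu := h.wt.nu_pos h.ops n
      have hA := Af_pos h hr hr1 n
      have h1r : 0 < 1 - r := by linarith
      have h3 : pr π n r * Af W π r n ≤ 1 / (1 - r) ^ 2 := by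
        have : pr π n r * Af W π r n = ((π n).eval (zf r) * hf W π r n) / nu W π n := by
          unfold pr Af; field_simp
        rw [this, div_le_iff₀ hnu]
        calc _ ≤ _ := h2
          _ = _ := by ring
      have h4 : Af W π r n ≤ 2 / (p * (1 - r) ^ 2) := by
        rw [le_div_iff₀ (by positivity)]
        rw [le_div_iff₀ (by positivity)] at h3
        have := mul_le_mul_of_nonneg_right hn.le (mul_nonneg hA.le (sq_nonneg (1 - r)))
        nlinarith
      have hL0 : 0 < L := by rw [hL]; positivity
      rw [abs_le]
      constructor
      · have : 0 < 2 / (p * (1 - r) ^ 2) := by positivity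
        linarith
      · linarith
    · intro n
      rw [hrec n]; ring
    · have h1 := ((tendsto_const_nhds (x := (1 : ℝ))).div hpr1 hp0.ne').sub_const L
      have h2 := h1.add (hκ.mul_const L)
      have h3 : 1 / p - L + r ^ 2 * L = 0 := by
        rw [hL]; field_simp; ring
      rw [h3] at h2
      exact h2
    · have h1 : ∀ᶠ n in atTop, κ n < (1 + r ^ 2) / 2 := hκ.eventually (gt_mem_nhds (by linarith))
      filter_upwards [h1] with n hn
      have : 0 ≤ κ n := by
        have h2 := h.wt.nu_pos h.ops n
        have h3 := h.wt.nu_pos h.ops (n + 1)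
        have h4 := h.pr_pos hr hr1 n
        have h5 := h.pr_pos hr hr1 (n + 1)
        positivity
      rw [abs_of_nonneg this]; exact hn.le
  simpa using he.add_const L

lemma hf_ratio {W π P} (h : Good W π P) {r : ℝ} (hr : 0 < r) (hr1 : r < 1) :
    Tendsto (fun n => hf W π r (n + 1) / hf W π r n) atTop (𝓝 (r / 4)) := by
  have hA := h.lim_Af hr hr1
  have hA1 := (tendsto_add_atTop_iff_nat 1).2 hA
  have hp0 := h.re_pos hr hr1
  have hr2 : 0 < 1 - r ^ 2 := by nlinarith
  have hne : 1 / ((1 - r ^ 2) * (P r).re) ≠ 0 := by positivity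
  have h1 := ((hA1.div hA hne).mul h.nu_ratio).const_mul (4 * r)
  rw [div_self hne] at h1
  have h2 : 4 * r * (1 * (1 / 16)) = r / 4 := by ring
  rw [h2] at h1
  refine h1.congr fun n => ?_
  have h3 := (h.wt.nu_pos h.ops n).ne'
  have h4 := (h.wt.nu_pos h.ops (n + 1)).ne'
  have h5 := (hf_pos h.wt h.ops hr hr1 n).ne'
  simp only [Pi.div_apply]
  unfold Af
  rw [pow_succ]
  field_simp

lemma ger_Pf (W : unitInterval → ℝ) (π : ℕ → ℝ[X]) (r : ℝ) (n : ℕ) (z : ℂ) :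
    Pf (ger W π r) (n + 1) z
      = Pf π (n + 1) z - 4 * z * ((hf W π r (n + 1) / hf W π r n : ℝ) : ℂ) * Pf π n z := by
  have : ger W π r (n + 1) = π (n + 1) - C (hf W π r (n + 1) / hf W π r n) * π n := rfl
  unfold Pf
  rw [this]
  simp only [map_mul, map_sub, aeval_C, Complex.coe_algebraMap]
  ring

/-- Stability of the exterior asymptotics under `W ↦ W / qf r`. -/
theorem Good.ger {W π P} (h : Good W π P) {r : ℝ} (hr : 0 < r) (hr1 : r < 1) :
    Good (fun s => W s * (qf r s)⁻¹) (ger W π r) (fun z => P z * (1 - z * r)) where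
  wt := h.wt.mul (qf_inv_cont hr hr1) (fun s => inv_pos.2 (qf_pos hr hr1 s))
  ops := ger_OPS h.wt h.ops hr hr1
  cont z hz hz1 := (h.cont z hz hz1).mul (by fun_prop)
  pos x hx hx1 := by
    obtain ⟨p, hp, hP⟩ := h.pos x hx hx1
    refine ⟨p * (1 - x * r), mul_pos hp (by nlinarith), ?_⟩
    simp only [hP]; push_cast; ring
  lim z hz hz1 := by
    have hsnd : Tendsto (fun x : ℕ × ℂ => x.2) (atTop ×ˢ 𝓝 z) (𝓝 z) := tendsto_snd
    have hR : Tendsto (fun x : ℕ × ℂ => ((hf W π r (x.1 + 1) / hf W π r x.1 : ℝ) : ℂ))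
        (atTop ×ˢ 𝓝 z) (𝓝 ((r / 4 : ℝ) : ℂ)) :=
      (Complex.continuous_ofReal.tendsto _).comp ((hf_ratio h hr hr1).comp tendsto_fst)
    have h1 := (h.lim_shift hz hz1).sub (((hsnd.const_mul 4).mul hR).mul (h.lim z hz hz1))
    have hval : P z - 4 * z * ((r / 4 : ℝ) : ℂ) * P z = P z * (1 - z * r) := by
      push_cast; ring
    rw [hval] at h1
    have h2 : Tendsto (fun x : ℕ × ℂ => Pf (WidomArc.ger W π r) (x.1 + 1) x.2) (atTop ×ˢ 𝓝 z)
        (𝓝 (P z * (1 - z * r))) :=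
      h1.congr fun x => (ger_Pf W π r x.1 x.2).symm
    have h3 : Tendsto (fun x : ℕ × ℂ => (x.1 - 1, x.2)) (atTop ×ˢ 𝓝 z) (atTop ×ˢ 𝓝 z) :=
      ((tendsto_sub_atTop_nat 1).comp tendsto_fst).prodMk tendsto_snd
    refine (h2.comp h3).congr' ?_
    have h4 : ∀ᶠ x : ℕ × ℂ in atTop ×ˢ 𝓝 z, 1 ≤ x.1 :=
      tendsto_fst.eventually (eventually_ge_atTop 1)
    filter_upwards [h4] with x hx
    simp only [Function.comp]
    rw [Nat.sub_add_cancel hx]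
  nu_ratio := by
    rw [← tendsto_add_atTop_iff_nat 1]
    have h1 := hf_ratio h hr hr1
    have h2 := (tendsto_add_atTop_iff_nat 1).2 h1
    have hne : r / 4 ≠ 0 := by positivity
    have h3 := (h2.div h1 hne).mul h.nu_ratio
    rw [div_self hne, one_mul] at h3
    refine h3.congr fun n => ?_
    have p0 := (hf_pos h.wt h.ops hr hr1 n).ne'
    have p1 := (hf_pos h.wt h.ops hr hr1 (n + 1)).ne'
    rw [ger_nu_succ h.wt.cont h.ops hr hr1 p1, ger_nu_succ h.wt.cont h.ops hr hr1 p0]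
    have := (h.wt.nu_pos h.ops n).ne'
    simp only [Pi.div_apply]
    field_simp

/-- Change of the Hankel determinants under `W ↦ W / qf r`. -/
theorem Good.ger_lim {W π P} (h : Good W π P) {r : ℝ} (hr : 0 < r) (hr1 : r < 1) :
    Tendsto (fun n => Zn (fun s => W s * (qf r s)⁻¹) n / Zn W n) atTop
      (𝓝 (1 / ((1 - r ^ 2) * (P r).re))) := by
  rw [← tendsto_add_atTop_iff_nat 1]
  refine (h.lim_Af hr hr1).congr fun n => ?_
  rw [Zn_OPS h.wt h.ops, Zn_OPS (h.ger hr hr1).wt (h.ger hr hr1).ops,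
    ger_prod h.wt h.ops hr hr1]
  have := Finset.prod_pos fun k (_ : k ∈ Finset.range (n + 1)) => h.wt.nu_pos h.ops k
  have h2 : ((n + 1).factorial : ℝ) ≠ 0 := by positivity
  field_simp

/-! ### Products of factors and their square roots -/

/-- Integration of `f` against the signed discrete measure `∑ τᵢ δ_{rᵢ}` encoded by a list of pairs
`(rᵢ, τᵢ)`. -/
def Sl (L : List (ℝ × ℝ)) (f : ℝ → ℝ) : ℝ := (L.map fun p => p.2 * f p.1).sum

@[simp] lemma Sl_nil (f : ℝ → ℝ) : Sl [] f = 0 := rfl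

@[simp] lemma Sl_cons (p : ℝ × ℝ) (L : List (ℝ × ℝ)) (f : ℝ → ℝ) :
    Sl (p :: L) f = p.2 * f p.1 + Sl L f := by simp [Sl]

lemma Sl_append (L M : List (ℝ × ℝ)) (f : ℝ → ℝ) : Sl (L ++ M) f = Sl L f + Sl M f := by
  simp [Sl]

lemma Sl_add (L : List (ℝ × ℝ)) (f g : ℝ → ℝ) : Sl L (fun x => f x + g x) = Sl L f + Sl L g := by
  induction L with
  | nil => simp
  | cons p L ih => rw [Sl_cons, Sl_cons, Sl_cons, ih]; ring

lemma Sl_const_mul (L : List (ℝ × ℝ)) (c : ℝ) (f : ℝ → ℝ) :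
    Sl L (fun x => c * f x) = c * Sl L f := by
  induction L with
  | nil => simp
  | cons p L ih => rw [Sl_cons, Sl_cons, ih]; ring

lemma Sl_congr {L : List (ℝ × ℝ)} {f g : ℝ → ℝ} (h : ∀ p ∈ L, f p.1 = g p.1) : Sl L f = Sl L g := by
  unfold Sl
  rw [List.map_congr_left]
  intro p hp
  rw [h p hp]

lemma Sl_hasSum {L : List (ℝ × ℝ)} {f : ℕ → ℝ → ℝ} {F : ℝ → ℝ}
    (h : ∀ p ∈ L, HasSum (fun k => f k p.1) (F p.1)) : HasSum (fun k => Sl L (f k)) (Sl L F) := by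
  induction L with
  | nil => simp [hasSum_zero]
  | cons p L ih =>
    simp only [Sl_cons]
    exact ((h p (by simp)).mul_left _).add (ih fun q hq => h q (by simp [hq]))

/-- The kernel `-log (1 - x y)`. -/
noncomputable def Gk (x y : ℝ) : ℝ := -Real.log (1 - x * y)

lemma Gk_comm (x y : ℝ) : Gk x y = Gk y x := by unfold Gk; rw [mul_comm]

/-- Lists with nodes in `(0, 1)` and signs `±1`. -/
def Adm (L : List (ℝ × ℝ)) : Prop := ∀ p ∈ L, 0 < p.1 ∧ p.1 < 1 ∧ (p.2 = 1 ∨ p.2 = -1)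

/-- The quadratic form with kernel `Gk`. -/
noncomputable def Bq (L : List (ℝ × ℝ)) : ℝ := Sl L fun x => Sl L (Gk x)

lemma Bq_cons (p : ℝ × ℝ) (L : List (ℝ × ℝ)) :
    Bq (p :: L) = p.2 ^ 2 * Gk p.1 p.1 + 2 * p.2 * Sl L (Gk p.1) + Bq L := by
  unfold Bq
  simp only [Sl_cons]
  rw [Sl_add, Sl_const_mul]
  have : Sl L (fun x => Gk x p.1) = Sl L (Gk p.1) := Sl_congr fun q _ => Gk_comm _ _
  rw [this]; ring

/-- The quadratic form `Bq` is diagonal in the power sums. -/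
lemma Bq_hasSum {L : List (ℝ × ℝ)} (hL : Adm L) :
    HasSum (fun k : ℕ => (Sl L fun x => x ^ (k + 1)) ^ 2 / (k + 1)) (Bq L) := by
  have h1 : ∀ p ∈ L, HasSum (fun k : ℕ => p.1 ^ (k + 1) * (Sl L fun y => y ^ (k + 1)) / (k + 1))
      (Sl L (Gk p.1)) := by
    intro p hp
    have h2 : ∀ q ∈ L, HasSum (fun k : ℕ => (p.1 * q.1) ^ (k + 1) / (k + 1)) (Gk p.1 q.1) := by
      intro q hq
      apply Real.hasSum_pow_div_log_of_abs_lt_one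
      rw [abs_of_pos (mul_pos (hL p hp).1 (hL q hq).1)]
      nlinarith [(hL p hp).1, (hL p hp).2.1, (hL q hq).1, (hL q hq).2.1]
    refine (Sl_hasSum (f := fun k y => (p.1 * y) ^ (k + 1) / (k + 1)) h2).congr_fun ?_
    intro k
    rw [mul_div_right_comm, ← Sl_const_mul]
    congr 1; ext y; rw [mul_pow]; ring
  refine (Sl_hasSum (f := fun k x => x ^ (k + 1) * (Sl L fun y => y ^ (k + 1)) / (k + 1)) h1).congr_fun ?_
  intro k
  have : (fun x : ℝ => x ^ (k + 1) * (Sl L fun y => y ^ (k + 1)) / ((k : ℝ) + 1))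
    = fun x => ((Sl L fun y => y ^ (k + 1)) / ((k : ℝ) + 1)) * x ^ (k + 1) := by
    ext x; ring
  rw [this, Sl_const_mul]; ring

/-- The linear part of the limiting free energy. -/
noncomputable def lamP (P : ℂ → ℂ) (r : ℝ) : ℝ := Real.log (P r).re - Gk r r / 2

/-- The limiting free energy of the factor `∏ (qf rᵢ)^{τᵢ}`. -/
noncomputable def Lam (P : ℂ → ℂ) (L : List (ℝ × ℝ)) : ℝ := Sl L (lamP P) + Bq L / 2

/-- The exponent of `∏ (qf rᵢ)^{τᵢ}`. -/
noncomputable def aL (L : List (ℝ × ℝ)) (s : unitInterval) : ℝ :=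
  Sl L fun x => Real.log (qf x s)

/-- The property `Good` and the limit of the relative free energy for a finite product of factors
`(qf rᵢ)^{±1}`, by applying one Christoffel or Geronimus transform per factor. -/
lemma list_good {W π P} (h : Good W π P) (L : List (ℝ × ℝ)) (hL : Adm L) :
    ∃ π' P', Good (fun s => W s * Real.exp (aL L s)) π' P' ∧
      (∀ x : ℝ, 0 < x → x < 1 → Real.log (P' x).re = Real.log (P x).re + Sl L (Gk x)) ∧
      Tendsto (fun n => hn W n (aL L) - Real.log (Zn W n)) atTop (𝓝 (Lam P L)) := by
  induction L with
  | nil =>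
    have h0 : (fun s => W s * Real.exp (aL [] s)) = W := by ext s; simp [aL]
    refine ⟨π, P, by rwa [h0], by simp, ?_⟩
    simp only [hn, h0]
    simp [Lam, Bq]
  | cons p L ih =>
    obtain ⟨r, τ⟩ := p
    obtain ⟨π', P', h1, h2, h3⟩ := ih fun q hq => hL q (by simp [hq])
    obtain ⟨hr, hr1, hτ⟩ := hL (r, τ) (by simp)
    simp only at hr hr1 hτ
    have hP' := h1.re_pos hr hr1
    have hlim : ∀ {V : unitInterval → ℝ} {π'' P''} {l : ℝ}, Good V π'' P'' →
        V = (fun s => W s * Real.exp (aL ((r, τ) :: L) s)) → 0 < l →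
        Tendsto (fun n => Zn V n / Zn (fun s => W s * Real.exp (aL L s)) n) atTop (𝓝 l) →
        Tendsto (fun n => hn W n (aL ((r, τ) :: L)) - Real.log (Zn W n)) atTop
          (𝓝 (Lam P L + Real.log l)) := by
      intro V π'' P'' l hg hV hl ht
      have h4 := h3.add (((Real.continuousAt_log hl.ne').tendsto).comp ht)
      refine h4.congr fun n => ?_
      simp only [Function.comp]
      rw [Real.log_div (Zn_pos hg.wt hg.ops n).ne' (Zn_pos h1.wt h1.ops n).ne']
      unfold hn
      rw [← hV]; ring
    have hG : 1 - r * r > 0 := by nlinarith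
    rcases hτ with rfl | rfl
    · have hV : (fun s => W s * Real.exp (aL L s) * qf r s)
          = fun s => W s * Real.exp (aL ((r, 1) :: L) s) := by
        ext s
        simp only [aL, Sl_cons, one_mul]
        rw [Real.exp_add, Real.exp_log (qf_pos hr hr1 s)]; ring
      refine ⟨_, _, hV ▸ h1.chr hr hr1, ?_, ?_⟩
      · intro x hx hx1
        have hx2 : 0 < 1 - x * r := by nlinarith
        have hc : P' x / (1 - x * r) = (((P' x).re / (1 - x * r) : ℝ) : ℂ) := by
          obtain ⟨p, hp, hpp⟩ := h1.pos x hx hx1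
          rw [hpp]; push_cast; simp
        rw [hc, Complex.ofReal_re, Real.log_div (h1.re_pos hx hx1).ne' hx2.ne', h2 x hx hx1]
        simp only [Sl_cons, Gk]; ring
      · have := hlim (h1.chr hr hr1) hV hP' (h1.chr_lim hr hr1)
        refine this.trans_eq ?_
        congr 1
        rw [h2 r hr hr1]
        simp only [Lam, Bq_cons, Sl_cons, lamP]; ring
    · have hV : (fun s => W s * Real.exp (aL L s) * (qf r s)⁻¹)
          = fun s => W s * Real.exp (aL ((r, -1) :: L) s) := by
        ext s
        simp only [aL, Sl_cons, neg_mul, one_mul]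
        rw [Real.exp_add, Real.exp_neg, Real.exp_log (qf_pos hr hr1 s)]; ring
      refine ⟨_, _, hV ▸ h1.ger hr hr1, ?_, ?_⟩
      · intro x hx hx1
        have hx2 : 0 < 1 - x * r := by nlinarith
        have hc : P' x * (1 - x * r) = (((P' x).re * (1 - x * r) : ℝ) : ℂ) := by
          obtain ⟨p, hp, hpp⟩ := h1.pos x hx hx1
          rw [hpp]; push_cast; simp
        rw [hc, Complex.ofReal_re, Real.log_mul (h1.re_pos hx hx1).ne' hx2.ne', h2 x hx hx1]
        simp only [Sl_cons, Gk]; ring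
      · have hr2 : 0 < 1 - r ^ 2 := by nlinarith
        have := hlim (h1.ger hr hr1) hV (by positivity) (h1.ger_lim hr hr1)
        refine this.trans_eq ?_
        congr 1
        rw [one_div, Real.log_inv, Real.log_mul hr2.ne' hP'.ne', h2 r hr hr1]
        simp only [Lam, Bq_cons, Sl_cons, lamP, Gk]
        rw [← sq]
        ring

/-- Alternating sums of a nonnegative increasing sequence. -/
lemma alt_sum {D : ℕ → ℝ} (h0 : 0 ≤ D 0) (hD : Monotone D) (m : ℕ) :
    0 ≤ ∑ i ∈ Finset.range m, (D (2 * i + 1) - D (2 * i)) ∧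
      ∑ i ∈ Finset.range m, (D (2 * i + 1) - D (2 * i)) ≤ D (2 * m) := by
  constructor
  · exact Finset.sum_nonneg fun i _ => sub_nonneg.2 (hD (by omega))
  · induction m with
    | zero => simpa using h0
    | succ m ih =>
      rw [Finset.sum_range_succ]
      have := hD (show 2 * m + 1 ≤ 2 * (m + 1) by omega)
      linarith

/-- Alternating list `τ ∑_{j ≤ 2M} (-1)^j δ_{r j / 2M}` approximating `(τ/2) δ_r`. -/
noncomputable def vL (r τ : ℝ) (N : ℕ) : ℕ → List (ℝ × ℝ)
  | 0 => []
  | m + 1 => (r * ((2 * m + 2 : ℕ) / N), τ) :: (r * ((2 * m + 1 : ℕ) / N), -τ) :: vL r τ N m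

lemma vL_S (r τ : ℝ) (N : ℕ) (m : ℕ) (f : ℝ → ℝ) :
    Sl (vL r τ N m) f = τ * ∑ i ∈ Finset.range m,
      (f (r * ((2 * i + 2 : ℕ) / N)) - f (r * ((2 * i + 1 : ℕ) / N))) := by
  induction m with
  | zero => simp [vL]
  | succ m ih =>
    rw [vL, Sl_cons, Sl_cons, ih, Finset.sum_range_succ]; ring

lemma vL_adm {r τ : ℝ} (hr : 0 < r) (hr1 : r < 1) (hτ : τ = 1 ∨ τ = -1) {N m : ℕ}
    (hm : 2 * m ≤ N) : Adm (vL r τ N m) := by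
  induction m with
  | zero => intro p hp; simp [vL] at hp
  | succ m ih =>
    have key : ∀ j : ℕ, 0 < j → j ≤ N → 0 < r * ((j : ℝ) / N) ∧ r * ((j : ℝ) / N) < 1 := by
      intro j hj hjN
      have h1 : (0 : ℝ) < j := by exact_mod_cast hj
      have h2 : (j : ℝ) ≤ N := by exact_mod_cast hjN
      have h3 : (0 : ℝ) < N := by linarith
      refine ⟨by positivity, ?_⟩
      have h4 : (j : ℝ) / N ≤ 1 := (div_le_one h3).2 h2
      have h5 : (0 : ℝ) < j / N := by positivity
      nlinarith
    intro p hp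
    rw [vL, List.mem_cons, List.mem_cons] at hp
    rcases hp with rfl | rfl | hp
    · have := key (2 * m + 2) (by omega) (by omega)
      exact ⟨this.1, this.2, hτ⟩
    · have := key (2 * m + 1) (by omega) (by omega)
      refine ⟨this.1, this.2, ?_⟩
      rcases hτ with rfl | rfl <;> simp
    · exact ih (by omega) p hp

/-- The power sums of the alternating list approximate those of `(τ/2) δ_r`, with a uniform bound: an
alternating sum of the convex sequence `(j / 2M)^(k+1)` is half of its last term up to its largest
increment. -/
lemma vL_pow (r τ : ℝ) (M : ℕ) (hM : 0 < M) (k : ℕ) :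
    ∃ c : ℝ, Sl (vL r τ (2 * M) M) (fun x => x ^ (k + 1)) = τ * r ^ (k + 1) * c ∧ 0 ≤ c ∧ c ≤ 1 ∧
      |c - 1 / 2| ≤ (1 + 1 / (2 * M : ℝ)) ^ (k + 1) - 1 := by
  set D : ℕ → ℝ := fun j => (((j + 1 : ℕ) : ℝ) / ((2 * M : ℕ) : ℝ)) ^ (k + 1)
    - ((j : ℝ) / ((2 * M : ℕ) : ℝ)) ^ (k + 1) with hDdef
  have hM0 : (0 : ℝ) < ((2 * M : ℕ) : ℝ) := by exact_mod_cast (by omega : 0 < 2 * M)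
  have hDmono : Monotone D := by
    refine monotone_nat_of_le_succ fun j => ?_
    have := (convexOn_pow (k + 1) (𝕜 := ℝ)).2
      (show ((j : ℝ) / ((2 * M : ℕ) : ℝ)) ∈ Set.Ici (0 : ℝ) from by simp only [Set.mem_Ici]; positivity)
      (show (((j + 1 + 1 : ℕ) : ℝ) / ((2 * M : ℕ) : ℝ)) ∈ Set.Ici (0 : ℝ) from by
        simp only [Set.mem_Ici]; positivity)
      (show (0 : ℝ) ≤ 1 / 2 by norm_num) (show (0 : ℝ) ≤ 1 / 2 by norm_num) (by norm_num)
    simp only [smul_eq_mul] at this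
    have e : (1 : ℝ) / 2 * ((j : ℝ) / ((2 * M : ℕ) : ℝ))
      + 1 / 2 * (((j + 1 + 1 : ℕ) : ℝ) / ((2 * M : ℕ) : ℝ))
      = (((j + 1 : ℕ) : ℝ) / ((2 * M : ℕ) : ℝ)) := by push_cast; ring
    rw [e] at this
    simp only [hDdef]
    linarith
  have hD0 : ∀ j, 0 ≤ D j := by
    intro j
    refine sub_nonneg.2 (pow_le_pow_left₀ (by positivity) ?_ _)
    gcongr; omega
  have hsum : ∑ j ∈ Finset.range (2 * M), D j = 1 := by
    have := Finset.sum_range_sub (fun j : ℕ => ((j : ℝ) / ((2 * M : ℕ) : ℝ)) ^ (k + 1)) (2 * M)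
    simp only [hDdef]
    rw [this, div_self hM0.ne']; simp
  have hsplit : ∀ m, ∑ j ∈ Finset.range (2 * m), D j
      = ∑ i ∈ Finset.range m, D (2 * i) + ∑ i ∈ Finset.range m, D (2 * i + 1) := by
    intro m
    induction m with
    | zero => simp
    | succ m ih =>
      rw [show 2 * (m + 1) = 2 * m + 1 + 1 by ring, Finset.sum_range_succ, Finset.sum_range_succ, ih,
        Finset.sum_range_succ, Finset.sum_range_succ]; ring
  have halt := alt_sum (hD0 0) hDmono M
  rw [Finset.sum_sub_distrib] at halt
  have h1 := hsplit M
  rw [hsum] at h1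
  have p1 : 0 ≤ ∑ i ∈ Finset.range M, D (2 * i) := Finset.sum_nonneg fun i _ => hD0 _
  have p2 : 0 ≤ ∑ i ∈ Finset.range M, D (2 * i + 1) := Finset.sum_nonneg fun i _ => hD0 _
  refine ⟨∑ i ∈ Finset.range M, D (2 * i + 1), ?_, p2, by linarith, ?_⟩
  · rw [vL_S, mul_assoc τ]
    congr 1
    rw [Finset.mul_sum]
    refine Finset.sum_congr rfl fun i _ => ?_
    simp only [hDdef]
    rw [mul_pow, mul_pow, mul_sub]
  · have h2 : D (2 * M) = (1 + 1 / (2 * M : ℝ)) ^ (k + 1) - 1 := by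
      simp only [hDdef]
      rw [div_self hM0.ne', one_pow]
      congr 2
      push_cast at hM0 ⊢
      field_simp
    rw [← h2, abs_le]
    constructor <;> linarith [hD0 (2 * M), halt.1, halt.2]

/-- Convergence of the quadratic form along the lists with power sums `α vL + β τ δ_r`. -/
lemma Bq_lim (r τ : ℝ) (hr : 0 < r) (hr1 : r < 1) (hτ : τ = 1 ∨ τ = -1) (α β : ℝ)
    (L : ℕ → List (ℝ × ℝ)) (hL : ∀ M, 0 < M → Adm (L M))
    (hS : ∀ M k, Sl (L M) (fun x => x ^ (k + 1))
      = α * Sl (vL r τ (2 * M) M) (fun x => x ^ (k + 1)) + β * (τ * r ^ (k + 1))) :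
    Tendsto (fun M => Bq (L M)) atTop (𝓝 ((α / 2 + β) ^ 2 * Gk r r)) := by
  have hτ2 : τ ^ 2 = 1 := by rcases hτ with rfl | rfl <;> norm_num
  choose! c hc1 hc2 hc3 hc4 using
    fun (M : ℕ) (hM : 0 < M) (k : ℕ) => vL_pow r τ M hM k
  have hG : HasSum (fun k : ℕ => (α / 2 + β) ^ 2 * ((r * r) ^ (k + 1) / (k + 1)))
      ((α / 2 + β) ^ 2 * Gk r r) := by
    refine HasSum.mul_left ((α / 2 + β) ^ 2) ?_
    apply Real.hasSum_pow_div_log_of_abs_lt_one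
    rw [abs_of_pos (by positivity)]; nlinarith
  have hbs : Summable fun k : ℕ => (|α| + |β|) ^ 2 * (r * r) ^ k :=
    (summable_geometric_of_lt_one (by positivity) (by nlinarith)).mul_left _
  have key := tendsto_tsum_of_dominated_convergence
    (f := fun (M : ℕ) (k : ℕ) => (Sl (L M) fun x => x ^ (k + 1)) ^ 2 / ((k : ℝ) + 1))
    (g := fun k : ℕ => (α / 2 + β) ^ 2 * ((r * r) ^ (k + 1) / (k + 1))) (𝓕 := atTop) hbs ?_ ?_
  · rw [hG.tsum_eq] at key
    refine key.congr' ?_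
    filter_upwards [eventually_gt_atTop 0] with M hM
    exact (Bq_hasSum (hL M hM)).tsum_eq
  · intro k
    have h1 : Tendsto (fun M : ℕ => c M k) atTop (𝓝 (1 / 2)) := by
      rw [tendsto_iff_dist_tendsto_zero]
      have h2 : Tendsto (fun M : ℕ => (1 + 1 / (2 * M : ℝ)) ^ (k + 1) - 1) atTop (𝓝 0) := by
        have h3 : Tendsto (fun M : ℕ => 1 / (2 * M : ℝ)) atTop (𝓝 0) := by
          have := (tendsto_one_div_atTop_nhds_zero_nat (𝕜 := ℝ)).const_mul (1 / 2)
          simp only [mul_zero] at this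
          refine this.congr fun M => ?_
          ring
        have := ((h3.const_add 1).pow (k + 1)).sub_const 1
        simpa using this
      refine squeeze_zero' (Eventually.of_forall fun _ => dist_nonneg) ?_ h2
      filter_upwards [eventually_gt_atTop 0] with M hM
      exact hc4 M hM k
    have h4 : Tendsto (fun M : ℕ => (α * (τ * r ^ (k + 1) * c M k) + β * (τ * r ^ (k + 1))) ^ 2
        / ((k : ℝ) + 1)) atTop
        (𝓝 ((α * (τ * r ^ (k + 1) * (1 / 2)) + β * (τ * r ^ (k + 1))) ^ 2 / ((k : ℝ) + 1))) :=
      ((((h1.const_mul _).const_mul _).add_const _).pow 2).div_const _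
    have h5 : (α * (τ * r ^ (k + 1) * (1 / 2)) + β * (τ * r ^ (k + 1))) ^ 2 / ((k : ℝ) + 1)
        = (α / 2 + β) ^ 2 * ((r * r) ^ (k + 1) / (k + 1)) := by
      rw [mul_pow]
      linear_combination ((α / 2 + β) ^ 2 * (r ^ (k + 1) * r ^ (k + 1)) / ((k : ℝ) + 1)) * hτ2
    rw [h5] at h4
    refine h4.congr' ?_
    filter_upwards [eventually_gt_atTop 0] with M hM
    rw [hS, hc1 M hM k]
  · filter_upwards [eventually_gt_atTop 0] with M hM k
    rw [hS, hc1 M hM k, Real.norm_eq_abs, abs_of_nonneg (by positivity)]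
    have h1 : (α * (τ * r ^ (k + 1) * c M k) + β * (τ * r ^ (k + 1))) ^ 2
        = (α * c M k + β) ^ 2 * (r * r) ^ (k + 1) := by
      rw [mul_pow r r]
      linear_combination ((α * c M k + β) ^ 2 * (r ^ (k + 1) * r ^ (k + 1))) * hτ2
    rw [h1]
    have h2 : (α * c M k + β) ^ 2 ≤ (|α| + |β|) ^ 2 := by
      rw [← sq_abs (α * c M k + β)]
      refine pow_le_pow_left₀ (abs_nonneg _) ?_ 2
      refine (abs_add_le _ _).trans ?_
      rw [abs_mul, abs_of_nonneg (hc2 M hM k)]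
      have := mul_le_mul_of_nonneg_left (hc3 M hM k) (abs_nonneg α)
      linarith
    have h3 : (r * r) ^ (k + 1) ≤ (r * r) ^ k :=
      pow_le_pow_of_le_one (by positivity) (by nlinarith) (by omega)
    have hk : (0 : ℝ) ≤ k := by positivity
    rw [div_le_iff₀ (by positivity)]
    have h4 : (α * c M k + β) ^ 2 * (r * r) ^ (k + 1) ≤ (|α| + |β|) ^ 2 * (r * r) ^ k :=
      mul_le_mul h2 h3 (by positivity) (by positivity)
    have h5 : 0 ≤ (|α| + |β|) ^ 2 * (r * r) ^ k := by positivity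
    nlinarith [mul_nonneg h5 hk]

lemma aL_cont {L : List (ℝ × ℝ)} (hL : Adm L) : Continuous (aL L) := by
  induction L with
  | nil =>
    have : aL [] = fun _ => 0 := by ext s; simp [aL]
    rw [this]; exact continuous_const
  | cons p L ih =>
    have h1 := ih fun q hq => hL q (by simp [hq])
    have h2 := hL p (by simp)
    have : aL (p :: L) = fun s => p.2 * Real.log (qf p.1 s) + aL L s := by
      ext s; simp [aL]
    rw [this]
    exact (continuous_const.mul ((qf_cont p.1).log fun s => (qf_pos h2.1 h2.2.1 s).ne')).add h1

/-- Asymptotics of the free energy of the factor `(qf r)^{τ/2}`, `τ = ±1`, obtained by squeezing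
with the convexity of the free energy between integer exponents. -/
theorem half_lim {W π P} (h : Good W π P) {r τ : ℝ} (hr : 0 < r) (hr1 : r < 1)
    (hτ : τ = 1 ∨ τ = -1) :
    Tendsto (fun n => hn W n (fun s => τ / 2 * Real.log (qf r s)) - Real.log (Zn W n)) atTop
      (𝓝 (τ / 2 * lamP P r + Gk r r / 8)) := by
  have hc : Continuous fun s => τ / 2 * Real.log (qf r s) :=
    continuous_const.mul ((qf_cont r).log fun s => (qf_pos hr hr1 s).ne')
  have hτ' : -τ = 1 ∨ -τ = -1 := by rcases hτ with rfl | rfl <;> simp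
  -- `v M` approximates half of `τ δ_r`, and `v2 M = τ δ_r - v M` is the complementary half, so the
  -- half power is the midpoint of the two: an upper bound by convexity. With
  -- `v3 M = 3 v M - τ δ_r`, the point `v M` divides the segment from the half power to `v3 M` in the
  -- ratio `1 : 2`, which gives a lower bound.
  set v : ℕ → List (ℝ × ℝ) := fun M => vL r τ (2 * M) M with hv
  set v2 : ℕ → List (ℝ × ℝ) := fun M => (r, τ) :: vL r (-τ) (2 * M) M with hv2
  set v3 : ℕ → List (ℝ × ℝ) := fun M => (r, -τ) :: (v M ++ (v M ++ v M)) with hv3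
  have av : ∀ M, Adm (v M) := fun M => vL_adm hr hr1 hτ le_rfl
  have av2 : ∀ M, Adm (v2 M) := by
    intro M p hp
    rw [List.mem_cons] at hp
    rcases hp with rfl | hp
    · exact ⟨hr, hr1, hτ⟩
    · exact vL_adm hr hr1 hτ' le_rfl p hp
  have av3 : ∀ M, Adm (v3 M) := by
    intro M p hp
    simp only [hv3, List.mem_cons, List.mem_append] at hp
    rcases hp with rfl | hp | hp | hp
    · exact ⟨hr, hr1, hτ'⟩
    · exact av M p hp
    · exact av M p hp
    · exact av M p hp
  have s2 : ∀ M f, Sl (v2 M) f = τ * f r - Sl (v M) f := by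
    intro M f
    simp only [hv2, hv, Sl_cons, vL_S]; ring
  have s3 : ∀ M f, Sl (v3 M) f = 3 * Sl (v M) f - τ * f r := by
    intro M f
    simp only [hv3, Sl_cons, Sl_append]; ring
  have b1 : Tendsto (fun M => Bq (v M)) atTop (𝓝 ((1 / 2 + 0) ^ 2 * Gk r r)) :=
    Bq_lim r τ hr hr1 hτ 1 0 v (fun M _ => av M) (fun M k => by simp [hv])
  have b2 : Tendsto (fun M => Bq (v2 M)) atTop (𝓝 ((-1 / 2 + 1) ^ 2 * Gk r r)) :=
    Bq_lim r τ hr hr1 hτ (-1) 1 v2 (fun M _ => av2 M) (fun M k => by rw [s2]; ring)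
  have b3 : Tendsto (fun M => Bq (v3 M)) atTop (𝓝 ((3 / 2 + -1) ^ 2 * Gk r r)) :=
    Bq_lim r τ hr hr1 hτ 3 (-1) v3 (fun M _ => av3 M) (fun M k => by rw [s3]; ring)
  have hZ := fun n => Zn_pos h.wt h.ops n
  rw [Metric.tendsto_nhds]
  intro ε hε
  have u1 : Tendsto (fun M => 1 / 2 * Lam P (v M) + 1 / 2 * Lam P (v2 M)) atTop
      (𝓝 (τ / 2 * lamP P r + Gk r r / 8)) := by
    have := ((b1.add b2).const_mul (1 / 4)).const_add (τ / 2 * lamP P r)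
    refine (this.congr fun M => ?_).trans_eq ?_
    · simp only [Lam, s2]; ring
    · congr 1; ring
  have u2 : Tendsto (fun M => 3 / 2 * Lam P (v M) - 1 / 2 * Lam P (v3 M)) atTop
      (𝓝 (τ / 2 * lamP P r + Gk r r / 8)) := by
    have := ((b1.const_mul (3 / 4)).sub (b3.const_mul (1 / 4))).const_add (τ / 2 * lamP P r)
    refine (this.congr fun M => ?_).trans_eq ?_
    · simp only [Lam, s3]; ring
    · congr 1; ring
  obtain ⟨M, hM1, hM2⟩ := ((u1.eventually (gt_mem_nhds
    (show τ / 2 * lamP P r + Gk r r / 8 < τ / 2 * lamP P r + Gk r r / 8 + ε by linarith))).and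
    (u2.eventually (lt_mem_nhds
    (show τ / 2 * lamP P r + Gk r r / 8 - ε < τ / 2 * lamP P r + Gk r r / 8 by linarith)))).exists
  obtain ⟨-, -, -, -, l1⟩ := list_good h (v M) (av M)
  obtain ⟨-, -, -, -, l2⟩ := list_good h (v2 M) (av2 M)
  obtain ⟨-, -, -, -, l3⟩ := list_good h (v3 M) (av3 M)
  have w1 := ((l1.const_mul (1 / 2)).add (l2.const_mul (1 / 2))).eventually (gt_mem_nhds hM1)
  have w2 := ((l1.const_mul (3 / 2)).sub (l3.const_mul (1 / 2))).eventually (lt_mem_nhds hM2)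
  filter_upwards [w1, w2] with n hn1 hn2
  have c1 := hn_convex h.wt (hZ n) (aL_cont (av M)) (aL_cont (av2 M)) (l := 1 / 2)
    (by norm_num) (by norm_num)
  have c2 := hn_convex h.wt (hZ n) hc (aL_cont (av3 M)) (l := 1 / 3) (by norm_num) (by norm_num)
  have e1 : (fun s => (1 - 1 / 2) * aL (v M) s + 1 / 2 * aL (v2 M) s)
      = fun s => τ / 2 * Real.log (qf r s) := by
    ext s; simp only [aL, s2]; ring
  have e2 : (fun s => (1 - 1 / 3) * (τ / 2 * Real.log (qf r s)) + 1 / 3 * aL (v3 M) s)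
      = aL (v M) := by
    ext s; simp only [aL, s3]; ring
  rw [e1] at c1
  rw [e2] at c2
  rw [Real.dist_eq, abs_lt]
  constructor <;> linarith

lemma unit_integral (g : ℝ → ℝ) : ∫ s : unitInterval, g s = ∫ s in (0 : ℝ)..1, g s := by
  have h := unitInterval.measurePreserving_coe.integral_comp
    (MeasurableEmbedding.subtype_coe measurableSet_Icc) g
  rw [h, intervalIntegral.integral_of_le zero_le_one, integral_Icc_eq_integral_Ioc]

lemma wt_pow (e : ℕ) : Wt (fun s : unitInterval => (s : ℝ) ^ (2 * e)) where
  cont := by fun_prop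
  nonneg s := by
    have := s.2.1
    positivity
  pos p hp := by
    have h0 : ip (fun s : unitInterval => (s : ℝ) ^ (2 * e)) p p
        = ∫ s in (0 : ℝ)..1, p.eval (s ^ 2) * p.eval (s ^ 2) * s ^ (2 * e) :=
      unit_integral fun s => p.eval (s ^ 2) * p.eval (s ^ 2) * s ^ (2 * e)
    rw [h0]
    refine intervalIntegral.integral_pos zero_lt_one ?_ ?_ ?_
    · have : Continuous fun s : ℝ => p.eval (s ^ 2) := p.continuous.comp (by fun_prop)
      exact ((this.mul this).mul (by fun_prop)).continuousOn
    · intro x hx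
      have := hx.1
      exact mul_nonneg (mul_self_nonneg _) (by positivity)
    · by_contra! hcon
      refine hp (eq_zero_of_infinite_isRoot p ?_)
      refine (Set.Ioc_infinite (zero_lt_one' ℝ)).mono fun u hu => ?_
      have h1 := hcon (√u) ⟨Real.sqrt_nonneg u, by rw [Real.sqrt_le_one]; exact hu.2⟩
      rw [Real.sq_sqrt hu.1.le] at h1
      have h2 : 0 < √u ^ (2 * e) := pow_pos (Real.sqrt_pos.2 hu.1) _
      have h3 : p.eval u * p.eval u ≤ 0 := by
        by_contra! h4
        exact absurd h1 (not_le.2 (mul_pos h4 h2))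
      exact mul_self_eq_zero.1 (le_antisymm h3 (mul_self_nonneg _))

/-! ### Legendre polynomials on `[-1, 1]` -/

/-- Recurrence coefficients of the monic Legendre polynomials. -/
noncomputable def bb (m : ℕ) : ℝ := (m : ℝ) ^ 2 / (4 * (m : ℝ) ^ 2 - 1)

/-- The pairs `(π⁰ₙ, π¹ₙ)` for which `π⁰ₙ(s²)` and `s π¹ₙ(s²)` are the monic Legendre polynomials of
degrees `2n` and `2n+1`. -/
noncomputable def Lg : ℕ → ℝ[X] × ℝ[X]
  | 0 => (1, 1)
  | n + 1 =>
    (X * (Lg n).2 - C (bb (2 * n + 1)) * (Lg n).1,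
      X * (Lg n).2 - C (bb (2 * n + 1)) * (Lg n).1 - C (bb (2 * n + 2)) * (Lg n).2)

/-- Even Legendre polynomials. -/
noncomputable def lg0 (n : ℕ) : ℝ[X] := (Lg n).1

/-- Odd Legendre polynomials. -/
noncomputable def lg1 (n : ℕ) : ℝ[X] := (Lg n).2

lemma lg0_zero : lg0 0 = 1 := rfl
lemma lg1_zero : lg1 0 = 1 := rfl
lemma lg0_succ (n : ℕ) : lg0 (n + 1) = X * lg1 n - C (bb (2 * n + 1)) * lg0 n := rfl
lemma lg1_succ (n : ℕ) : lg1 (n + 1) = lg0 (n + 1) - C (bb (2 * n + 2)) * lg1 n := rfl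

lemma lg_aux (n : ℕ) : ((lg0 n).Monic ∧ (lg0 n).natDegree = n) ∧
    ((lg1 n).Monic ∧ (lg1 n).natDegree = n) := by
  have key : ∀ (p q : ℝ[X]) (c : ℝ) (k : ℕ), p.Monic → p.natDegree = k + 1 → q.natDegree = k →
      (p - C c * q).Monic ∧ (p - C c * q).natDegree = k + 1 := by
    intro p q c k hp hk hq
    have h1 : (C c * q).natDegree < p.natDegree := by
      have := natDegree_C_mul_le c q
      omega
    have h2 : (C c * q).degree < p.degree := degree_lt_degree h1
    exact ⟨hp.sub_of_left h2, by rw [natDegree_sub_eq_left_of_natDegree_lt h1, hk]⟩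
  induction n with
  | zero => simp [lg0_zero, lg1_zero]
  | succ n ih =>
    obtain ⟨⟨h0, d0⟩, h1, d1⟩ := ih
    have a : (lg0 (n + 1)).Monic ∧ (lg0 (n + 1)).natDegree = n + 1 := by
      rw [lg0_succ]
      refine key _ _ _ _ (monic_X.mul h1) ?_ d0
      rw [monic_X.natDegree_mul h1, natDegree_X, d1]; ring
    refine ⟨a, ?_⟩
    rw [lg1_succ]
    exact key _ _ _ _ a.1 a.2 d1

/-- The weight of the even Legendre polynomials in the variable `s²`. -/
def w0 (_ : unitInterval) : ℝ := 1

/-- The weight of the odd Legendre polynomials in the variable `s²`. -/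
def w1 (s : unitInterval) : ℝ := (s : ℝ) ^ 2

lemma wt0 : Wt w0 := by
  have h := wt_pow 0
  simp only [mul_zero, pow_zero] at h
  exact h

lemma wt1 : Wt w1 := wt_pow 1

/-- Moments of the even polynomials. -/
noncomputable def M0 (n a : ℕ) : ℝ := ip w0 (lg0 n) (X ^ a)

/-- Moments of the odd polynomials. -/
noncomputable def M1 (n a : ℕ) : ℝ := ip w1 (lg1 n) (X ^ a)

lemma ip_w0_X (p q : ℝ[X]) : ip w0 (X * p) q = ip w1 p q := by
  unfold ip w0 w1; congr 1; ext s; simp only [eval_mul, eval_X]; ring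

lemma ip_w1_pow (p : ℝ[X]) (a : ℕ) : ip w1 p (X ^ a) = ip w0 p (X ^ (a + 1)) := by
  unfold ip w0 w1; congr 1; ext s; simp only [eval_pow, eval_X]; ring

lemma M0_zero (a : ℕ) : M0 0 a = 1 / (2 * a + 1) := by
  unfold M0 ip w0
  rw [unit_integral fun s => (lg0 0).eval (s ^ 2) * (X ^ a : ℝ[X]).eval (s ^ 2) * 1]
  simp only [lg0_zero, eval_one, eval_pow, eval_X, one_mul, mul_one, ← pow_mul]
  rw [integral_pow]; simp

lemma M0_succ (n a : ℕ) : M0 (n + 1) a = M1 n a - bb (2 * n + 1) * M0 n a := by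
  unfold M0 M1
  rw [lg0_succ, ip_sub_left wt0.cont, ip_w0_X, ip_C_mul_left]

lemma M1_zero (a : ℕ) : M1 0 a = M0 0 (a + 1) := by
  unfold M0 M1; rw [ip_w1_pow, lg0_zero, lg1_zero]

lemma M1_succ (n a : ℕ) : M1 (n + 1) a = M0 (n + 1) (a + 1) - bb (2 * n + 2) * M1 n a := by
  unfold M0 M1
  rw [lg1_succ, ip_sub_left wt1.cont, ip_C_mul_left, ip_w1_pow]

/-- The product `(2a+1)(2a+3)⋯(2a+2n-1)`. -/
noncomputable def Dn (a n : ℕ) : ℝ := ∏ j ∈ Finset.range n, (2 * (a : ℝ) + 2 * j + 1)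

/-- The product `a(a-1)⋯(a-n+1)`. -/
noncomputable def Fa (a n : ℕ) : ℝ := ∏ j ∈ Finset.range n, ((a : ℝ) - j)

lemma Dn_pos (a n : ℕ) : 0 < Dn a n := Finset.prod_pos fun _ _ => by positivity

lemma Dn_succ (a n : ℕ) : Dn a (n + 1) = Dn a n * (2 * a + 2 * n + 1) := Finset.prod_range_succ _ _

lemma Dn_succ' (a n : ℕ) : Dn a (n + 1) = (2 * a + 1) * Dn (a + 1) n := by
  unfold Dn
  rw [Finset.prod_range_succ', mul_comm]
  congr 1
  · push_cast; ring
  · refine Finset.prod_congr rfl fun j _ => ?_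
    push_cast; ring

lemma Fa_succ (a n : ℕ) : Fa a (n + 1) = Fa a n * (a - n) := Finset.prod_range_succ _ _

lemma Fa_succ' (a n : ℕ) : Fa (a + 1) (n + 1) = (a + 1) * Fa a n := by
  unfold Fa
  rw [Finset.prod_range_succ', mul_comm]
  congr 1
  · push_cast; ring
  · refine Finset.prod_congr rfl fun j _ => ?_
    push_cast; ring

lemma Fa_zero {a n : ℕ} (h : a < n) : Fa a n = 0 :=
  Finset.prod_eq_zero (Finset.mem_range.2 h) (sub_self _)

/-- Normalization constant in the closed form of the moments of the even polynomials. -/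
noncomputable def K0 : ℕ → ℝ
  | 0 => 1
  | n + 1 => (4 * n + 4) / (4 * n + 3) * ((2 * n + 1) / (4 * n + 1) * K0 n)

lemma bb_ne (m : ℕ) : 4 * ((m : ℝ) + 1) ^ 2 - 1 ≠ 0 := by
  have : (0 : ℝ) ≤ m := m.cast_nonneg
  nlinarith

/-- Closed form of the moments of the Legendre polynomials. It vanishes for `a < n`, which is
orthogonality. -/
lemma moments (n : ℕ) : (∀ a, M0 n a * Dn a (n + 1) = K0 n * Fa a n) ∧
    (∀ a, M1 n a * Dn (a + 1) (n + 1) = (2 * n + 1) / (4 * n + 1) * K0 n * Fa a n) := by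
  have hb1 : ∀ n : ℕ, bb (2 * n + 1) = (2 * n + 1) ^ 2 / ((4 * n + 1) * (4 * n + 3)) := by
    intro n; unfold bb; push_cast; congr 1; ring
  have hb2 : ∀ n : ℕ, bb (2 * n + 2) = (2 * n + 2) ^ 2 / ((4 * n + 3) * (4 * n + 5)) := by
    intro n; unfold bb; push_cast; congr 1; ring
  induction n with
  | zero =>
    constructor
    · intro a
      rw [M0_zero]; simp [Dn, Fa, K0]; field_simp
    · intro a
      rw [M1_zero, M0_zero]; simp [Dn, Fa, K0]; field_simp
  | succ n ih =>
    obtain ⟨h0, h1⟩ := ih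
    have a0 : ∀ a, M0 (n + 1) a * Dn a (n + 1 + 1) = K0 (n + 1) * Fa a (n + 1) := by
      intro a
      have e : M0 (n + 1) a * Dn a (n + 1 + 1) = (2 * a + 1) * (M1 n a * Dn (a + 1) (n + 1))
          - bb (2 * n + 1) * (M0 n a * Dn a (n + 1)) * (2 * a + 2 * (n + 1) + 1) := by
        have e1 := Dn_succ a (n + 1)
        have e2 := Dn_succ' a (n + 1)
        rw [M0_succ, sub_mul]
        congr 1
        · rw [e2]; ring
        · rw [e1]; push_cast; ring
      rw [e, h0, h1, hb1, Fa_succ, K0]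
      field_simp
      ring
    refine ⟨a0, fun a => ?_⟩
    have e : M1 (n + 1) a * Dn (a + 1) (n + 1 + 1) = M0 (n + 1) (a + 1) * Dn (a + 1) (n + 1 + 1)
        - bb (2 * n + 2) * (M1 n a * Dn (a + 1) (n + 1)) * (2 * (a + 1) + 2 * (n + 1) + 1) := by
      rw [M1_succ, sub_mul, Dn_succ (a + 1) (n + 1)]; push_cast; ring
    rw [e, a0, h1, hb2, Fa_succ', Fa_succ, K0]
    push_cast
    field_simp
    ring

lemma M0_eq_zero {n a : ℕ} (h : a < n) : M0 n a = 0 := by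
  have := (moments n).1 a
  rw [Fa_zero h, mul_zero] at this
  exact (mul_eq_zero.1 this).resolve_right (Dn_pos _ _).ne'

lemma M1_eq_zero {n a : ℕ} (h : a < n) : M1 n a = 0 := by
  have := (moments n).2 a
  rw [Fa_zero h, mul_zero] at this
  exact (mul_eq_zero.1 this).resolve_right (Dn_pos _ _).ne'

lemma ip_eq_zero {W} (hW : Continuous W) {q : ℝ[X]} {n : ℕ} (h : ∀ a < n, ip W q (X ^ a) = 0)
    (p : ℝ[X]) (hp : p.degree < (n : ℕ)) : ip W q p = 0 := by
  classical
  rw [← mem_degreeLT, degreeLT_eq_span_X_pow] at hp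
  have hadd : ∀ x y, ip W q (x + y) = ip W q x + ip W q y := by
    intro x y
    have := ip_sub_right hW (x + y) y q
    rw [add_sub_cancel_right] at this
    linarith
  induction hp using Submodule.span_induction with
  | mem x hx =>
    simp only [Finset.coe_image, Set.mem_image, Finset.coe_range, Set.mem_Iio] at hx
    obtain ⟨a, ha, rfl⟩ := hx
    exact h a ha
  | zero => simp [ip]
  | add x y _ _ hx hy => rw [hadd, hx, hy, add_zero]
  | smul a x _ hx => rw [smul_eq_C_mul, ip_C_mul_right, hx, mul_zero]

lemma ops0 : OPS w0 lg0 where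
  monic n := (lg_aux n).1.1
  deg n := (lg_aux n).1.2
  orth _ p hp := ip_eq_zero wt0.cont (fun _ ha => M0_eq_zero ha) p hp

lemma ops1 : OPS w1 lg1 where
  monic n := (lg_aux n).2.1
  deg n := (lg_aux n).2.2
  orth _ p hp := ip_eq_zero wt1.cont (fun _ ha => M1_eq_zero ha) p hp

/-- Squared norms of the monic Legendre polynomials on `[0, 1]`. -/
noncomputable def NL (k : ℕ) : ℝ := ∏ j ∈ Finset.range k, bb (j + 1)

lemma nu0_eq (n : ℕ) : nu w0 lg0 n = M0 n n :=
  (ops0.ip_monic wt0.cont (monic_X_pow n) (natDegree_X_pow n)).symm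

lemma nu1_eq (n : ℕ) : nu w1 lg1 n = M1 n n :=
  (ops1.ip_monic wt1.cont (monic_X_pow n) (natDegree_X_pow n)).symm

lemma nu1_nu0 (n : ℕ) : nu w1 lg1 n = bb (2 * n + 1) * nu w0 lg0 n := by
  have h := M0_succ n n
  rw [M0_eq_zero (Nat.lt_succ_self n)] at h
  rw [nu0_eq, nu1_eq]; linarith

lemma nu0_nu1 (n : ℕ) : nu w0 lg0 (n + 1) = bb (2 * n + 2) * nu w1 lg1 n := by
  have h := M1_succ n n
  rw [M1_eq_zero (Nat.lt_succ_self n)] at h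
  rw [nu0_eq, nu1_eq]; linarith

/-- The even and odd orthogonal polynomials carry the Legendre norms of even and odd index. -/
lemma nu_NL (n : ℕ) : nu w0 lg0 n = NL (2 * n) ∧ nu w1 lg1 n = NL (2 * n + 1) := by
  have step : ∀ n, nu w0 lg0 n = NL (2 * n) → nu w1 lg1 n = NL (2 * n + 1) := by
    intro n h
    rw [nu1_nu0, h, NL, NL, Finset.prod_range_succ, mul_comm]
  induction n with
  | zero =>
    have : nu w0 lg0 0 = NL (2 * 0) := by
      rw [nu0_eq, M0_zero]; simp [NL]
    exact ⟨this, step 0 this⟩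
  | succ n ih =>
    have : nu w0 lg0 (n + 1) = NL (2 * (n + 1)) := by
      rw [nu0_nu1, ih.2, show 2 * (n + 1) = 2 * n + 1 + 1 by ring, NL, NL,
        Finset.prod_range_succ _ (2 * n + 1), mul_comm]
    exact ⟨this, step _ this⟩

lemma bb_lim : Tendsto bb atTop (𝓝 (1 / 4)) := by
  have h1 : Tendsto (fun m : ℕ => (4 - ((m : ℝ)⁻¹) ^ 2)⁻¹) atTop (𝓝 ((4 - 0 ^ 2)⁻¹)) :=
    (tendsto_const_nhds.sub (tendsto_inv_atTop_nhds_zero_nat.pow 2)).inv₀ (by norm_num)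
  have h2 : (4 - 0 ^ 2 : ℝ)⁻¹ = 1 / 4 := by norm_num
  rw [h2] at h1
  refine h1.congr' ?_
  filter_upwards [eventually_gt_atTop 0] with m hm
  have : (1 : ℝ) ≤ m := by exact_mod_cast hm
  have h3 : 4 * (m : ℝ) ^ 2 - 1 ≠ 0 := by nlinarith
  unfold bb
  rw [show 4 - ((m : ℝ)⁻¹) ^ 2 = (4 * (m : ℝ) ^ 2 - 1) / (m : ℝ) ^ 2 by field_simp, inv_div]

lemma bb_lim2 (k : ℕ) : Tendsto (fun n : ℕ => bb (2 * n + k)) atTop (𝓝 (1 / 4)) :=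
  bb_lim.comp (tendsto_atTop_mono (fun n => by simp only [id]; omega) tendsto_id)

lemma ratio0 : Tendsto (fun n => nu w0 lg0 (n + 1) / nu w0 lg0 n) atTop (𝓝 (1 / 16)) := by
  have h := (bb_lim2 2).mul (bb_lim2 1)
  rw [show (1 / 4 : ℝ) * (1 / 4) = 1 / 16 by norm_num] at h
  refine h.congr fun n => ?_
  have := (wt0.nu_pos ops0 n).ne'
  rw [nu0_nu1, nu1_nu0]; field_simp

lemma ratio1 : Tendsto (fun n => nu w1 lg1 (n + 1) / nu w1 lg1 n) atTop (𝓝 (1 / 16)) := by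
  have h := (bb_lim2 3).mul (bb_lim2 2)
  rw [show (1 / 4 : ℝ) * (1 / 4) = 1 / 16 by norm_num] at h
  refine h.congr fun n => ?_
  have := (wt1.nu_pos ops1 n).ne'
  rw [nu1_nu0, nu0_nu1, show 2 * (n + 1) + 1 = 2 * n + 3 by ring]; field_simp

/-! ### Strong asymptotics of the Legendre polynomials -/

/-- The Taylor coefficients of `(1 - z)^(-1/2)`. -/
noncomputable def cc : ℕ → ℝ
  | 0 => 1
  | j + 1 => cc j * ((2 * j + 1) / (2 * j + 2))

lemma cc_pos (j : ℕ) : 0 < cc j := by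
  induction j with
  | zero => exact one_pos
  | succ j ih => rw [cc]; positivity

/-- Coefficients of the normalized Legendre polynomials in the variable `z`. -/
noncomputable def Ac (m j : ℕ) : ℝ := if j ≤ m then cc j * cc (m - j) / cc m else 0

lemma Ac_add (k j : ℕ) : Ac (j + k) j = cc j * cc k / cc (j + k) := by
  unfold Ac; simp

lemma Ac_zero (m : ℕ) : Ac m 0 = 1 := by
  have := (cc_pos m).ne'
  simp [Ac, cc, this]

lemma Ac_gt {m j : ℕ} (h : m < j) : Ac m j = 0 := by simp [Ac, h]

lemma Ac_nonneg (m j : ℕ) : 0 ≤ Ac m j := by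
  unfold Ac; split_ifs
  · have := cc_pos j; have := cc_pos m; have := cc_pos (m - j); positivity
  · exact le_rfl

lemma cc_mul_le (j k : ℕ) : cc j * cc k ≤ cc (j + k) := by
  induction k with
  | zero => simp [cc]
  | succ k ih =>
    rw [← add_assoc, cc, cc, ← mul_assoc]
    have h0 := cc_pos (j + k)
    refine mul_le_mul ih ?_ (by positivity) h0.le
    rw [div_le_div_iff₀ (by positivity) (by positivity)]
    push_cast
    have : (0 : ℝ) ≤ j := j.cast_nonneg
    nlinarith

lemma Ac_le_one (m j : ℕ) : Ac m j ≤ 1 := by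
  rcases le_or_gt j m with h | h
  · obtain ⟨k, rfl⟩ := Nat.exists_eq_add_of_le h
    rw [Ac_add, div_le_one (cc_pos _)]
    exact cc_mul_le j k
  · rw [Ac_gt h]; exact zero_le_one

lemma cc_le_one (j : ℕ) : cc j ≤ 1 := by
  induction j with
  | zero => exact le_rfl
  | succ j ih =>
    rw [cc]
    refine mul_le_one₀ ih (by positivity) ?_
    rw [div_le_one (by positivity)]; linarith

/-- The three-term recurrence of the Legendre polynomials, coefficient by coefficient in `z`. -/
lemma Ac_rec (m j : ℕ) :
    Ac (m + 2) (j + 1) = Ac (m + 1) (j + 1) + Ac (m + 1) j - 4 * bb (m + 1) * Ac m j := by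
  have hb : 4 * bb (m + 1) = (2 * m + 2) ^ 2 / ((2 * m + 1) * (2 * m + 3)) := by
    unfold bb; push_cast; rw [← mul_div_assoc]; congr 1 <;> ring
  rcases le_or_gt j m with h | h
  · obtain ⟨k, rfl⟩ := Nat.exists_eq_add_of_le h
    rw [show j + k + 2 = (j + 1) + (k + 1) by ring, Ac_add,
      show j + k + 1 = (j + 1) + k by ring, Ac_add, show j + 1 + k = j + (k + 1) by ring, Ac_add,
      Ac_add, show j + (k + 1) = j + k + 1 by ring, show j + 1 + (k + 1) = j + k + 1 + 1 by ring,
      hb, cc, cc, cc, cc]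
    have h1 := (cc_pos j).ne'
    have h2 := (cc_pos k).ne'
    have h3 := (cc_pos (j + k)).ne'
    push_cast
    have e1 : 2 * ((j : ℝ) + k) + 1 ≠ 0 := by positivity
    have e2 : 2 * ((j : ℝ) + k + 1) + 1 ≠ 0 := by positivity
    have e3 : 2 * ((j : ℝ) + k) + 3 ≠ 0 := by positivity
    field_simp
    ring
  · rcases Nat.lt_or_ge (m + 1) j with h' | h'
    · rw [Ac_gt (by omega), Ac_gt (by omega), Ac_gt (by omega), Ac_gt (by omega)]; ring
    · obtain rfl : j = m + 1 := by omega
      have hd : ∀ i, Ac i i = 1 := fun i => by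
        have := Ac_add 0 i
        rw [add_zero] at this
        rw [this, cc, mul_one, div_self (cc_pos i).ne']
      rw [show m + 1 + 1 = m + 2 by ring, hd, hd, Ac_gt (by omega), Ac_gt (by omega)]; ring

/-- The normalized Legendre polynomials in the variable `z`. -/
noncomputable def ys (m : ℕ) (z : ℂ) : ℂ := ∑ j ∈ Finset.range (m + 1), (Ac m j : ℂ) * z ^ j

lemma ys_eq {m M : ℕ} (h : m < M) (z : ℂ) : ys m z = ∑ j ∈ Finset.range M, (Ac m j : ℂ) * z ^ j := by
  unfold ys
  refine Finset.sum_subset (fun i hi => ?_) fun i _ hi => ?_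
  · simp only [Finset.mem_range] at *; omega
  · rw [Ac_gt (by simp only [Finset.mem_range] at hi; omega)]; simp

lemma ys_tsum (m : ℕ) (z : ℂ) : ys m z = ∑' j : ℕ, (Ac m j : ℂ) * z ^ j := by
  unfold ys
  rw [tsum_eq_sum]
  intro i hi
  rw [Ac_gt (by simp only [Finset.mem_range] at hi; omega)]; simp

lemma ys_rec (m : ℕ) (z : ℂ) :
    ys (m + 2) z = (1 + z) * ys (m + 1) z - 4 * z * (bb (m + 1) : ℂ) * ys m z := by
  have h1 : ys (m + 2) z = 1 + ∑ j ∈ Finset.range (m + 2), (Ac (m + 2) (j + 1) : ℂ) * z ^ (j + 1) := by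
    unfold ys; rw [Finset.sum_range_succ', Ac_zero]; simp [add_comm]
  have h2 : ys (m + 1) z = 1 + ∑ j ∈ Finset.range (m + 2), (Ac (m + 1) (j + 1) : ℂ) * z ^ (j + 1) := by
    rw [ys_eq (show m + 1 < m + 3 by omega), Finset.sum_range_succ', Ac_zero]; simp [add_comm]
  have h3 := ys_eq (show m + 1 < m + 2 by omega) z
  have h4 := ys_eq (show m < m + 2 by omega) z
  rw [h1, add_mul, one_mul]
  nth_rewrite 1 [h2]
  rw [h3, h4, Finset.mul_sum, Finset.mul_sum, add_assoc, add_sub_assoc, ← Finset.sum_add_distrib,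
    ← Finset.sum_sub_distrib]
  congr 1
  refine Finset.sum_congr rfl fun j _ => ?_
  rw [Ac_rec]; push_cast; ring

lemma ys_zero (z : ℂ) : ys 0 z = 1 := by simp [ys, Ac_zero]

lemma ys_one (z : ℂ) : ys 1 z = 1 + z := by
  have := Ac_add 0 1
  simp only [add_zero] at this
  simp [ys, Finset.sum_range_succ, Ac_zero, this, cc]

/-- The Legendre polynomial of degree `m` at `x`, where `x² = (1 + z)²/(4z)`, in terms of `ys m z`. -/
lemma Pf_lg (n : ℕ) {z : ℂ} (hz : z ≠ 0) :
    Pf lg0 n z = ys (2 * n) z ∧ (1 + z) * Pf lg1 n z = ys (2 * n + 1) z := by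
  induction n with
  | zero => simp [Pf, lg0_zero, lg1_zero, ys_zero, ys_one]
  | succ n ih =>
    have a0 : Pf lg0 (n + 1) z = ys (2 * (n + 1)) z := by
      rw [show 2 * (n + 1) = 2 * n + 2 by ring, ys_rec, ← ih.1, ← ih.2]
      unfold Pf
      rw [lg0_succ]
      simp only [map_sub, map_mul, aeval_X, aeval_C, Complex.coe_algebraMap]
      rw [pow_succ]
      field_simp
    refine ⟨a0, ?_⟩
    rw [show 2 * (n + 1) + 1 = 2 * n + 1 + 2 by ring, ys_rec, ← ih.2,
      show 2 * n + 1 + 1 = 2 * (n + 1) by ring, ← a0]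
    unfold Pf
    rw [lg1_succ, show 2 * (n + 1) = 2 * n + 2 by ring]
    simp only [map_sub, map_mul, aeval_C, Complex.coe_algebraMap]
    ring

lemma cc_ratio (j : ℕ) : Tendsto (fun k => cc k / cc (j + k)) atTop (𝓝 1) := by
  have h1 : Tendsto (fun k : ℕ => ((2 * k + 2 : ℝ)) / (2 * k + 1)) atTop (𝓝 1) := by
    have h2 : Tendsto (fun k : ℕ => 1 + ((2 * k + 1 : ℝ))⁻¹) atTop (𝓝 (1 + 0)) := by
      refine tendsto_const_nhds.add (tendsto_inv_atTop_zero.comp ?_)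
      exact tendsto_atTop_add_const_right _ _
        (tendsto_natCast_atTop_atTop.const_mul_atTop (by norm_num : (0 : ℝ) < 2))
    rw [add_zero] at h2
    refine h2.congr fun k => ?_
    have : (2 * k + 1 : ℝ) ≠ 0 := by positivity
    field_simp; ring
  induction j with
  | zero =>
    refine tendsto_const_nhds.congr fun k => ?_
    rw [zero_add, div_self (cc_pos k).ne']
  | succ j ih =>
    have h3 : Tendsto (fun k : ℕ => j + k) atTop atTop :=
      tendsto_atTop_mono (fun k => Nat.le_add_left k j) tendsto_id
    have h4 := ih.mul (h1.comp h3)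
    rw [mul_one] at h4
    refine h4.congr fun k => ?_
    have e1 := (cc_pos (j + k)).ne'
    have e2 := (cc_pos k).ne'
    rw [show j + 1 + k = j + k + 1 by ring, cc]
    simp only [Function.comp_apply]
    have : (2 * ((j + k : ℕ) : ℝ) + 1 : ℝ) ≠ 0 := by positivity
    field_simp

lemma Ac_lim (j : ℕ) : Tendsto (fun m => Ac m j) atTop (𝓝 (cc j)) := by
  rw [← tendsto_add_atTop_iff_nat j]
  have h := (cc_ratio j).const_mul (cc j)
  rw [mul_one] at h
  refine h.congr fun k => ?_
  rw [add_comm k j, Ac_add, mul_div_assoc]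

/-- The function `(1 - z)^(-1/2)`, as a power series. -/
noncomputable def P0 (z : ℂ) : ℂ := ∑' j : ℕ, (cc j : ℂ) * z ^ j

/-- The limit of the normalized odd Legendre polynomials. -/
noncomputable def P1 (z : ℂ) : ℂ := P0 z / (1 + z)

lemma exists_rho {z : ℂ} (hz : ‖z‖ < 1) : ∃ ρ : ℝ, 0 ≤ ρ ∧ ρ < 1 ∧ ∀ᶠ w in 𝓝 z, ‖w‖ ≤ ρ := by
  obtain ⟨ρ, h1, h2⟩ := exists_between hz
  exact ⟨ρ, (norm_nonneg z).trans h1.le, h2,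
    (continuous_norm.tendsto z).eventually (Iic_mem_nhds h1)⟩

lemma term_bound {a : ℝ} (h0 : 0 ≤ a) (h1 : a ≤ 1) {w : ℂ} {ρ : ℝ} (hw : ‖w‖ ≤ ρ) (j : ℕ) :
    ‖(a : ℂ) * w ^ j‖ ≤ ρ ^ j := by
  rw [norm_mul, norm_pow, Complex.norm_real, Real.norm_of_nonneg h0]
  calc a * ‖w‖ ^ j ≤ 1 * ‖w‖ ^ j := by gcongr
    _ ≤ ρ ^ j := by rw [one_mul]; gcongr

lemma ys_lim {z : ℂ} (hz : ‖z‖ < 1) :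
    Tendsto (fun x : ℕ × ℂ => ys x.1 x.2) (atTop ×ˢ 𝓝 z) (𝓝 (P0 z)) := by
  obtain ⟨ρ, h0, h1, h2⟩ := exists_rho hz
  simp only [ys_tsum]
  unfold P0
  refine tendsto_tsum_of_dominated_convergence (summable_geometric_of_lt_one h0 h1) ?_ ?_
  · intro j
    refine Tendsto.mul ?_ ?_
    · exact (Complex.continuous_ofReal.tendsto _).comp ((Ac_lim j).comp tendsto_fst)
    · exact ((continuous_pow j).tendsto z).comp tendsto_snd
  · filter_upwards [tendsto_snd.eventually h2] with x hx j
    exact term_bound (Ac_nonneg _ _) (Ac_le_one _ _) hx j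

lemma P0_cont {z : ℂ} (hz : ‖z‖ < 1) : ContinuousAt P0 z := by
  obtain ⟨ρ, h0, h1, h2⟩ := exists_rho hz
  unfold ContinuousAt P0
  refine tendsto_tsum_of_dominated_convergence (summable_geometric_of_lt_one h0 h1) ?_ ?_
  · intro j
    exact tendsto_const_nhds.mul ((continuous_pow j).tendsto z)
  · filter_upwards [h2] with x hx j
    exact term_bound (cc_pos j).le (cc_le_one j) hx j

/-- `(1 - z)^(-1/2)` squares to `(1 - z)⁻¹`. -/
lemma cc_conv (m : ℕ) : ∑ j ∈ Finset.range (m + 1), cc j * cc (m - j) = 1 := by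
  have key : ∀ m, ys m 1 = ((1 / cc m : ℝ) : ℂ) := by
    intro m
    have : ys m 1 = ((1 / cc m : ℝ) : ℂ) ∧ ys (m + 1) 1 = ((1 / cc (m + 1) : ℝ) : ℂ) := by
      induction m with
      | zero => rw [ys_zero, ys_one]; simp [cc]; norm_num
      | succ m ih =>
        refine ⟨ih.2, ?_⟩
        rw [show m + 1 + 1 = m + 2 by ring, ys_rec, ih.1, ih.2]
        have hb : 4 * bb (m + 1) = (2 * m + 2) ^ 2 / ((2 * m + 1) * (2 * m + 3)) := by
          unfold bb; push_cast; rw [← mul_div_assoc]; congr 1 <;> ring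
        have : 1 / cc (m + 2) = 2 * (1 / cc (m + 1)) - 4 * bb (m + 1) * (1 / cc m) := by
          have := (cc_pos m).ne'
          rw [hb, show m + 2 = m + 1 + 1 by ring, cc, cc]
          push_cast
          field_simp
          ring
        rw [this]; push_cast; ring
    exact this.1
  have h := key m
  unfold ys at h
  simp only [one_pow, mul_one] at h
  rw [← Complex.ofReal_sum, Complex.ofReal_inj] at h
  have h2 : ∀ j ∈ Finset.range (m + 1), Ac m j = cc j * cc (m - j) / cc m := by
    intro j hj
    rw [Finset.mem_range] at hj
    unfold Ac; rw [if_pos (by omega)]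
  rw [Finset.sum_congr rfl h2, ← Finset.sum_div] at h
  have := (cc_pos m).ne'
  field_simp at h
  exact h

lemma P0_real {r : ℝ} (hr : 0 < r) (hr1 : r < 1) :
    ∃ p : ℝ, 0 < p ∧ P0 r = p ∧ p ^ 2 = 1 / (1 - r) := by
  have hb : ∀ j, ‖cc j * r ^ j‖ ≤ r ^ j := by
    intro j
    have h := term_bound (cc_pos j).le (cc_le_one j) (w := r) (ρ := r)
      (by simp [abs_of_pos hr]) j
    have h2 : ((cc j : ℂ) * (r : ℂ) ^ j) = ((cc j * r ^ j : ℝ) : ℂ) := by push_cast; rfl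
    rwa [h2, Complex.norm_real] at h
  have hsn : Summable fun j => ‖cc j * r ^ j‖ :=
    Summable.of_nonneg_of_le (fun _ => norm_nonneg _) hb (summable_geometric_of_lt_one hr.le hr1)
  have hs : Summable fun j => cc j * r ^ j := hsn.of_norm
  refine ⟨∑' j, cc j * r ^ j, ?_, ?_, ?_⟩
  · refine hs.tsum_pos (fun j => ?_) 0 ?_
    · have := cc_pos j; positivity
    · simp [cc]
  · unfold P0; rw [Complex.ofReal_tsum]; push_cast; rfl
  · rw [sq, tsum_mul_tsum_eq_tsum_sum_range_of_summable_norm hsn hsn]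
    rw [one_div, ← tsum_geometric_of_lt_one hr.le hr1]
    congr 1; ext m
    have : ∀ j ∈ Finset.range (m + 1), cc j * r ^ j * (cc (m - j) * r ^ (m - j))
        = cc j * cc (m - j) * r ^ m := by
      intro j hj
      rw [Finset.mem_range] at hj
      rw [show r ^ m = r ^ j * r ^ (m - j) by rw [← pow_add]; congr 1; omega]; ring
    rw [Finset.sum_congr rfl this, ← Finset.sum_mul, cc_conv, one_mul]

lemma one_add_ne {z : ℂ} (hz : ‖z‖ < 1) : 1 + z ≠ 0 := by
  intro h
  have : z = -1 := by linear_combination h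
  rw [this] at hz; simp at hz

/-- Exterior asymptotics of the even Legendre polynomials. -/
theorem good0 : Good w0 lg0 P0 where
  wt := wt0
  ops := ops0
  lim z hz hz1 := by
    have h1 : Tendsto (fun x : ℕ × ℂ => (2 * x.1, x.2)) (atTop ×ˢ 𝓝 z) (atTop ×ˢ 𝓝 z) :=
      ((tendsto_atTop_mono (fun n : ℕ => (by omega : n ≤ 2 * n)) tendsto_id).comp
        tendsto_fst).prodMk tendsto_snd
    refine ((ys_lim hz1).comp h1).congr' ?_
    filter_upwards [tendsto_snd.eventually (isOpen_ne.mem_nhds hz)] with x hx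
    exact ((Pf_lg x.1 hx).1).symm
  cont z _ hz1 := P0_cont hz1
  pos r hr hr1 := by
    obtain ⟨p, h1, h2, -⟩ := P0_real hr hr1
    exact ⟨p, h1, h2⟩
  nu_ratio := ratio0

/-- Exterior asymptotics of the odd Legendre polynomials. -/
theorem good1 : Good w1 lg1 P1 where
  wt := wt1
  ops := ops1
  lim z hz hz1 := by
    have h1 : Tendsto (fun x : ℕ × ℂ => (2 * x.1 + 1, x.2)) (atTop ×ˢ 𝓝 z) (atTop ×ˢ 𝓝 z) :=
      ((tendsto_atTop_mono (fun n : ℕ => (by omega : n ≤ 2 * n + 1)) tendsto_id).comp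
        tendsto_fst).prodMk tendsto_snd
    have h2 : Tendsto (fun x : ℕ × ℂ => 1 + x.2) (atTop ×ˢ 𝓝 z) (𝓝 (1 + z)) :=
      tendsto_const_nhds.add tendsto_snd
    refine (((ys_lim hz1).comp h1).div h2 (one_add_ne hz1)).congr' ?_
    filter_upwards [tendsto_snd.eventually (isOpen_ne.mem_nhds hz),
      h2.eventually (isOpen_ne.mem_nhds (one_add_ne hz1))] with x hx hx2
    change ys (2 * x.1 + 1) x.2 / (1 + x.2) = Pf lg1 x.1 x.2
    rw [← (Pf_lg x.1 hx).2]
    exact mul_div_cancel_left₀ _ hx2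
  cont z _ hz1 := (P0_cont hz1).div (continuousAt_const.add continuousAt_id) (one_add_ne hz1)
  pos r hr hr1 := by
    obtain ⟨p, h1, h2, -⟩ := P0_real hr hr1
    refine ⟨p / (1 + r), by positivity, ?_⟩
    unfold P1; rw [h2]; push_cast; rfl
  nu_ratio := ratio1

lemma lamP0 {r : ℝ} (hr : 0 < r) (hr1 : r < 1) :
    lamP P0 r = -Real.log (1 - r) / 2 + Real.log (1 - r ^ 2) / 2 := by
  obtain ⟨p, h1, h2, h3⟩ := P0_real hr hr1
  unfold lamP Gk
  rw [h2, Complex.ofReal_re]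
  have h4 := congrArg Real.log h3
  rw [Real.log_pow, one_div, Real.log_inv] at h4
  push_cast at h4
  rw [← sq]; linarith

lemma lamP1 {r : ℝ} (hr : 0 < r) (hr1 : r < 1) :
    lamP P1 r = -Real.log (1 - r) / 2 - Real.log (1 + r) + Real.log (1 - r ^ 2) / 2 := by
  have h0 := lamP0 hr hr1
  obtain ⟨p, h1, h2, h3⟩ := P0_real hr hr1
  unfold lamP at *
  have h4 : P1 r = ((p / (1 + r) : ℝ) : ℂ) := by
    unfold P1; rw [h2]; push_cast; rfl
  rw [h4, Complex.ofReal_re, Real.log_div h1.ne' (by positivity)]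
  rw [h2, Complex.ofReal_re] at h0
  linarith

/-! ### Splitting the Toeplitz determinant into even and odd parts -/

/-- Adding the columns of the second block to those of the first one and subtracting rows makes the
matrix block triangular. -/
lemma block_det {p q : ℕ} (A : Matrix (Fin p) (Fin p) ℝ) (B : Matrix (Fin p) (Fin q) ℝ)
    (C : Matrix (Fin q) (Fin p) ℝ) (D : Matrix (Fin q) (Fin q) ℝ) (S : Matrix (Fin q) (Fin p) ℝ)
    (h : S * A + S * B * S = C + D * S) :
    (Matrix.fromBlocks A B C D).det = (A + B * S).det * (D - S * B).det := by
  have h1 : Matrix.fromBlocks 1 0 (-S) 1 * Matrix.fromBlocks A B C D * Matrix.fromBlocks 1 0 S 1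
      = Matrix.fromBlocks (A + B * S) B 0 (D - S * B) := by
    rw [Matrix.fromBlocks_multiply, Matrix.fromBlocks_multiply]
    congr 1
    · simp
    · simp
    · simp only [Matrix.one_mul, Matrix.mul_one, Matrix.neg_mul, Matrix.add_mul]
      rw [add_add_add_comm, ← h, ← neg_add, neg_add_cancel]
    · simp [sub_eq_add_neg, add_comm]
  have h2 := congrArg Matrix.det h1
  rw [Matrix.det_mul, Matrix.det_mul, Matrix.det_fromBlocks_zero₁₂, Matrix.det_fromBlocks_zero₁₂,
    Matrix.det_fromBlocks_zero₂₁] at h2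
  simpa using h2

/-- Chebyshev-type polynomials. If `cos φ = c s`, then for suitable `a`, `b` their values at `s²` are
the functions `cos (mφ)` and `sin (mφ)` for `m` of fixed parity, divided by the one of lowest
frequency. -/
noncomputable def Qp (c a b : ℝ) : ℕ → ℝ[X]
  | 0 => 1
  | 1 => C (a * c ^ 2) * X + C b
  | i + 2 => (C (4 * c ^ 2) * X - C 2) * Qp c a b (i + 1) - Qp c a b i

lemma Qp_eval {c a b s κ : ℝ} {f : ℕ → ℝ} (h0 : f 0 = κ) (h1 : f 1 = κ * (a * (c * s) ^ 2 + b))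
    (h2 : ∀ i, f (i + 2) = (4 * (c * s) ^ 2 - 2) * f (i + 1) - f i) (i : ℕ) :
    f i = κ * (Qp c a b i).eval (s ^ 2) := by
  have : f i = κ * (Qp c a b i).eval (s ^ 2) ∧
      f (i + 1) = κ * (Qp c a b (i + 1)).eval (s ^ 2) := by
    induction i with
    | zero => simp [Qp, h0, h1]; left; ring
    | succ i ih =>
      refine ⟨ih.2, ?_⟩
      rw [show i + 1 + 1 = i + 2 by ring, h2, ih.1, ih.2, Qp]
      simp only [eval_sub, eval_mul, eval_C, eval_X]
      ring
  exact this.1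

lemma Qp_deg (c a b : ℝ) (i : ℕ) : (Qp c a b i).natDegree ≤ i ∧
    (Qp c a b (i + 1)).natDegree ≤ i + 1 := by
  induction i with
  | zero =>
    refine ⟨by simp [Qp], ?_⟩
    simp only [Qp]
    exact (natDegree_linear_le).trans le_rfl
  | succ i ih =>
    refine ⟨ih.2, ?_⟩
    rw [show i + 1 + 1 = i + 2 by ring, Qp]
    refine (natDegree_sub_le _ _).trans (max_le ?_ (ih.1.trans (by omega)))
    refine natDegree_mul_le.trans ?_
    have h1 : (C (4 * c ^ 2) * X - C 2 : ℝ[X]).natDegree ≤ 1 := by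
      rw [sub_eq_add_neg, ← C_neg]; exact natDegree_linear_le
    have h2 := ih.2
    omega

lemma Qp_coeff_succ (c a b : ℝ) (i : ℕ) :
    (Qp c a b (i + 1)).coeff (i + 1) = a / 4 * (4 * c ^ 2) ^ (i + 1) := by
  induction i with
  | zero =>
    change (C (a * c ^ 2) * X + C b).coeff 1 = _
    rw [coeff_add, coeff_C_mul, coeff_X_one, coeff_C_of_ne_zero one_ne_zero]; ring
  | succ i ih =>
    have h1 : (Qp c a b i).coeff (i + 2) = 0 :=
      coeff_eq_zero_of_natDegree_lt (lt_of_le_of_lt (Qp_deg c a b i).1 (by omega))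
    have h2 : (Qp c a b (i + 1)).coeff (i + 2) = 0 :=
      coeff_eq_zero_of_natDegree_lt (lt_of_le_of_lt (Qp_deg c a b i).2 (by omega))
    rw [show i + 1 + 1 = i + 2 by ring, Qp, coeff_sub, sub_mul, coeff_sub, mul_assoc, coeff_C_mul,
      coeff_C_mul, coeff_X_mul, h1, h2, ih]
    ring

lemma Qp_coeff (c b : ℝ) (i : ℕ) : (Qp c 4 b i).coeff i = (4 * c ^ 2) ^ i := by
  cases i with
  | zero => simp [Qp]
  | succ i => rw [Qp_coeff_succ]; ring

/-- The weight `W(s) (qf r s)^(τ/2)`. -/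
noncomputable def wq (W : unitInterval → ℝ) (r τ : ℝ) (s : unitInterval) : ℝ :=
  W s * Real.exp (τ / 2 * Real.log (qf r s))

/-- The Hankel determinant of the weight `wq W r τ` in the variable `s²`. -/
noncomputable def ZH (W : unitInterval → ℝ) (r τ : ℝ) (n : ℕ) : ℝ :=
  Zn (wq W r τ) n / n.factorial

lemma logqf_cont {r : ℝ} (hr : 0 < r) (hr1 : r < 1) (τ : ℝ) :
    Continuous fun s => τ / 2 * Real.log (qf r s) :=
  continuous_const.mul ((qf_cont r).log fun s => (qf_pos hr hr1 s).ne')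

lemma wq_cont {W} (hW : Continuous W) {r : ℝ} (hr : 0 < r) (hr1 : r < 1) (τ : ℝ) :
    Continuous (wq W r τ) :=
  hW.mul (Real.continuous_exp.comp (logqf_cont hr hr1 τ))

lemma ZH_pos {W π P} (h : Good W π P) {r : ℝ} (hr : 0 < r) (hr1 : r < 1) (τ : ℝ) (n : ℕ) :
    0 < ZH W r τ n :=
  div_pos (Zn_exp_pos h.wt (Zn_pos h.wt h.ops n) (logqf_cont hr hr1 τ)) (by positivity)

lemma det_ip {W} (hW : Continuous W) {r : ℝ} (hr : 0 < r) (hr1 : r < 1) (τ : ℝ) {n : ℕ}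
    (v : Fin n → ℝ) (p : Fin n → ℝ[X]) (hd : ∀ i, (p i).natDegree ≤ i) :
    (Matrix.of fun i k => v k * ip (wq W r τ) (p i) (p k)).det
      = (∏ i, v i) * (∏ i : Fin n, (p i).coeff i) ^ 2 * ZH W r τ n := by
  have h1 := Matrix.det_mul_row v (Matrix.of fun i k => ip (wq W r τ) (p i) (p k))
  have h2 := Zn_gram (wq_cont hW hr hr1 τ) p hd
  simp only [Matrix.of_apply] at h1
  rw [h1, mul_assoc]
  congr 1
  unfold ZH
  rw [← mul_div_assoc, ← h2]
  field_simp

/-- The angle `φ` with `cos φ = c s`. -/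
noncomputable def ph (c : ℝ) (s : ℝ) : ℝ := Real.arccos (c * s)

/-- The symbol's cosine moments `(2/π) ∫ cos(xφ) dφ` over the half arc, in the variable `s`. -/
noncomputable def tt (c r x : ℝ) : ℝ :=
  2 * c * (1 + r) / Real.pi * ∫ s : unitInterval, Real.cos (x * ph c s) * wq w0 r (-1) s

lemma tt_neg (c r x : ℝ) : tt c r (-x) = tt c r x := by
  unfold tt; simp only [neg_mul, Real.cos_neg]

lemma ph_cont (c : ℝ) : Continuous fun s : unitInterval => ph c s :=
  Real.continuous_arccos.comp (by fun_prop)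

lemma tt_int {c r : ℝ} (hr : 0 < r) (hr1 : r < 1) (x : ℝ) :
    Integrable fun s : unitInterval => Real.cos (x * ph c s) * wq w0 r (-1) s :=
  intg ((Real.continuous_cos.comp (continuous_const.mul (ph_cont c))).mul
    (wq_cont wt0.cont hr hr1 _))

lemma tt_cos {c r : ℝ} (hr : 0 < r) (hr1 : r < 1) (x y : ℝ) :
    tt c r (x - y) + tt c r (x + y) = 4 * c * (1 + r) / Real.pi *
      ∫ s : unitInterval, Real.cos (x * ph c s) * Real.cos (y * ph c s) * wq w0 r (-1) s := by
  unfold tt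
  rw [← mul_add, ← integral_add (tt_int hr hr1 _) (tt_int hr hr1 _)]
  have : ∀ s : unitInterval, Real.cos ((x - y) * ph c s) * wq w0 r (-1) s +
      Real.cos ((x + y) * ph c s) * wq w0 r (-1) s
      = 2 * (Real.cos (x * ph c s) * Real.cos (y * ph c s) * wq w0 r (-1) s) := by
    intro s
    rw [sub_mul, add_mul, Real.cos_sub, Real.cos_add]; ring
  simp only [this]
  rw [integral_const_mul]; ring

lemma tt_sin {c r : ℝ} (hr : 0 < r) (hr1 : r < 1) (x y : ℝ) :
    tt c r (x - y) - tt c r (x + y) = 4 * c * (1 + r) / Real.pi *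
      ∫ s : unitInterval, Real.sin (x * ph c s) * Real.sin (y * ph c s) * wq w0 r (-1) s := by
  unfold tt
  rw [← mul_sub, ← integral_sub (tt_int hr hr1 _) (tt_int hr hr1 _)]
  have : ∀ s : unitInterval, Real.cos ((x - y) * ph c s) * wq w0 r (-1) s -
      Real.cos ((x + y) * ph c s) * wq w0 r (-1) s
      = 2 * (Real.sin (x * ph c s) * Real.sin (y * ph c s) * wq w0 r (-1) s) := by
    intro s
    rw [sub_mul, add_mul, Real.cos_sub, Real.cos_add]; ring
  simp only [this]
  rw [integral_const_mul]; ring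

lemma cos_ph {c : ℝ} (hc : 0 < c) (hc1 : c < 1) (s : unitInterval) :
    Real.cos (ph c s) = c * s := by
  have h0 := s.2.1
  have h1 := s.2.2
  exact Real.cos_arccos (by nlinarith) (by nlinarith)

lemma sin_ph {c r : ℝ} (hr : 0 < r) (hr1 : r < 1) (hcr : c ^ 2 * (1 + r) ^ 2 = 4 * r)
    (s : unitInterval) :
    Real.sin (ph c s) = Real.exp (1 / 2 * Real.log (qf r s)) / (1 + r) := by
  have hq := qf_pos hr hr1 s
  unfold ph
  rw [Real.sin_arccos]
  have h1 : 1 - (c * s) ^ 2 = (Real.exp (1 / 2 * Real.log (qf r s)) / (1 + r)) ^ 2 := by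
    rw [div_pow, ← Real.exp_nat_mul]
    push_cast
    rw [← mul_assoc, show (2 : ℝ) * (1 / 2) = 1 by norm_num, one_mul, Real.exp_log hq]
    unfold qf
    field_simp
    linear_combination -(s : ℝ) ^ 2 * hcr
  rw [h1, Real.sqrt_sq (by positivity)]

/-- Three-term recurrence for `cos` and `sin` at frequencies in arithmetic progression. -/
lemma cos_rec {c s φ : ℝ} (h : Real.cos φ = c * s) (x : ℝ) :
    Real.cos ((x + 4) * φ) = (4 * (c * s) ^ 2 - 2) * Real.cos ((x + 2) * φ) - Real.cos (x * φ) := by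
  rw [← h, show (x + 4) * φ = (x + 2) * φ + 2 * φ by ring,
    show x * φ = (x + 2) * φ - 2 * φ by ring, Real.cos_add, Real.cos_sub, Real.cos_two_mul φ]
  ring

lemma sin_rec {c s φ : ℝ} (h : Real.cos φ = c * s) (x : ℝ) :
    Real.sin ((x + 4) * φ) = (4 * (c * s) ^ 2 - 2) * Real.sin ((x + 2) * φ) - Real.sin (x * φ) := by
  rw [← h, show (x + 4) * φ = (x + 2) * φ + 2 * φ by ring,
    show x * φ = (x + 2) * φ - 2 * φ by ring, Real.sin_add, Real.sin_sub, Real.cos_two_mul φ]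
  ring

lemma cos_odd {c s φ : ℝ} (h : Real.cos φ = c * s) (i : ℕ) :
    Real.cos ((2 * i + 1) * φ) = c * s * (Qp c 4 (-3) i).eval (s ^ 2) := by
  refine Qp_eval (f := fun i : ℕ => Real.cos ((2 * i + 1) * φ)) ?_ ?_ ?_ i
  · simp [h]
  · norm_num
    rw [Real.cos_three_mul, h]; ring
  · intro i
    have := cos_rec h (2 * i + 1)
    push_cast
    rw [show (2 * ((i : ℝ) + 2) + 1) = 2 * i + 1 + 4 by ring,
      show (2 * ((i : ℝ) + 1) + 1) = 2 * i + 1 + 2 by ring]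
    exact this

lemma sin_odd {c s φ : ℝ} (h : Real.cos φ = c * s) (i : ℕ) :
    Real.sin ((2 * i + 1) * φ) = Real.sin φ * (Qp c 4 (-1) i).eval (s ^ 2) := by
  refine Qp_eval (f := fun i : ℕ => Real.sin ((2 * i + 1) * φ)) ?_ ?_ ?_ i
  · simp
  · norm_num
    rw [Real.sin_three_mul, ← h, Real.cos_sq']; ring
  · intro i
    have := sin_rec h (2 * i + 1)
    push_cast
    rw [show (2 * ((i : ℝ) + 2) + 1) = 2 * i + 1 + 4 by ring,
      show (2 * ((i : ℝ) + 1) + 1) = 2 * i + 1 + 2 by ring]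
    exact this

lemma cos_even {c s φ : ℝ} (h : Real.cos φ = c * s) (i : ℕ) :
    Real.cos ((2 * i) * φ) = 1 * (Qp c 2 (-1) i).eval (s ^ 2) := by
  refine Qp_eval (f := fun i : ℕ => Real.cos ((2 * i) * φ)) ?_ ?_ ?_ i
  · simp
  · norm_num
    rw [Real.cos_two_mul, h]; ring
  · intro i
    have := cos_rec h (2 * i)
    push_cast
    rw [show (2 * ((i : ℝ) + 2)) = 2 * i + 4 by ring,
      show (2 * ((i : ℝ) + 1)) = 2 * i + 2 by ring]
    exact this

lemma sin_even {c s φ : ℝ} (h : Real.cos φ = c * s) (i : ℕ) :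
    Real.sin ((2 * i + 2) * φ) = 2 * Real.sin φ * (c * s) * (Qp c 4 (-2) i).eval (s ^ 2) := by
  refine Qp_eval (f := fun i : ℕ => Real.sin ((2 * i + 2) * φ)) ?_ ?_ ?_ i
  · simp [Real.sin_two_mul, h]
  · norm_num
    rw [show (4 : ℝ) * φ = 2 * (2 * φ) by ring, Real.sin_two_mul (2 * φ), Real.sin_two_mul,
      Real.cos_two_mul, h]; ring
  · intro i
    have := sin_rec h (2 * i + 2)
    push_cast
    rw [show (2 * ((i : ℝ) + 2) + 2) = 2 * i + 2 + 4 by ring,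
      show (2 * ((i : ℝ) + 1) + 2) = 2 * i + 2 + 2 by ring]
    exact this

/-! ### Factorization of the Toeplitz determinant -/

/-- Splitting of `Fin (q + p)` at position `q`, with the lower part reversed. -/
def splitE (p q : ℕ) : Fin p ⊕ Fin q ≃ Fin (q + p) :=
  ((Equiv.sumCongr (Equiv.refl _) Fin.revPerm).trans (Equiv.sumComm _ _)).trans finSumFinEquiv

lemma splitE_inl (p q : ℕ) (i : Fin p) : ((splitE p q (Sum.inl i) : ℕ) : ℝ) = q + i := by
  simp [splitE]

lemma splitE_inr (p q : ℕ) (j : Fin q) : ((splitE p q (Sum.inr j) : ℕ) : ℝ) = q - 1 - j := by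
  have : (splitE p q (Sum.inr j) : ℕ) = q - (j + 1) := by simp [splitE, Fin.val_rev]
  rw [this, Nat.cast_sub (by omega)]; push_cast; ring

/-- The real Toeplitz matrix of the arc, when `c = cos (μ/2)` and `c² (1 + r)² = 4 r`. -/
noncomputable def TM (c r : ℝ) (N : ℕ) : Matrix (Fin N) (Fin N) ℝ :=
  Matrix.of fun j k => tt c r (2 * ((j : ℝ) - k))

/-- The Toeplitz matrix in blocks, for the indices `q + i` and `q - 1 - j`: reflected indices make the
off-diagonal blocks functions of `i + j`. -/
lemma TM_blocks (c r : ℝ) (p q : ℕ) : (TM c r (q + p)).det = (Matrix.fromBlocks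
    (Matrix.of fun i k : Fin p => tt c r (2 * ((i : ℝ) - k)))
    (Matrix.of fun (i : Fin p) (j : Fin q) => tt c r (2 * ((i : ℝ) + j + 1)))
    (Matrix.of fun (j : Fin q) (i : Fin p) => tt c r (2 * ((i : ℝ) + j + 1)))
    (Matrix.of fun j k : Fin q => tt c r (2 * ((j : ℝ) - k)))).det := by
  rw [← Matrix.det_submatrix_equiv_self (splitE p q)]
  congr 1
  ext x y
  rcases x with i | j <;> rcases y with k | l <;>
    simp only [Matrix.submatrix_apply, TM, Matrix.of_apply, splitE_inl, splitE_inr,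
      Matrix.fromBlocks_apply₁₁, Matrix.fromBlocks_apply₁₂, Matrix.fromBlocks_apply₂₁,
      Matrix.fromBlocks_apply₂₂]
  · congr 1; ring
  · congr 1; ring
  · rw [← tt_neg]; congr 1; ring
  · rw [← tt_neg]; congr 1; ring

lemma prod_pow_sq (x : ℝ) (n : ℕ) :
    (∏ i : Fin n, x ^ (i : ℕ)) ^ 2 * x ^ n = x ^ (n ^ 2) := by
  induction n with
  | zero => simp
  | succ n ih =>
    rw [Fin.prod_univ_castSucc]
    simp only [Fin.val_castSucc, Fin.val_last]
    rw [mul_pow, show (n + 1) ^ 2 = n ^ 2 + (2 * n + 1) by ring, pow_add x (n ^ 2), ← ih]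
    ring

section
variable {c r : ℝ}

lemma tt_cos_odd (hc : 0 < c) (hc1 : c < 1) (hr : 0 < r) (hr1 : r < 1) (i k : ℕ) :
    tt c r (2 * ((i : ℝ) - k)) + tt c r (2 * ((i : ℝ) + k + 1))
      = 4 * c ^ 3 * (1 + r) / Real.pi
        * ip (wq w1 r (-1)) (Qp c 4 (-3) i) (Qp c 4 (-3) k) := by
  have h := tt_cos (c := c) hr hr1 (2 * i + 1) (2 * k + 1)
  rw [show (2 * (i : ℝ) + 1 - (2 * k + 1)) = 2 * ((i : ℝ) - k) by ring,
    show (2 * (i : ℝ) + 1 + (2 * k + 1)) = 2 * ((i : ℝ) + k + 1) by ring] at h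
  rw [h, show 4 * c ^ 3 * (1 + r) / Real.pi = 4 * c * (1 + r) / Real.pi * c ^ 2 by ring, mul_assoc (4 * c * (1 + r) / Real.pi)]
  congr 1
  unfold ip
  rw [← integral_const_mul]
  congr 1; ext s
  rw [cos_odd (cos_ph hc hc1 s), cos_odd (cos_ph hc hc1 s)]
  unfold wq w0 w1; ring

lemma tt_sin_odd (hc : 0 < c) (hc1 : c < 1) (hr : 0 < r) (hr1 : r < 1)
    (hcr : c ^ 2 * (1 + r) ^ 2 = 4 * r) (i k : ℕ) :
    tt c r (2 * ((i : ℝ) - k)) - tt c r (2 * ((i : ℝ) + k + 1))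
      = 4 * c / (1 + r) / Real.pi
        * ip (wq w0 r 1) (Qp c 4 (-1) i) (Qp c 4 (-1) k) := by
  have h := tt_sin (c := c) hr hr1 (2 * i + 1) (2 * k + 1)
  rw [show (2 * (i : ℝ) + 1 - (2 * k + 1)) = 2 * ((i : ℝ) - k) by ring,
    show (2 * (i : ℝ) + 1 + (2 * k + 1)) = 2 * ((i : ℝ) + k + 1) by ring] at h
  rw [h, show 4 * c / (1 + r) / Real.pi = 4 * c * (1 + r) / Real.pi * (1 / (1 + r) ^ 2) by
    field_simp, mul_assoc (4 * c * (1 + r) / Real.pi)]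
  congr 1
  unfold ip
  rw [← integral_const_mul]
  congr 1; ext s
  rw [sin_odd (cos_ph hc hc1 s), sin_odd (cos_ph hc hc1 s), sin_ph hr hr1 hcr]
  unfold wq w0
  rw [show (-1 : ℝ) / 2 * Real.log (qf r s) = -(1 / 2 * Real.log (qf r s)) by ring, Real.exp_neg]
  have := (Real.exp_pos (1 / 2 * Real.log (qf r s))).ne'
  field_simp

lemma tt_cos_even (hc : 0 < c) (hc1 : c < 1) (hr : 0 < r) (hr1 : r < 1) (i k : ℕ) :
    tt c r (2 * ((i : ℝ) - k)) + tt c r (2 * ((i : ℝ) + k))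
      = 4 * c * (1 + r) / Real.pi
        * ip (wq w0 r (-1)) (Qp c 2 (-1) i) (Qp c 2 (-1) k) := by
  have h := tt_cos (c := c) hr hr1 (2 * i) (2 * k)
  rw [show (2 * (i : ℝ) - 2 * k) = 2 * ((i : ℝ) - k) by ring,
    show (2 * (i : ℝ) + 2 * k) = 2 * ((i : ℝ) + k) by ring] at h
  rw [h]
  congr 1
  unfold ip
  congr 1; ext s
  rw [cos_even (cos_ph hc hc1 s), cos_even (cos_ph hc hc1 s)]
  ring

lemma tt_sin_even (hc : 0 < c) (hc1 : c < 1) (hr : 0 < r) (hr1 : r < 1)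
    (hcr : c ^ 2 * (1 + r) ^ 2 = 4 * r) (i k : ℕ) :
    tt c r (2 * ((i : ℝ) - k)) - tt c r (2 * ((i : ℝ) + k + 2))
      = 16 * c ^ 3 / (1 + r) / Real.pi
        * ip (wq w1 r 1) (Qp c 4 (-2) i) (Qp c 4 (-2) k) := by
  have h := tt_sin (c := c) hr hr1 (2 * i + 2) (2 * k + 2)
  rw [show (2 * (i : ℝ) + 2 - (2 * k + 2)) = 2 * ((i : ℝ) - k) by ring,
    show (2 * (i : ℝ) + 2 + (2 * k + 2)) = 2 * ((i : ℝ) + k + 2) by ring] at h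
  rw [h, show 16 * c ^ 3 / (1 + r) / Real.pi
    = 4 * c * (1 + r) / Real.pi * (4 * c ^ 2 / (1 + r) ^ 2) by field_simp; ring, mul_assoc (4 * c * (1 + r) / Real.pi)]
  congr 1
  unfold ip
  rw [← integral_const_mul]
  congr 1; ext s
  rw [sin_even (cos_ph hc hc1 s), sin_even (cos_ph hc hc1 s), sin_ph hr hr1 hcr]
  unfold wq w0 w1
  rw [show (-1 : ℝ) / 2 * Real.log (qf r s) = -(1 / 2 * Real.log (qf r s)) by ring, Real.exp_neg]
  have := (Real.exp_pos (1 / 2 * Real.log (qf r s))).ne'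
  field_simp
  ring

/-- Even size: the sums `t(i - k) ± t(i + k + 1)` are Gram matrices of `cos ((2i+1)φ)` and
`sin ((2i+1)φ)`. -/
theorem TM_even (hc : 0 < c) (hc1 : c < 1) (hr : 0 < r) (hr1 : r < 1)
    (hcr : c ^ 2 * (1 + r) ^ 2 = 4 * r) (n : ℕ) :
    (TM c r (n + n)).det = (2 * c) ^ ((n + n) ^ 2) / Real.pi ^ (n + n)
      * (ZH w1 r (-1) n * ZH w0 r 1 n) := by
  rw [TM_blocks, block_det _ _ _ _ 1 (by
    simp only [Matrix.one_mul, Matrix.mul_one]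
    rw [add_comm]
    congr 1
    ext i j
    simp only [Matrix.of_apply]; congr 1; ring)]
  have e1 : (Matrix.of fun i k : Fin n => tt c r (2 * ((i : ℝ) - k)))
      + (Matrix.of fun (i : Fin n) (j : Fin n) => tt c r (2 * ((i : ℝ) + j + 1))) * 1
      = Matrix.of fun i k : Fin n => (4 * c ^ 3 * (1 + r) / Real.pi) *
        ip (wq w1 r (-1)) (Qp c 4 (-3) i) (Qp c 4 (-3) k) := by
    ext i k
    simp only [Matrix.mul_one, Matrix.add_apply, Matrix.of_apply]
    exact tt_cos_odd hc hc1 hr hr1 i k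
  have e2 : (Matrix.of fun i k : Fin n => tt c r (2 * ((i : ℝ) - k)))
      - 1 * (Matrix.of fun (i : Fin n) (j : Fin n) => tt c r (2 * ((i : ℝ) + j + 1)))
      = Matrix.of fun i k : Fin n => (4 * c / (1 + r) / Real.pi) *
        ip (wq w0 r 1) (Qp c 4 (-1) i) (Qp c 4 (-1) k) := by
    ext i k
    simp only [Matrix.one_mul, Matrix.sub_apply, Matrix.of_apply]
    exact tt_sin_odd hc hc1 hr hr1 hcr i k
  rw [e1, e2, det_ip wt1.cont hr hr1 (-1) (fun _ => 4 * c ^ 3 * (1 + r) / Real.pi)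
      (fun i : Fin n => Qp c 4 (-3) i) (fun i => (Qp_deg c 4 (-3) i).1),
    det_ip wt0.cont hr hr1 1 (fun _ => 4 * c / (1 + r) / Real.pi)
      (fun i : Fin n => Qp c 4 (-1) i) (fun i => (Qp_deg c 4 (-1) i).1)]
  simp only [Qp_coeff, Finset.prod_const, Finset.card_univ, Fintype.card_fin]
  have hV := prod_pow_sq (4 * c ^ 2) n
  set V := ∏ i : Fin n, (4 * c ^ 2) ^ (i : ℕ)
  have h1 : (2 * c) ^ ((n + n) ^ 2) = ((4 * c ^ 2) ^ (n ^ 2)) ^ 2 := by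
    rw [show (n + n) ^ 2 = 2 * (n ^ 2 * 2) by ring, pow_mul, pow_mul]
    congr 2; ring
  have h2 : (4 * c ^ 3 * (1 + r) / Real.pi) ^ n * (4 * c / (1 + r) / Real.pi) ^ n
      = ((4 * c ^ 2) ^ n) ^ 2 / Real.pi ^ (n + n) := by
    rw [← mul_pow, ← pow_mul, mul_comm n 2, pow_mul, ← two_mul, pow_mul, ← div_pow]
    congr 1
    field_simp
  rw [h1, ← hV]
  calc _ = ((4 * c ^ 3 * (1 + r) / Real.pi) ^ n * (4 * c / (1 + r) / Real.pi) ^ n)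
        * (V ^ 2) ^ 2 * (ZH w1 r (-1) n * ZH w0 r 1 n) := by ring
    _ = _ := by rw [h2]; ring

/-- Odd size: the blocks are Gram matrices of `cos (2iφ)` and `sin ((2i+2)φ)`, the first row of the
cosine block being halved by the asymmetric position of the centre. -/
theorem TM_odd (hc : 0 < c) (hc1 : c < 1) (hr : 0 < r) (hr1 : r < 1)
    (hcr : c ^ 2 * (1 + r) ^ 2 = 4 * r) (n : ℕ) :
    (TM c r (n + (n + 1))).det
      = (2 * c) ^ ((n + (n + 1)) ^ 2) / Real.pi ^ (n + (n + 1))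
      * (1 + r) * (ZH w0 r (-1) (n + 1) * ZH w1 r 1 n) := by
  set S : Matrix (Fin n) (Fin (n + 1)) ℝ := Matrix.of fun j i => if i = j.succ then 1 else 0
    with hS
  have hl : ∀ {m : ℕ} (M : Matrix (Fin (n + 1)) (Fin m) ℝ) (j : Fin n) (i : Fin m),
      (S * M) j i = M j.succ i := by
    intro m M j i
    simp [hS, Matrix.mul_apply]
  have hr0 : ∀ {m : ℕ} (M : Matrix (Fin m) (Fin n) ℝ) (j : Fin m), (M * S) j 0 = 0 := by
    intro m M j
    simp only [hS, Matrix.mul_apply, Matrix.of_apply]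
    refine Finset.sum_eq_zero fun i _ => ?_
    rw [if_neg (Fin.succ_ne_zero i).symm, mul_zero]
  have hrs : ∀ {m : ℕ} (M : Matrix (Fin m) (Fin n) ℝ) (j : Fin m) (k : Fin n),
      (M * S) j k.succ = M j k := by
    intro m M j k
    simp [hS, Matrix.mul_apply, Fin.succ_inj]
  rw [TM_blocks, block_det _ _ _ _ S (by
    ext j i
    rw [Matrix.mul_assoc, Matrix.add_apply, Matrix.add_apply, hl, hl]
    refine Fin.cases ?_ (fun k => ?_) i
    · rw [hr0, hr0]
      simp only [Matrix.of_apply, Fin.val_succ, Fin.val_zero]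
      congr 2; push_cast; ring
    · rw [hrs, hrs]
      simp only [Matrix.of_apply, Fin.val_succ]
      rw [add_comm]
      congr 2 <;> push_cast <;> ring)]
  have e1 : (Matrix.of fun i k : Fin (n + 1) => tt c r (2 * ((i : ℝ) - k)))
      + (Matrix.of fun (i : Fin (n + 1)) (j : Fin n) => tt c r (2 * ((i : ℝ) + j + 1))) * S
      = Matrix.of fun i k : Fin (n + 1) =>
        (if k = 0 then 2 * c * (1 + r) / Real.pi else 4 * c * (1 + r) / Real.pi) *
        ip (wq w0 r (-1)) (Qp c 2 (-1) i) (Qp c 2 (-1) k) := by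
    ext i k
    have key := fun k : ℕ => tt_cos_even hc hc1 hr hr1 i k
    refine Fin.cases ?_ (fun k => ?_) k
    · have := key 0
      rw [Matrix.add_apply, hr0]
      simp only [Matrix.of_apply, if_true, Fin.val_zero]
      simp only [Nat.cast_zero, sub_zero, add_zero] at this ⊢
      have h2 : 4 * c * (1 + r) / Real.pi = 2 * (2 * c * (1 + r) / Real.pi) := by ring
      rw [h2] at this
      linarith
    · have := key (k + 1)
      rw [Matrix.add_apply, hrs]
      simp only [Matrix.of_apply, if_neg (Fin.succ_ne_zero k), Fin.val_succ]
      rw [← this]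
      congr 2; push_cast; ring
  have e2 : (Matrix.of fun i k : Fin n => tt c r (2 * ((i : ℝ) - k)))
      - S * (Matrix.of fun (i : Fin (n + 1)) (j : Fin n) => tt c r (2 * ((i : ℝ) + j + 1)))
      = Matrix.of fun i k : Fin n => (16 * c ^ 3 / (1 + r) / Real.pi) *
        ip (wq w1 r 1) (Qp c 4 (-2) i) (Qp c 4 (-2) k) := by
    ext i k
    rw [Matrix.sub_apply, hl]
    simp only [Matrix.of_apply, Fin.val_succ]
    rw [← tt_sin_even hc hc1 hr hr1 hcr i k]
    congr 2; push_cast; ring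
  rw [e1, e2, det_ip wt0.cont hr hr1 (-1)
      (fun k => if k = 0 then 2 * c * (1 + r) / Real.pi else 4 * c * (1 + r) / Real.pi)
      (fun i : Fin (n + 1) => Qp c 2 (-1) i) (fun i => (Qp_deg c 2 (-1) i).1),
    det_ip wt1.cont hr hr1 1 (fun _ => 16 * c ^ 3 / (1 + r) / Real.pi)
      (fun i : Fin n => Qp c 4 (-2) i) (fun i => (Qp_deg c 4 (-2) i).1)]
  have hv : (∏ k : Fin (n + 1),
      if k = 0 then 2 * c * (1 + r) / Real.pi else 4 * c * (1 + r) / Real.pi)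
      = 2 * c * (1 + r) / Real.pi * (4 * c * (1 + r) / Real.pi) ^ n := by
    rw [Fin.prod_univ_succ]
    simp only [if_true, if_neg (Fin.succ_ne_zero _), Finset.prod_const, Finset.card_univ,
      Fintype.card_fin]
  have hV := prod_pow_sq (4 * c ^ 2) n
  set V := ∏ i : Fin n, (4 * c ^ 2) ^ (i : ℕ)
  have hp : (∏ i : Fin (n + 1), (Qp c 2 (-1) i).coeff i) = (2 * c ^ 2) ^ n * V := by
    rw [Fin.prod_univ_succ]
    simp only [Fin.val_zero, Fin.val_succ, Qp_coeff_succ]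
    rw [← Fin.prod_const n (2 * c ^ 2), ← Finset.prod_mul_distrib]
    simp only [Qp, coeff_one_zero, one_mul]
    refine Finset.prod_congr rfl fun i _ => ?_
    ring
  simp only [Qp_coeff, Finset.prod_const, Finset.card_univ, Fintype.card_fin]
  rw [hv, hp]
  have h1 : (2 * c) ^ ((n + (n + 1)) ^ 2)
      = ((4 * c ^ 2) ^ (n ^ 2)) ^ 2 * ((4 * c ^ 2) ^ n) ^ 2 * (2 * c) := by
    rw [show (n + (n + 1)) ^ 2 = 2 * (n ^ 2 * 2) + 2 * (n * 2) + 1 by ring, pow_add, pow_add,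
      pow_mul, pow_mul, pow_mul _ 2 (n * 2), pow_mul _ n 2, pow_one, mul_pow 2 c 2]
    norm_num
  have h2 : (4 * c * (1 + r) / Real.pi) ^ n * (16 * c ^ 3 / (1 + r) / Real.pi) ^ n
      * ((2 * c ^ 2) ^ n) ^ 2 / Real.pi
      = (((4 * c ^ 2) ^ n) ^ 2) ^ 2 / Real.pi ^ (n + (n + 1)) := by
    have e : 4 * c * (1 + r) / Real.pi * (16 * c ^ 3 / (1 + r) / Real.pi) * (2 * c ^ 2) ^ 2
        = ((4 * c ^ 2) ^ 2) ^ 2 / Real.pi ^ 2 := by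
      field_simp; ring
    generalize 4 * c * (1 + r) / Real.pi = A at e ⊢
    generalize 16 * c ^ 3 / (1 + r) / Real.pi = B at e ⊢
    generalize 4 * c ^ 2 = x at e ⊢
    generalize 2 * c ^ 2 = y at e ⊢
    have e' : A ^ n * B ^ n * (y ^ n) ^ 2 = (A * B * y ^ 2) ^ n := by
      rw [mul_pow, mul_pow, ← pow_mul, ← pow_mul, mul_comm n 2]
    rw [e', e, div_pow, div_div, ← pow_mul Real.pi, ← pow_succ, ← pow_mul, ← pow_mul,
      ← pow_mul, ← pow_mul]
    congr 2 <;> ring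
  rw [h1, ← hV]
  calc _ = ((4 * c * (1 + r) / Real.pi) ^ n * (16 * c ^ 3 / (1 + r) / Real.pi) ^ n
        * ((2 * c ^ 2) ^ n) ^ 2 / Real.pi)
        * (V ^ 2) ^ 2 * (2 * c * (1 + r)) * (ZH w0 r (-1) (n + 1) * ZH w1 r 1 n) := by ring
    _ = _ := by rw [h2]; ring

end

/-! ### Fourier coefficients of the arc -/

/-- Fourier coefficients of the arc as real cosine integrals. -/
lemma fc_arc {μ : ℝ} (hμ : 0 < μ) (hμ' : μ < Real.pi) (ℓ : ℤ) :
    fourierCoeff2 (arcIndicator μ) ℓ =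
      ((1 / Real.pi * ∫ θ in μ..Real.pi, Real.cos (ℓ * θ) : ℝ) : ℂ) := by
  have hpi := Real.pi_pos
  set g : ℝ → ℂ := fun θ => Complex.exp (-Complex.I * (ℓ : ℂ) * (θ : ℂ)) with hg
  have hgc : Continuous g := by rw [hg]; fun_prop
  have h1 : ∫ θ in (0 : ℝ)..(2 * Real.pi), g θ * arcIndicator μ θ
      = ∫ θ in μ..(2 * Real.pi - μ), g θ := by
    rw [intervalIntegral.integral_of_le (by linarith), intervalIntegral.integral_of_le (by linarith),
      integral_Ioc_eq_integral_Ioo (x := μ)]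
    have : (fun θ => g θ * arcIndicator μ θ) = (Set.Ioo μ (2 * Real.pi - μ)).indicator g := by
      funext θ
      by_cases h : μ < θ ∧ θ < 2 * Real.pi - μ
      · rw [Set.indicator_of_mem (by exact h), arcIndicator, if_pos h, mul_one]
      · rw [Set.indicator_of_notMem (by exact h), arcIndicator, if_neg h, mul_zero]
    rw [this, integral_indicator measurableSet_Ioo, Measure.restrict_restrict measurableSet_Ioo,
      Set.inter_eq_left.mpr]
    intro θ hθ
    exact ⟨by linarith [hθ.1], by linarith [hθ.2]⟩
  have h2 : ∫ θ in Real.pi..(2 * Real.pi - μ), g θ = ∫ θ in μ..Real.pi, g (-θ) := by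
    have := intervalIntegral.integral_comp_sub_left (a := μ) (b := Real.pi) g (2 * Real.pi)
    rw [show 2 * Real.pi - Real.pi = Real.pi by ring] at this
    rw [← this]
    congr 1; funext θ
    simp only [hg]
    push_cast
    rw [show -Complex.I * (ℓ : ℂ) * (2 * (Real.pi : ℂ) - θ)
      = -Complex.I * (ℓ : ℂ) * (-θ) + ((-ℓ : ℤ) : ℂ) * (2 * Real.pi * Complex.I) by push_cast; ring,
      Complex.exp_add, Complex.exp_int_mul_two_pi_mul_I, mul_one]
  have h3 : ∀ θ : ℝ, g θ + g (-θ) = ((2 * Real.cos (ℓ * θ) : ℝ) : ℂ) := by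
    intro θ
    simp only [hg]
    push_cast
    rw [Complex.cos]
    rw [show -Complex.I * (ℓ : ℂ) * (θ : ℂ) = -((ℓ : ℂ) * θ) * Complex.I by ring,
      show -Complex.I * (ℓ : ℂ) * (-θ : ℂ) = ((ℓ : ℂ) * θ) * Complex.I by ring]
    ring
  have hgn : Continuous fun θ : ℝ => g (-θ) := hgc.comp continuous_neg
  rw [fourierCoeff2]
  change _ * ∫ θ in (0 : ℝ)..(2 * Real.pi), g θ * arcIndicator μ θ = _
  rw [h1, ← intervalIntegral.integral_add_adjacent_intervals (b := Real.pi)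
    (hgc.intervalIntegrable _ _) (hgc.intervalIntegrable _ _), h2,
    ← intervalIntegral.integral_add (hgc.intervalIntegrable _ _) (hgn.intervalIntegrable _ _)]
  simp only [h3]
  rw [intervalIntegral.integral_ofReal, intervalIntegral.integral_const_mul]
  push_cast
  have : (Real.pi : ℂ) ≠ 0 := by exact_mod_cast hpi.ne'
  field_simp

/-- The substitution `θ = 2 arccos (c s)`. -/
lemma tt_eq {c r : ℝ} (hc : 0 < c) (hc1 : c < 1) (hr : 0 < r) (hr1 : r < 1)
    (hcr : c ^ 2 * (1 + r) ^ 2 = 4 * r) (x : ℝ) :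
    tt c r (2 * x) = 1 / Real.pi * ∫ θ in (2 * Real.arccos c)..Real.pi, Real.cos (x * θ) := by
  have hin : ∀ s ∈ Set.Icc (0 : ℝ) 1, -1 < c * s ∧ c * s < 1 := fun s hs =>
    ⟨by nlinarith [mul_nonneg hc.le hs.1], by nlinarith [mul_le_mul_of_nonneg_left hs.2 hc.le]⟩
  have hpos : ∀ s ∈ Set.Icc (0 : ℝ) 1, 0 < 1 - (c * s) ^ 2 := fun s hs => by
    have := hin s hs
    nlinarith
  have hu : Set.uIcc (0 : ℝ) 1 = Set.Icc 0 1 := Set.uIcc_of_le zero_le_one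
  have hd : ∀ s ∈ Set.uIcc (0 : ℝ) 1, HasDerivAt (fun s => 2 * Real.arccos (c * s))
      (2 * (-(1 / Real.sqrt (1 - (c * s) ^ 2)) * c)) s := by
    intro s hs
    rw [hu] at hs
    have h1 : HasDerivAt (fun s : ℝ => c * s) c s := by simpa using (hasDerivAt_id s).const_mul c
    exact ((Real.hasDerivAt_arccos (hin s hs).1.ne' (hin s hs).2.ne).comp s h1).const_mul 2
  have hcont : ContinuousOn (fun s => 2 * (-(1 / Real.sqrt (1 - (c * s) ^ 2)) * c))
      (Set.uIcc (0 : ℝ) 1) := by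
    rw [hu]
    refine continuousOn_const.mul ((ContinuousOn.neg (continuousOn_const.div (by fun_prop)
      fun s hs => (Real.sqrt_pos.mpr (hpos s hs)).ne')).mul continuousOn_const)
  have key := intervalIntegral.integral_comp_mul_deriv (g := fun θ => Real.cos (x * θ)) hd hcont
    (by fun_prop)
  simp only [mul_zero, mul_one, Real.arccos_zero, Function.comp_def] at key
  rw [show 2 * (Real.pi / 2) = Real.pi by ring] at key
  rw [intervalIntegral.integral_symm, ← key, ← intervalIntegral.integral_neg, tt,
    ← unit_integral (fun s => -(Real.cos (x * (2 * Real.arccos (c * s))) *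
      (2 * (-(1 / Real.sqrt (1 - (c * s) ^ 2)) * c)))), ← integral_const_mul, ← integral_const_mul]
  congr 1; funext s
  have hs := sin_ph hr hr1 hcr s
  rw [ph, Real.sin_arccos] at hs
  have h1 : Real.exp (-1 / 2 * Real.log (qf r s))
      = 1 / (Real.sqrt (1 - (c * s) ^ 2)) / (1 + r) := by
    rw [hs, show -1 / 2 * Real.log (qf r s) = -(1 / 2 * Real.log (qf r s)) by ring, Real.exp_neg]
    have : (0 : ℝ) < 1 + r := by linarith
    field_simp
  simp only [wq, w0, h1, ph]
  have : (0 : ℝ) < 1 + r := by linarith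
  have := Real.sqrt_pos.mpr (hpos s s.2)
  have := Real.pi_pos
  rw [show 2 * x * Real.arccos (c * s) = x * (2 * Real.arccos (c * s)) by ring]
  field_simp

lemma arc_det {μ c r : ℝ} (hμ : 0 < μ) (hμ' : μ < Real.pi) (hcμ : c = Real.cos (μ / 2))
    (hc : 0 < c) (hc1 : c < 1) (hr : 0 < r) (hr1 : r < 1)
    (hcr : c ^ 2 * (1 + r) ^ 2 = 4 * r) (n : ℕ) :
    arcToeplitzDet μ n = (((TM c r n).det : ℝ) : ℂ) := by
  have hac : 2 * Real.arccos c = μ := by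
    rw [hcμ, Real.arccos_cos (by linarith) (by linarith)]; ring
  rw [arcToeplitzDet]
  have := RingHom.map_det Complex.ofRealHom (TM c r n)
  rw [Complex.ofRealHom_eq_coe] at this
  rw [this]
  congr 1
  ext j k
  simp only [TM, Matrix.of_apply, RingHom.mapMatrix_apply, Matrix.map_apply,
    Complex.ofRealHom_eq_coe]
  rw [fc_arc hμ hμ', tt_eq hc hc1 hr hr1 hcr, hac]
  push_cast
  rfl

/-! ### Comparison with the Legendre determinant -/

lemma NL_pos (k : ℕ) : 0 < NL k := by
  refine Finset.prod_pos fun j _ => ?_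
  unfold bb
  have : (0 : ℝ) ≤ j := j.cast_nonneg
  push_cast
  have h1 : (0 : ℝ) < 4 * ((j : ℝ) + 1) ^ 2 - 1 := by nlinarith
  positivity

/-- The factor `(qf r)^{τ/2}` changes the Hankel determinants by a convergent factor. -/
lemma ZH_lim {W π P} (h : Good W π P) {r τ : ℝ} (hr : 0 < r) (hr1 : r < 1)
    (hτ : τ = 1 ∨ τ = -1) :
    Tendsto (fun n => Real.log (ZH W r τ n) - ∑ k ∈ Finset.range n, Real.log (nu W π k)) atTop
      (𝓝 (τ / 2 * lamP P r + Gk r r / 8)) := by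
  refine (half_lim h hr hr1 hτ).congr fun n => ?_
  have hf : ((n.factorial : ℕ) : ℝ) ≠ 0 := by positivity
  have hp : ∏ k ∈ Finset.range n, nu W π k ≠ 0 :=
    Finset.prod_ne_zero_iff.mpr fun k _ => (h.wt.nu_pos h.ops k).ne'
  have hz : Zn (wq W r τ) n ≠ 0 :=
    (Zn_exp_pos h.wt (Zn_pos h.wt h.ops n) (logqf_cont hr hr1 τ)).ne'
  rw [Zn_OPS h.wt h.ops, Real.log_mul hf hp, ZH, Real.log_div hz hf,
    ← Real.log_prod fun k _ => (h.wt.nu_pos h.ops k).ne', hn]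
  change Real.log (Zn (wq W r τ) n) - _ = _
  ring

/-- Logarithm of the Legendre part `2^{N²} π^{-N} ∏_{k<N} NL k` of the determinant. -/
noncomputable def XL (N : ℕ) : ℝ :=
  ∑ k ∈ Finset.range N, Real.log (NL k) + (N : ℝ) ^ 2 * Real.log 2 - N * Real.log Real.pi

lemma sum_NL_even (n : ℕ) : ∑ k ∈ Finset.range (n + n), Real.log (NL k)
    = ∑ k ∈ Finset.range n, Real.log (nu w0 lg0 k)
      + ∑ k ∈ Finset.range n, Real.log (nu w1 lg1 k) := by
  induction n with
  | zero => simp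
  | succ n ih =>
    rw [show n + 1 + (n + 1) = n + n + 1 + 1 by ring, Finset.sum_range_succ, Finset.sum_range_succ,
      ih, Finset.sum_range_succ _ n, Finset.sum_range_succ _ n, (nu_NL n).1, (nu_NL n).2, two_mul]
    ring

lemma sum_NL_odd (n : ℕ) : ∑ k ∈ Finset.range (n + (n + 1)), Real.log (NL k)
    = ∑ k ∈ Finset.range (n + 1), Real.log (nu w0 lg0 k)
      + ∑ k ∈ Finset.range n, Real.log (nu w1 lg1 k) := by
  rw [show n + (n + 1) = n + n + 1 by ring, Finset.sum_range_succ, sum_NL_even,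
    Finset.sum_range_succ _ n, (nu_NL n).1, two_mul]
  ring

section

variable {c r : ℝ}

lemma TM_even_lim (hc : 0 < c) (hc1 : c < 1) (hr : 0 < r) (hr1 : r < 1)
    (hcr : c ^ 2 * (1 + r) ^ 2 = 4 * r) :
    Tendsto (fun n : ℕ => Real.log (TM c r (n + n)).det
      - ((n + n : ℕ) : ℝ) ^ 2 * Real.log c - XL (n + n)) atTop
      (𝓝 (1 / 4 * (Real.log (1 + r) - Real.log (1 - r)))) := by
  have h := (ZH_lim good1 hr hr1 (Or.inr rfl)).add (ZH_lim good0 hr hr1 (Or.inl rfl))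
  have e : (-1 / 2 * lamP P1 r + Gk r r / 8) + (1 / 2 * lamP P0 r + Gk r r / 8)
      = 1 / 4 * (Real.log (1 + r) - Real.log (1 - r)) := by
    have h1 : (0 : ℝ) < 1 + r := by linarith
    have h2 : (0 : ℝ) < 1 - r := by linarith
    rw [lamP0 hr hr1, lamP1 hr hr1, Gk, show 1 - r * r = (1 + r) * (1 - r) by ring,
      Real.log_mul h1.ne' h2.ne']
    ring
  rw [e] at h
  refine h.congr fun n => ?_
  have hz1 := (ZH_pos good1 hr hr1 (-1) n).ne'
  have hz0 := (ZH_pos good0 hr hr1 1 n).ne'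
  have hpi := Real.pi_pos
  rw [TM_even hc hc1 hr hr1 hcr, Real.log_mul (by positivity) (mul_ne_zero hz1 hz0),
    Real.log_mul hz1 hz0, Real.log_div (by positivity) (by positivity), Real.log_pow, Real.log_pow,
    Real.log_mul two_ne_zero hc.ne', XL, sum_NL_even]
  push_cast
  ring

lemma TM_odd_lim (hc : 0 < c) (hc1 : c < 1) (hr : 0 < r) (hr1 : r < 1)
    (hcr : c ^ 2 * (1 + r) ^ 2 = 4 * r) :
    Tendsto (fun n : ℕ => Real.log (TM c r (n + (n + 1))).det
      - ((n + (n + 1) : ℕ) : ℝ) ^ 2 * Real.log c - XL (n + (n + 1))) atTop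
      (𝓝 (1 / 4 * (Real.log (1 + r) - Real.log (1 - r)))) := by
  have h := (((ZH_lim good0 hr hr1 (Or.inr rfl)).comp (tendsto_add_atTop_nat 1)).add
    (ZH_lim good1 hr hr1 (Or.inl rfl))).add_const (Real.log (1 + r))
  have h1 : (0 : ℝ) < 1 + r := by linarith
  have e : (-1 / 2 * lamP P0 r + Gk r r / 8) + (1 / 2 * lamP P1 r + Gk r r / 8) + Real.log (1 + r)
      = 1 / 4 * (Real.log (1 + r) - Real.log (1 - r)) := by
    have h2 : (0 : ℝ) < 1 - r := by linarith
    rw [lamP0 hr hr1, lamP1 hr hr1, Gk, show 1 - r * r = (1 + r) * (1 - r) by ring,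
      Real.log_mul h1.ne' h2.ne']
    ring
  rw [e] at h
  refine h.congr fun n => ?_
  have hz0 := (ZH_pos good0 hr hr1 (-1) (n + 1)).ne'
  have hz1 := (ZH_pos good1 hr hr1 1 n).ne'
  have hpi := Real.pi_pos
  rw [TM_odd hc hc1 hr hr1 hcr, Real.log_mul (by positivity) (mul_ne_zero hz0 hz1),
    Real.log_mul hz0 hz1, Real.log_mul (by positivity) h1.ne',
    Real.log_div (by positivity) (by positivity), Real.log_pow, Real.log_pow,
    Real.log_mul two_ne_zero hc.ne', XL, sum_NL_odd]
  simp only [Function.comp_apply]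
  push_cast
  ring

/-- The Toeplitz determinant differs from `c^{n²}` times its Legendre part by a convergent factor. Its
limit is `σ^{-1/4}`, as `σ = (1 - r)/(1 + r)`. -/
lemma TM_lim (hc : 0 < c) (hc1 : c < 1) (hr : 0 < r) (hr1 : r < 1)
    (hcr : c ^ 2 * (1 + r) ^ 2 = 4 * r) :
    Tendsto (fun n : ℕ => Real.log (TM c r n).det - (n : ℝ) ^ 2 * Real.log c - XL n) atTop
      (𝓝 (1 / 4 * (Real.log (1 + r) - Real.log (1 - r)))) := by
  have h0 := TM_even_lim hc hc1 hr hr1 hcr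
  have h1 := TM_odd_lim hc hc1 hr hr1 hcr
  rw [Metric.tendsto_atTop] at h0 h1 ⊢
  intro ε hε
  obtain ⟨N0, h0⟩ := h0 ε hε
  obtain ⟨N1, h1⟩ := h1 ε hε
  refine ⟨2 * (N0 + N1) + 1, fun n hn => ?_⟩
  rcases Nat.even_or_odd' n with ⟨k, rfl | rfl⟩
  · rw [two_mul]; exact h0 k (by omega)
  · rw [show 2 * k + 1 = k + (k + 1) by ring]; exact h1 k (by omega)

lemma TM_pos (hc : 0 < c) (hc1 : c < 1) (hr : 0 < r) (hr1 : r < 1)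
    (hcr : c ^ 2 * (1 + r) ^ 2 = 4 * r) (n : ℕ) : 0 < (TM c r n).det := by
  have hpi := Real.pi_pos
  have h1 : (0 : ℝ) < 1 + r := by linarith
  rcases Nat.even_or_odd' n with ⟨k, rfl | rfl⟩
  · rw [two_mul, TM_even hc hc1 hr hr1 hcr]
    have := ZH_pos good1 hr hr1 (-1) k
    have := ZH_pos good0 hr hr1 1 k
    positivity
  · rw [show 2 * k + 1 = k + (k + 1) by ring, TM_odd hc hc1 hr hr1 hcr]
    have := ZH_pos good0 hr hr1 (-1) (k + 1)
    have := ZH_pos good1 hr hr1 1 k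
    positivity

end

/-! ### Euler–Maclaurin approximation of the zeta function near `-1` -/

/-- `(s - 1)` times the Euler–Maclaurin approximation of `ζ(s)` from the first `N` terms. -/
noncomputable def EM (N : ℕ) (s : ℂ) : ℂ :=
  (s - 1) * ∑ k ∈ Finset.range N, ((k + 1 : ℕ) : ℂ) ^ (-s) + (N : ℂ) ^ (1 - s)
    - (s - 1) / 2 * (N : ℂ) ^ (-s) + s * (s - 1) / 12 * (N : ℂ) ^ (-s - 1)

lemma hasDerivAt_cpow_real (a : ℂ) {t : ℝ} (ht : 0 < t) :
    HasDerivAt (fun t : ℝ => (t : ℂ) ^ a) (a * (t : ℂ) ^ (a - 1)) t :=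
  (Complex.hasStrictDerivAt_cpow_const (Or.inl (by simpa using ht))).hasDerivAt.comp_ofReal

/-- Third-order Euler–Maclaurin estimate. The increment of `EM` is the integral over `[N, N + 1]` of
`(s - 1) B₃(t - N) / 6` times the third derivative of `t^{-s}`. -/
lemma EM_step {N : ℕ} (hN : 1 ≤ N) {s : ℂ} (hs : -(3 / 2) < s.re) :
    ‖EM (N + 1) s - EM N s‖ ≤ ‖(s - 1) * s * (s + 1) * (s + 2)‖ * (N : ℝ) ^ (-(3 / 2) : ℝ) := by
  have hN0 : (0 : ℝ) < N := by exact_mod_cast hN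
  have hN1 : (1 : ℝ) ≤ N := by exact_mod_cast hN
  set Φ : ℝ → ℂ := fun t => (s - 1) *
    ((((t - N) ^ 3 - 3 / 2 * (t - N) ^ 2 + 1 / 2 * (t - N) : ℝ) : ℂ) / 6 *
        (s * (s + 1) * (t : ℂ) ^ (-s - 2))
      + (((t - N) ^ 2 - (t - N) + 1 / 6 : ℝ) : ℂ) / 2 * (s * (t : ℂ) ^ (-s - 1))
      + (((t - N) - 1 / 2 : ℝ) : ℂ) * (t : ℂ) ^ (-s)) + (t : ℂ) ^ (1 - s) with hΦ
  have hd : ∀ t : ℝ, 0 < t → HasDerivAt Φ (-(s - 1) *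
      ((((t - N) ^ 3 - 3 / 2 * (t - N) ^ 2 + 1 / 2 * (t - N) : ℝ) : ℂ) / 6 *
        (s * (s + 1) * (s + 2) * (t : ℂ) ^ (-s - 3)))) t := by
    intro t ht
    have h3 : HasDerivAt (fun t : ℝ => (((t - N) ^ 3 - 3 / 2 * (t - N) ^ 2 + 1 / 2 * (t - N) : ℝ) : ℂ))
        ((3 * (t - N) ^ 2 - 3 * (t - N) + 1 / 2 : ℝ) : ℂ) t := by
      apply HasDerivAt.ofReal_comp
      have h0 : HasDerivAt (fun t : ℝ => t - N) 1 t := (hasDerivAt_id t).sub_const _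
      exact (((h0.pow 3).sub ((h0.pow 2).const_mul (3 / 2))).add (h0.const_mul (1 / 2))).congr_deriv
        (by push_cast; ring)
    have h2 : HasDerivAt (fun t : ℝ => (((t - N) ^ 2 - (t - N) + 1 / 6 : ℝ) : ℂ))
        ((2 * (t - N) - 1 : ℝ) : ℂ) t := by
      apply HasDerivAt.ofReal_comp
      have h0 : HasDerivAt (fun t : ℝ => t - N) 1 t := (hasDerivAt_id t).sub_const _
      exact (((h0.pow 2).sub h0).add_const (1 / 6)).congr_deriv (by push_cast; ring)
    have h1 : HasDerivAt (fun t : ℝ => (((t - N) - 1 / 2 : ℝ) : ℂ)) ((1 : ℝ) : ℂ) t := by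
      apply HasDerivAt.ofReal_comp
      exact ((hasDerivAt_id t).sub_const _).sub_const _
    have k2 := hasDerivAt_cpow_real (-s - 2) ht
    have k1 := hasDerivAt_cpow_real (-s - 1) ht
    have k0 := hasDerivAt_cpow_real (-s) ht
    have k := hasDerivAt_cpow_real (1 - s) ht
    refine ((((((h3.div_const 6).mul (k2.const_mul (s * (s + 1)))).add
      ((h2.div_const 2).mul (k1.const_mul s))).add (h1.mul k0)).const_mul (s - 1)).add
      k).congr_deriv ?_
    rw [show -s - 2 - 1 = -s - 3 by ring, show -s - 1 - 1 = -s - 2 by ring,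
      show 1 - s - 1 = -s by ring]
    push_cast
    ring
  have hb : ∀ t ∈ Set.Icc (N : ℝ) (N + 1), ‖-(s - 1) *
      ((((t - N) ^ 3 - 3 / 2 * (t - N) ^ 2 + 1 / 2 * (t - N) : ℝ) : ℂ) / 6 *
        (s * (s + 1) * (s + 2) * (t : ℂ) ^ (-s - 3)))‖
      ≤ ‖(s - 1) * s * (s + 1) * (s + 2)‖ * (N : ℝ) ^ (-(3 / 2) : ℝ) := by
    intro t ht
    have ht0 : 0 < t := lt_of_lt_of_le hN0 ht.1
    have hB : ‖(((t - N) ^ 3 - 3 / 2 * (t - N) ^ 2 + 1 / 2 * (t - N) : ℝ) : ℂ) / 6‖ ≤ 1 := by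
      rw [norm_div, Complex.norm_real, Real.norm_eq_abs]
      have h0 : 0 ≤ t - N := by linarith [ht.1]
      have h1 : t - N ≤ 1 := by linarith [ht.2]
      generalize t - N = u at h0 h1
      have h2 : 0 ≤ u ^ 2 := by positivity
      have h3 : 0 ≤ u ^ 3 := by positivity
      have h4 : u ^ 2 ≤ 1 := by nlinarith
      have h5 : u ^ 3 ≤ 1 := by nlinarith
      have h6 : |u ^ 3 - 3 / 2 * u ^ 2 + 1 / 2 * u| ≤ 6 := by rw [abs_le]; constructor <;> linarith
      have h7 : ‖(6 : ℂ)‖ = 6 := by simp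
      rw [h7, div_le_one (by norm_num)]; exact h6
    have hp : ‖(t : ℂ) ^ (-s - 3)‖ ≤ (N : ℝ) ^ (-(3 / 2) : ℝ) := by
      rw [Complex.norm_cpow_eq_rpow_re_of_pos ht0]
      have : (-s - 3).re ≤ -(3 / 2) := by simp; linarith
      calc t ^ (-s - 3).re ≤ t ^ (-(3 / 2) : ℝ) :=
            Real.rpow_le_rpow_of_exponent_le (hN1.trans ht.1) this
        _ ≤ _ := Real.rpow_le_rpow_of_nonpos hN0 ht.1 (by norm_num)
    calc _ = ‖(s - 1) * s * (s + 1) * (s + 2)‖ *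
          (‖(((t - N) ^ 3 - 3 / 2 * (t - N) ^ 2 + 1 / 2 * (t - N) : ℝ) : ℂ) / 6‖
            * ‖(t : ℂ) ^ (-s - 3)‖) := by
          simp only [norm_mul, norm_neg]; ring
      _ ≤ ‖(s - 1) * s * (s + 1) * (s + 2)‖ * (1 * (N : ℝ) ^ (-(3 / 2) : ℝ)) := by gcongr
      _ = _ := by rw [one_mul]
  have key := (convex_Icc (N : ℝ) (N + 1)).norm_image_sub_le_of_norm_hasDerivWithin_le
    (fun t ht => (hd t (lt_of_lt_of_le hN0 ht.1)).hasDerivWithinAt) hb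
    (Set.left_mem_Icc.mpr (by linarith)) (Set.right_mem_Icc.mpr (by linarith))
  rw [add_sub_cancel_left, norm_one, mul_one] at key
  have e : EM (N + 1) s - EM N s = Φ (N + 1) - Φ N := by
    simp only [hΦ, EM, Finset.sum_range_succ]
    push_cast
    ring
  rw [e]; exact key

/-- On `Re s > 1` the approximations converge to `(s - 1) ζ(s)`, since the correction terms vanish. -/
lemma EM_tendsto_right {s : ℂ} (hs : 1 < s.re) :
    Tendsto (fun N => EM N s) atTop (𝓝 (riemannZeta₁ s)) := by
  have h0 : ∀ a : ℂ, a.re < 0 → Tendsto (fun N : ℕ => (N : ℂ) ^ a) atTop (𝓝 0) := by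
    intro a ha
    rw [tendsto_zero_iff_norm_tendsto_zero]
    have h := (tendsto_rpow_neg_atTop (y := -a.re) (by linarith)).comp (tendsto_natCast_atTop_atTop
      (R := ℝ))
    refine h.congr' ?_
    filter_upwards [eventually_gt_atTop 0] with N hN
    rw [Complex.norm_natCast_cpow_of_pos hN, Function.comp_apply, neg_neg]
  have h1 : Tendsto (fun N => ∑ k ∈ Finset.range N, ((k + 1 : ℕ) : ℂ) ^ (-s)) atTop
      (𝓝 (riemannZeta s)) := by
    rw [zeta_eq_tsum_one_div_nat_add_one_cpow hs]
    have hsum : Summable fun n : ℕ => 1 / ((n : ℂ) + 1) ^ s := by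
      have := (Complex.summable_one_div_nat_cpow.mpr hs)
      have := (summable_nat_add_iff 1).mpr this
      simpa using this
    refine hsum.hasSum.tendsto_sum_nat.congr fun N => Finset.sum_congr rfl fun k _ => ?_
    rw [Complex.cpow_neg, one_div]; push_cast; rfl
  have hs1 : s ≠ 1 := by rintro rfl; simp at hs
  have h2 := (((h1.const_mul (s - 1)).add (h0 (1 - s) (by simp; linarith))).sub
    ((h0 (-s) (by simp; linarith)).const_mul ((s - 1) / 2))).add
    ((h0 (-s - 1) (by simp; linarith)).const_mul (s * (s - 1) / 12))
  have e : (s - 1) * riemannZeta s + 0 - (s - 1) / 2 * 0 + s * (s - 1) / 12 * 0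
      = riemannZeta₁ s := by
    rw [riemannZeta_eq_inv_sub_mul hs1, ← mul_assoc, mul_inv_cancel₀ (sub_ne_zero.mpr hs1)]
    ring
  rw [e] at h2
  exact h2

lemma EM_diff {N : ℕ} (hN : 1 ≤ N) : Differentiable ℂ (EM N) := by
  have hc : ∀ k : ℕ, 1 ≤ k → ∀ f : ℂ → ℂ, Differentiable ℂ f →
      Differentiable ℂ fun s => (k : ℂ) ^ f s := by
    intro k hk f hf
    have : (k : ℂ) ≠ 0 := by exact_mod_cast (by omega : k ≠ 0)
    exact hf.const_cpow (Or.inl this)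
  unfold EM
  have h1 : Differentiable ℂ fun s : ℂ => ∑ k ∈ Finset.range N, ((k + 1 : ℕ) : ℂ) ^ (-s) :=
    Differentiable.fun_sum fun k _ => hc (k + 1) (by omega) _ (by fun_prop)
  have h2 := hc N hN (fun s => 1 - s) (by fun_prop)
  have h3 := hc N hN (fun s => -s) (by fun_prop)
  have h4 := hc N hN (fun s => -s - 1) (by fun_prop)
  fun_prop

/-- The region on which the approximations converge uniformly. -/
def EU : Set ℂ := {s | -(3 / 2) < s.re} ∩ Metric.ball 0 4

lemma EU_open : IsOpen EU :=
  (isOpen_lt continuous_const Complex.continuous_re).inter Metric.isOpen_ball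

/-- Uniform convergence of the Euler–Maclaurin approximations, from the summable bound `EM_step`. -/
lemma EM_unif : ∃ g : ℂ → ℂ, TendstoUniformlyOn (fun N s => EM (N + 1) s) g atTop EU := by
  have hsum : Summable fun n : ℕ => (1000 : ℝ) * ((n + 1 : ℕ) : ℝ) ^ (-(3 / 2) : ℝ) :=
    ((summable_nat_add_iff 1).mpr (Real.summable_nat_rpow.mpr (by norm_num))).mul_left _
  have h := tendstoUniformlyOn_tsum_nat (f := fun n s => EM (n + 1 + 1) s - EM (n + 1) s) (s := EU)
    hsum (by
      intro n s hs
      refine (EM_step (by omega) hs.1).trans ?_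
      have h4 : ‖s‖ < 4 := by simpa using hs.2
      have h1 : ‖s - 1‖ ≤ 5 := (norm_sub_le _ _).trans (by rw [norm_one]; linarith)
      have h2 : ‖s + 1‖ ≤ 5 := (norm_add_le _ _).trans (by rw [norm_one]; linarith)
      have h3 : ‖s + 2‖ ≤ 6 := (norm_add_le _ _).trans (by
        have : ‖(2 : ℂ)‖ = 2 := by simp
        linarith)
      gcongr
      rw [norm_mul, norm_mul, norm_mul]
      calc _ ≤ (5 : ℝ) * 4 * 5 * 6 := by gcongr
        _ ≤ 1000 := by norm_num)
  refine ⟨fun s => EM 1 s + ∑' n, (EM (n + 1 + 1) s - EM (n + 1) s), ?_⟩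
  rw [Metric.tendstoUniformlyOn_iff] at h ⊢
  intro ε hε
  filter_upwards [h ε hε] with N hN s hs
  have := hN s hs
  rw [Finset.sum_range_sub (fun n => EM (n + 1) s)] at this
  rw [dist_eq_norm] at this ⊢
  convert this using 2
  ring

/-- By the identity theorem the limit is `(s - 1) ζ(s)` on all of `EU`; locally uniform convergence of
holomorphic functions passes to the derivatives. -/
lemma EM_deriv_tendsto :
    Tendsto (fun N => deriv (EM (N + 1)) (-1)) atTop (𝓝 (deriv riemannZeta₁ (-1))) := by
  obtain ⟨g, hg⟩ := EM_unif
  have hl := hg.tendstoLocallyUniformlyOn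
  have hF : ∀ᶠ N in atTop, DifferentiableOn ℂ (fun s => EM (N + 1) s) EU :=
    Eventually.of_forall fun N => (EM_diff (by omega)).differentiableOn
  have hgd := hl.differentiableOn hF EU_open
  have hm1 : (-1 : ℂ) ∈ EU := by
    constructor
    · show -(3 / 2) < (-1 : ℂ).re
      norm_num
    · simp
  have hm2 : (2 : ℂ) ∈ EU := by
    constructor
    · show -(3 / 2) < (2 : ℂ).re
      norm_num
    · simp; norm_num
  have hpre : IsPreconnected EU :=
    ((convex_halfSpace_re_gt (-(3 / 2))).inter (convex_ball 0 4)).isPreconnected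
  have heq : Set.EqOn g riemannZeta₁ EU := by
    refine (hgd.analyticOnNhd EU_open).eqOn_of_preconnected_of_eventuallyEq
      (fun s _ => (differentiable_riemannZeta₁.analyticAt s)) hpre hm2 ?_
    have : {s : ℂ | 1 < s.re} ∩ EU ∈ 𝓝 (2 : ℂ) :=
      ((isOpen_lt continuous_const Complex.continuous_re).inter EU_open).mem_nhds
        ⟨by show (1 : ℝ) < (2 : ℂ).re; norm_num, hm2⟩
    filter_upwards [this] with s hs
    exact tendsto_nhds_unique (hl.tendsto_at hs.2)
      ((EM_tendsto_right hs.1).comp (tendsto_add_atTop_nat 1))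
  have hd := (hl.deriv hF EU_open).tendsto_at hm1
  have e : deriv g (-1) = deriv riemannZeta₁ (-1) :=
    (heq.eventuallyEq_of_mem (EU_open.mem_nhds hm1)).deriv_eq
  rw [e] at hd
  exact hd

/-! ### The Legendre constant -/

/-- `∑_{k ≤ N} k log k`. -/
noncomputable def SK (N : ℕ) : ℝ :=
  ∑ k ∈ Finset.range N, ((k + 1 : ℕ) : ℝ) * Real.log ((k + 1 : ℕ) : ℝ)

lemma EM_deriv {N : ℕ} (hN : 1 ≤ N) : deriv (EM N) (-1) =
    ((2 * SK N - ((N : ℝ) ^ 2 + N + 1 / 6) * Real.log N + (N : ℝ) ^ 2 / 2 - 1 / 4 : ℝ) : ℂ) := by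
  have hc : ∀ k : ℕ, 1 ≤ k → ∀ (f : ℂ → ℂ) (f' : ℂ), HasDerivAt f f' (-1) →
      HasDerivAt (fun s => (k : ℂ) ^ f s) ((k : ℂ) ^ f (-1) * Complex.log k * f') (-1) := by
    intro k hk f f' hf
    have : (k : ℂ) ≠ 0 := by exact_mod_cast (by omega : k ≠ 0)
    exact hf.const_cpow (Or.inl this)
  have hid := hasDerivAt_id (-1 : ℂ)
  have h1 : HasDerivAt (fun s : ℂ => ∑ k ∈ Finset.range N, ((k + 1 : ℕ) : ℂ) ^ (-s))
      (∑ k ∈ Finset.range N, -(((k + 1 : ℕ) : ℂ) * Complex.log ((k + 1 : ℕ) : ℂ))) (-1) := by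
    refine HasDerivAt.fun_sum fun k _ => ?_
    refine (hc (k + 1) (by omega) (fun s => -s) (-1) hid.neg).congr_deriv ?_
    rw [neg_neg, Complex.cpow_one]; ring
  have h2 := hc N hN (fun s => 1 - s) (-1) (hid.const_sub 1)
  have h3 := hc N hN (fun s => -s) (-1) hid.neg
  have h4 := hc N hN (fun s => -s - 1) (-1) (hid.neg.sub_const 1)
  have h5 : HasDerivAt (fun s : ℂ => s - 1) 1 (-1) := hid.sub_const 1
  have h6 : HasDerivAt (fun s : ℂ => s * (s - 1) / 12) (-3 / 12) (-1) :=
    ((hid.mul h5).div_const 12).congr_deriv (by simp only [id]; norm_num)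
  have key := ((((h5.mul h1).add h2).sub ((h5.div_const 2).mul h3)).add (h6.mul h4)).deriv
  change deriv (EM N) (-1) = _ at key
  rw [key]
  have hs : ∀ n : ℕ, ∑ k ∈ Finset.range n, ((k + 1 : ℕ) : ℂ) = (n : ℂ) * (n + 1) / 2 := by
    intro n
    induction n with
    | zero => simp
    | succ n ih => rw [Finset.sum_range_succ, ih]; push_cast; ring
  have e1 : (1 : ℂ) - -1 = (2 : ℕ) := by norm_num
  have e3 : -(-1 : ℂ) = 1 := by norm_num
  simp only [Finset.sum_neg_distrib, e1, e3, sub_self, Complex.cpow_natCast,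
    Complex.cpow_zero, Complex.cpow_one, hs]
  rw [SK]
  simp only [← Complex.natCast_log]
  push_cast
  ring

/-- Asymptotics of `∑ k log k` (the Glaisher–Kinkelin constant is `exp` of the limit). -/
lemma SK_lim : Tendsto (fun N : ℕ => SK N - ((N : ℝ) ^ 2 / 2 + N / 2 + 1 / 12) * Real.log N
    + (N : ℝ) ^ 2 / 4) atTop (𝓝 (1 / 12 - (deriv riemannZeta (-1)).re)) := by
  have hz : riemannZeta (-1) = -1 / 12 := by
    have := riemannZeta_neg_nat_eq_bernoulli' 1
    norm_num [bernoulli'_two] at this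
    rw [this]; norm_num
  have hd : deriv riemannZeta₁ (-1) = riemannZeta (-1) + (-2) * deriv riemannZeta (-1) := by
    have he : riemannZeta₁ =ᶠ[𝓝 (-1 : ℂ)] fun s => (s - 1) * riemannZeta s := by
      have : ∀ᶠ s in 𝓝 (-1 : ℂ), s ≠ 1 := isOpen_ne.mem_nhds (by norm_num)
      filter_upwards [this] with s hs
      rw [riemannZeta_eq_inv_sub_mul hs, ← mul_assoc, mul_inv_cancel₀ (sub_ne_zero.mpr hs), one_mul]
    rw [he.deriv_eq]
    have h1 : HasDerivAt (fun s : ℂ => s - 1) 1 (-1) := (hasDerivAt_id _).sub_const 1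
    have h2 : HasDerivAt riemannZeta (deriv riemannZeta (-1)) (-1) :=
      (differentiableAt_riemannZeta (by norm_num)).hasDerivAt
    change deriv ((fun s : ℂ => s - 1) * riemannZeta) (-1) = _
    rw [(h1.mul h2).deriv]
    norm_num
  have h := (Complex.continuous_re.tendsto _).comp EM_deriv_tendsto
  rw [hd, hz] at h
  have h' := (h.const_mul (1 / 2)).add_const (1 / 8)
  have e : 1 / 2 * (-1 / 12 + (-2) * deriv riemannZeta (-1)).re + 1 / 8
      = 1 / 12 - (deriv riemannZeta (-1)).re := by
    rw [Complex.add_re, Complex.mul_re]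
    norm_num
    ring
  rw [e] at h'
  rw [← tendsto_add_atTop_iff_nat 1]
  refine h'.congr fun N => ?_
  rw [Function.comp_apply, EM_deriv (by omega), Complex.ofReal_re]
  ring

/-- The Stirling remainder `log (N! / (√(2πN) (N/e)^N))`. -/
noncomputable def se (N : ℕ) : ℝ := Real.log (Stirling.stirlingSeq N) - Real.log (√Real.pi)

lemma se_lim : Tendsto se atTop (𝓝 0) := by
  have h := ((Real.continuousAt_log (Real.sqrt_pos.mpr Real.pi_pos).ne').tendsto.comp
    Stirling.tendsto_stirlingSeq_sqrt_pi).sub_const (Real.log (√Real.pi))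
  rw [sub_self] at h
  exact h

/-- Telescoping: the increments of `se` are bounded by those of `1 / (12 N)`. -/
lemma se_upper (N : ℕ) : se (N + 1) ≤ 1 / (12 * ((N : ℝ) + 1)) := by
  have hm : Monotone fun N : ℕ => se (N + 1) - 1 / (12 * ((N : ℝ) + 1)) := by
    refine monotone_nat_of_le_succ fun N => ?_
    have h := Stirling.log_stirlingSeq_sdiff_le (N + 1)
    have e : 1 / (12 * ((N + 1 : ℕ) : ℝ) * (((N + 1 : ℕ) : ℝ) + 1))
        = 1 / (12 * ((N : ℝ) + 1)) - 1 / (12 * (((N + 1 : ℕ) : ℝ) + 1)) := by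
      push_cast
      field_simp
      ring
    rw [e] at h
    unfold se
    linarith
  have hl : Tendsto (fun N : ℕ => se (N + 1) - 1 / (12 * ((N : ℝ) + 1))) atTop (𝓝 0) := by
    have h := (se_lim.comp (tendsto_add_atTop_nat 1)).sub
      (tendsto_one_div_add_atTop_nhds_zero_nat.const_mul (1 / 12 : ℝ))
    rw [mul_zero, sub_zero] at h
    refine h.congr fun N => ?_
    rw [Function.comp_apply]
    field_simp
  have : se (N + 1) - 1 / (12 * ((N : ℝ) + 1)) ≤ 0 := hm.ge_of_tendsto hl N
  linarith

/-- Telescoping: the increments of `se` are bounded by those of `1 / (12 (N + 1/2))`. -/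
lemma se_lower (N : ℕ) : 1 / (12 * ((N : ℝ) + 3 / 2)) ≤ se (N + 1) := by
  have hm : Antitone fun N : ℕ => se (N + 1) - 1 / (12 * ((N : ℝ) + 3 / 2)) := by
    refine antitone_nat_of_succ_le fun N => ?_
    have h := le_hasSum (Stirling.log_stirlingSeq_sdiff_hasSum N) 0 (fun k _ => by positivity)
    have e : 1 / (12 * ((N : ℝ) + 3 / 2)) - 1 / (12 * (((N + 1 : ℕ) : ℝ) + 3 / 2))
        ≤ 1 / (2 * ((0 + 1 : ℕ) : ℝ) + 1) * ((1 / (2 * ((N + 1 : ℕ) : ℝ) + 1)) ^ 2) ^ (0 + 1) := by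
      have hN : (0 : ℝ) ≤ N := N.cast_nonneg
      have e2 : 1 / (2 * ((0 + 1 : ℕ) : ℝ) + 1) * ((1 / (2 * ((N + 1 : ℕ) : ℝ) + 1)) ^ 2) ^ (0 + 1)
          = 1 / (3 * (2 * (N : ℝ) + 3) ^ 2) := by
        rw [zero_add, pow_one, div_pow, div_mul_div_comm, one_pow, one_mul]
        push_cast
        congr 1
        ring
      rw [e2]
      push_cast
      rw [div_sub_div _ _ (by positivity) (by positivity),
        div_le_div_iff₀ (by positivity) (by positivity)]
      nlinarith [mul_nonneg hN hN]
    have := e.trans h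
    unfold se
    linarith
  have hl : Tendsto (fun N : ℕ => se (N + 1) - 1 / (12 * ((N : ℝ) + 3 / 2))) atTop (𝓝 0) := by
    have h0 : Tendsto (fun N : ℕ => 12 * ((N : ℝ) + 3 / 2)) atTop atTop :=
      (tendsto_natCast_atTop_atTop.atTop_add tendsto_const_nhds).const_mul_atTop (by norm_num)
    have h := (se_lim.comp (tendsto_add_atTop_nat 1)).sub (h0.inv_tendsto_atTop)
    rw [sub_zero] at h
    refine h.congr fun N => ?_
    simp
  have : 0 ≤ se (N + 1) - 1 / (12 * ((N : ℝ) + 3 / 2)) := hm.le_of_tendsto hl N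
  linarith

lemma N_se_lim : Tendsto (fun N : ℕ => (N : ℝ) * se N) atTop (𝓝 (1 / 12)) := by
  rw [← tendsto_add_atTop_iff_nat 1]
  have h1 : Tendsto (fun N : ℕ => 1 / 12 - 1 / 24 * ((N : ℝ) + 3 / 2)⁻¹) atTop (𝓝 (1 / 12)) := by
    have h0 : Tendsto (fun N : ℕ => (N : ℝ) + 3 / 2) atTop atTop :=
      tendsto_natCast_atTop_atTop.atTop_add tendsto_const_nhds
    have := (h0.inv_tendsto_atTop.const_mul (1 / 24)).const_sub (1 / 12 : ℝ)
    rw [mul_zero, sub_zero] at this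
    exact this
  refine tendsto_of_tendsto_of_tendsto_of_le_of_le h1 tendsto_const_nhds (fun N => ?_) fun N => ?_
  · have h := se_lower N
    have hN : (0 : ℝ) ≤ N := N.cast_nonneg
    have h2 := mul_le_mul_of_nonneg_left h (by positivity : (0 : ℝ) ≤ (N : ℝ) + 1)
    have e : ((N : ℝ) + 1) * (1 / (12 * ((N : ℝ) + 3 / 2)))
        = 1 / 12 - 1 / 24 * ((N : ℝ) + 3 / 2)⁻¹ := by field_simp; ring
    rw [e] at h2
    push_cast; exact h2
  · have h := se_upper N
    have hN : (0 : ℝ) ≤ N := N.cast_nonneg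
    have h2 := mul_le_mul_of_nonneg_left h (by positivity : (0 : ℝ) ≤ (N : ℝ) + 1)
    have e : ((N : ℝ) + 1) * (1 / (12 * ((N : ℝ) + 1))) = 1 / 12 := by field_simp
    rw [e] at h2
    push_cast; exact h2

lemma log_fact {N : ℕ} (hN : 1 ≤ N) : Real.log (N.factorial : ℝ) =
    N * Real.log N - N + 1 / 2 * Real.log N + 1 / 2 * Real.log 2 + 1 / 2 * Real.log Real.pi
      + se N := by
  have hN0 : (0 : ℝ) < N := by exact_mod_cast hN
  rw [se, Stirling.log_stirlingSeq_formula, Real.log_mul two_ne_zero hN0.ne',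
    Real.log_div hN0.ne' (Real.exp_pos 1).ne', Real.log_exp, Real.log_sqrt Real.pi_pos.le]
  ring

/-- The logarithm of the Barnes function at `N + 1`, i.e. `∑_{k < N} log k!`. -/
noncomputable def LB (N : ℕ) : ℝ := ∑ k ∈ Finset.range N, Real.log (k.factorial : ℝ)

lemma log_fact_succ (k : ℕ) : Real.log ((k + 1).factorial : ℝ)
    = Real.log ((k + 1 : ℕ) : ℝ) + Real.log (k.factorial : ℝ) := by
  rw [Nat.factorial_succ, Nat.cast_mul, Real.log_mul (by positivity) (by positivity)]

lemma LB_eq (N : ℕ) : LB N = N * Real.log (N.factorial : ℝ) - SK N := by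
  induction N with
  | zero => simp [LB, SK]
  | succ n ih =>
    rw [LB, Finset.sum_range_succ, ← LB, ih, SK, SK, Finset.sum_range_succ, log_fact_succ]
    push_cast
    ring

/-- Asymptotics of the Barnes function. -/
lemma LB_lim : Tendsto (fun N : ℕ => LB N - (((N : ℝ) ^ 2 / 2 - 1 / 12) * Real.log N
    - 3 / 4 * (N : ℝ) ^ 2 + N / 2 * (Real.log 2 + Real.log Real.pi))) atTop
    (𝓝 (deriv riemannZeta (-1)).re) := by
  have h := N_se_lim.sub SK_lim
  rw [sub_sub_cancel] at h
  refine h.congr' ?_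
  filter_upwards [eventually_ge_atTop 1] with N hN
  rw [LB_eq, log_fact hN]
  ring

lemma log_NL (k : ℕ) : Real.log (NL k) = 4 * Real.log (k.factorial : ℝ)
    - Real.log ((2 * k).factorial : ℝ) - Real.log ((2 * k + 1).factorial : ℝ)
    + 2 * k * Real.log 2 := by
  induction k with
  | zero => simp [NL]
  | succ k ih =>
    have hb : bb (k + 1) = ((k + 1 : ℕ) : ℝ) ^ 2 / (((2 * k + 1 : ℕ) : ℝ) * ((2 * k + 3 : ℕ) : ℝ)) := by
      unfold bb; congr 1; push_cast; ring
    have hp : Real.log (bb (k + 1)) = 2 * Real.log ((k + 1 : ℕ) : ℝ)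
        - Real.log ((2 * k + 1 : ℕ) : ℝ) - Real.log ((2 * k + 3 : ℕ) : ℝ) := by
      rw [hb, Real.log_div (by positivity) (by positivity), Real.log_mul (by positivity)
        (by positivity), Real.log_pow]
      push_cast; ring
    have hbp : bb (k + 1) ≠ 0 := by rw [hb]; positivity
    have h2 : Real.log ((2 * k + 1 + 1 : ℕ) : ℝ) = Real.log 2 + Real.log ((k + 1 : ℕ) : ℝ) := by
      rw [← Real.log_mul two_ne_zero (by positivity)]; congr 1; push_cast; ring
    rw [NL, Finset.prod_range_succ, ← NL, Real.log_mul (NL_pos k).ne' hbp, ih, hp,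
      show 2 * (k + 1) + 1 = 2 * k + 1 + 1 + 1 by ring, show 2 * (k + 1) = 2 * k + 1 + 1 by ring,
      log_fact_succ (2 * k + 1 + 1), log_fact_succ (2 * k + 1), log_fact_succ (2 * k),
      log_fact_succ k, h2]
    push_cast
    ring_nf

lemma XL_eq (N : ℕ) : XL N = 4 * LB N - LB (2 * N) + (2 * (N : ℝ) ^ 2 - N) * Real.log 2
    - N * Real.log Real.pi := by
  have h : ∑ k ∈ Finset.range N, Real.log (NL k)
      = 4 * LB N - LB (2 * N) + ((N : ℝ) ^ 2 - N) * Real.log 2 := by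
    induction N with
    | zero => simp [LB]
    | succ n ih =>
      rw [Finset.sum_range_succ, ih, log_NL, LB, LB, LB, LB, show 2 * (n + 1) = 2 * n + 1 + 1 by ring,
        Finset.sum_range_succ, Finset.sum_range_succ, Finset.sum_range_succ _ (2 * n)]
      push_cast
      ring
  rw [XL, h]
  ring

/-- Asymptotics of the Legendre part of the determinant. -/
lemma XL_lim : Tendsto (fun N : ℕ => XL N + 1 / 4 * Real.log N) atTop
    (𝓝 (1 / 12 * Real.log 2 + 3 * (deriv riemannZeta (-1)).re)) := by
  have h2 : Tendsto (fun N : ℕ => 2 * N) atTop atTop :=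
    tendsto_atTop_mono (fun N => by simp only [id]; omega) tendsto_id
  have h := ((LB_lim.const_mul 4).sub (LB_lim.comp h2)).const_add (1 / 12 * Real.log 2)
  have e : 1 / 12 * Real.log 2 + (4 * (deriv riemannZeta (-1)).re - (deriv riemannZeta (-1)).re)
      = 1 / 12 * Real.log 2 + 3 * (deriv riemannZeta (-1)).re := by ring
  rw [e] at h
  refine h.congr' ?_
  filter_upwards [eventually_ge_atTop 1] with N hN
  have hN0 : (N : ℝ) ≠ 0 := by exact_mod_cast (by omega : N ≠ 0)
  rw [Function.comp_apply, XL_eq, Nat.cast_mul, Nat.cast_ofNat, Real.log_mul two_ne_zero hN0]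
  ring

end WidomArc

/-- **Widom's asymptotics for the Toeplitz determinant of the characteristic function of
an arc.** For fixed `0 < μ < π`, `D_n(φ_μ) > 0` and, as `n → ∞`,
`log D_n(φ_μ) − n² log cos(μ/2) + (1/4) log(n sin(μ/2)) → (1/12) log 2 + 3ζ′(−1)`. -/
theorem widom_arc (μ : ℝ) (hμ : 0 < μ) (hμ' : μ < Real.pi) :
    (∀ n : ℕ, 1 ≤ n → 0 < (arcToeplitzDet μ n).re ∧ (arcToeplitzDet μ n).im = 0) ∧
    Tendsto (fun n : ℕ =>
        Real.log ((arcToeplitzDet μ n).re) -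
          (n : ℝ) ^ 2 * Real.log (Real.cos (μ / 2)) +
          (1 / 4) * Real.log ((n : ℝ) * Real.sin (μ / 2)))
      atTop
      (𝓝 ((1 / 12) * Real.log 2 + 3 * (deriv riemannZeta (-1)).re)) := by
  have hσ : 0 < Real.sin (μ / 2) := Real.sin_pos_of_pos_of_lt_pi (by linarith) (by linarith)
  have hc : 0 < Real.cos (μ / 2) := Real.cos_pos_of_mem_Ioo ⟨by linarith, by linarith⟩
  have hsq := Real.sin_sq_add_cos_sq (μ / 2)
  set σ := Real.sin (μ / 2)
  set c := Real.cos (μ / 2) with hcdef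
  have hσ1 : σ < 1 := by nlinarith
  have hc1 : c < 1 := by nlinarith
  obtain ⟨r, hrdef⟩ : ∃ r, r = (1 - σ) / (1 + σ) := ⟨_, rfl⟩
  have h1σ : 0 < 1 - σ := by linarith
  have hr : 0 < r := by rw [hrdef]; positivity
  have hr1 : r < 1 := by rw [hrdef, div_lt_one (by positivity)]; linarith
  have hcr : c ^ 2 * (1 + r) ^ 2 = 4 * r := by
    rw [show c ^ 2 = 1 - σ ^ 2 by linarith, hrdef]
    field_simp
    ring
  have hlog : Real.log σ = Real.log (1 - r) - Real.log (1 + r) := by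
    rw [← Real.log_div (by linarith) (by linarith), hrdef]
    congr 1
    field_simp
    ring
  have hdet : ∀ n, arcToeplitzDet μ n = (((WidomArc.TM c r n).det : ℝ) : ℂ) :=
    WidomArc.arc_det hμ hμ' hcdef hc hc1 hr hr1 hcr
  simp only [hdet, Complex.ofReal_re, Complex.ofReal_im]
  refine ⟨fun n _ => ⟨WidomArc.TM_pos hc hc1 hr hr1 hcr n, trivial⟩, ?_⟩
  have h := ((WidomArc.TM_lim hc hc1 hr hr1 hcr).add WidomArc.XL_lim).add_const
    (1 / 4 * Real.log σ)
  have e : 1 / 4 * (Real.log (1 + r) - Real.log (1 - r))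
      + (1 / 12 * Real.log 2 + 3 * (deriv riemannZeta (-1)).re) + 1 / 4 * Real.log σ
      = 1 / 12 * Real.log 2 + 3 * (deriv riemannZeta (-1)).re := by rw [hlog]; ring
  rw [e] at h
  refine h.congr' ?_
  filter_upwards [eventually_ge_atTop 1] with n hn
  have hn0 : (n : ℝ) ≠ 0 := by exact_mod_cast (by omega : n ≠ 0)
  rw [Real.log_mul hn0 hσ.ne']
  ring
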